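/- (Equation (3.7).) Let a, b, s be positive integers with s < a, and let k_1, …, k_s be integers with 2 ≤ k_1 < k_2 < ⋯ < k_s ≤ a−1. Let q_1 < ⋯ < q_{a−s} be the increasing enumeration of {1,…,a} \ {a−k_1+1, …, a−k_s+1}. Then the number of lozenge tilings of H_{2a,2b}(k_1,…,k_s) invariant both under 180° rotation about the center and under reflection across the vertical symmetry axis is M_{⊙,|}(H_{2a,2b}(k_1,…,k_s)) = ∏_{j=1}^{a−s} C(a+b+q_j−1, 2q_j−1) · ∏_{1≤j<k≤a−s} (q_k−q_j)/(q_j+q_k−1), where C(n,r) denotes the binomial coefficient. -/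

import Mathlib

/-!
Geometric setup: the triangular lattice is drawn in the plane (identified with `ℝ × ℝ`)
so that one family of lattice lines is vertical.  Lattice vertices are generated by
`v1 = (√3/2, 1/2)` and `v2 = (0,1)`, anchored so that the bottom vertex of the western
vertical side of the hexagon is at the origin.

The hexagon with side lengths `a, a, 2b, a, a, 2b` (clockwise from the northwestern side)
then has vertices `(0,0)`, `(0,2b)`, `(a√3/2, a/2+2b)`, `(a√3, 2b)`, `(a√3, 0)`,
`(a√3/2, -a/2)`; its center is `(a√3/2, b)` and its horizontal symmetry axis is `y = b`.
-/

noncomputable section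

abbrev Pt : Type := ℝ × ℝ

namespace PP

/-- √3, the ratio of the long diagonal of a unit lozenge to its side. -/
def s3 : ℝ := Real.sqrt 3

/-- The vertices of the triangular lattice (one family of lattice lines vertical). -/
def triLattice : Set Pt :=
  {p | ∃ m n : ℤ, p = ((m : ℝ) * (s3 / 2), (m : ℝ) / 2 + (n : ℝ))}

/-- The six unit vectors along lattice directions. -/
def unitVecs : Set Pt :=
  {(0, 1), (0, -1), (s3 / 2, 1 / 2), (-(s3 / 2), -(1 / 2)),
    (s3 / 2, -(1 / 2)), (-(s3 / 2), 1 / 2)}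

/-- A (unit) lozenge of the triangular lattice: the union of two unit lattice triangles
sharing an edge, i.e. the convex hull of `p, p+u, p+v, p+u+v` for a lattice vertex `p`
and two distinct non-opposite lattice unit vectors `u, v`. -/
def IsLozenge (L : Set Pt) : Prop :=
  ∃ p u v : Pt, p ∈ triLattice ∧ u ∈ unitVecs ∧ v ∈ unitVecs ∧ u ≠ v ∧ u ≠ -v ∧
    L = convexHull ℝ {p, p + u, p + v, p + u + v}

/-- A lozenge tiling of a region `R`: a set of lozenges covering `R` whose interiors
are pairwise disjoint. -/
def IsLozengeTiling (R : Set Pt) (T : Set (Set Pt)) : Prop :=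
  (∀ L ∈ T, IsLozenge L) ∧ ⋃₀ T = R ∧
    ∀ L ∈ T, ∀ L' ∈ T, L ≠ L' → interior L ∩ interior L' = ∅

/-- The hexagon with side lengths `A, A, 2b, A, A, 2b`, clockwise from the NW side. -/
def hexagon (A b : ℕ) : Set Pt :=
  convexHull ℝ
    {((0 : ℝ), (0 : ℝ)), ((0 : ℝ), 2 * (b : ℝ)),
      ((A : ℝ) * (s3 / 2), (A : ℝ) / 2 + 2 * (b : ℝ)),
      ((A : ℝ) * s3, 2 * (b : ℝ)), ((A : ℝ) * s3, (0 : ℝ)),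
      ((A : ℝ) * (s3 / 2), -((A : ℝ) / 2))}

/-- The left-pointing triangular hole of side 2 whose vertical (right) side lies at
distance `2k` (in units of `√3` times half the lattice spacing, i.e. at `x = k√3`)
from the left side of the hexagon, centered on the horizontal symmetry axis `y = b`. -/
def leftHole (b k : ℕ) : Set Pt :=
  convexHull ℝ
    {((k : ℝ) * s3, (b : ℝ) - 1), ((k : ℝ) * s3, (b : ℝ) + 1), (((k : ℝ) - 1) * s3, (b : ℝ))}

/-- The mirror image of `leftHole b k` across the vertical symmetry axis of the hexagon:
a right-pointing triangular hole of side 2. -/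
def rightHole (A b k : ℕ) : Set Pt :=
  convexHull ℝ
    {(((A : ℝ) - k) * s3, (b : ℝ) - 1), (((A : ℝ) - k) * s3, (b : ℝ) + 1),
      (((A : ℝ) - k + 1) * s3, (b : ℝ))}

/-- The region `H_{A,2b}(k_1,…,k_s)`: the hexagon with side lengths `A, A, 2b, A, A, 2b`,
with the (open) triangular holes `leftHole (k i)` and their mirror images removed. -/
def Hreg (A b s : ℕ) (k : Fin s → ℕ) : Set Pt :=
  hexagon A b \ ⋃ i : Fin s, (interior (leftHole b (k i)) ∪ interior (rightHole A b (k i)))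

/-- The horizontal lattice rhombus of side `t` centered at the center `(A√3/2, b)`
of the hexagon. -/
def centralRhombus (A b t : ℕ) : Set Pt :=
  convexHull ℝ
    {((A : ℝ) * (s3 / 2) - (t : ℝ) * (s3 / 2), (b : ℝ)),
      ((A : ℝ) * (s3 / 2) + (t : ℝ) * (s3 / 2), (b : ℝ)),
      ((A : ℝ) * (s3 / 2), (b : ℝ) - (t : ℝ) / 2),
      ((A : ℝ) * (s3 / 2), (b : ℝ) + (t : ℝ) / 2)}

/-- The region `H_{A,2b}(k_1,…,k_s; t)`: `H_{A,2b}(k_1,…,k_s)` with the (open) central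
horizontal rhombus of side `t` also removed. -/
def HregC (A b s : ℕ) (k : Fin s → ℕ) (t : ℕ) : Set Pt :=
  Hreg A b s k \ interior (centralRhombus A b t)

/-- Rotation by `180°` about the center `(A√3/2, b)` of the hexagon. -/
def rot180 (A b : ℕ) (p : Pt) : Pt := ((A : ℝ) * s3 - p.1, 2 * (b : ℝ) - p.2)

/-- Reflection across the vertical symmetry axis `x = A√3/2` of the hexagon. -/
def reflV (A : ℕ) (p : Pt) : Pt := ((A : ℝ) * s3 - p.1, p.2)

/-- A tiling is invariant under rotation by `180°` about the center of the region. -/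
def RotInvariant (A b : ℕ) (T : Set (Set Pt)) : Prop :=
  ∀ L ∈ T, rot180 A b '' L ∈ T

/-- A tiling is invariant under reflection across the vertical symmetry axis. -/
def ReflInvariant (A : ℕ) (T : Set (Set Pt)) : Prop :=
  ∀ L ∈ T, reflV A '' L ∈ T

/-- `M_⊙(R)`: the number of lozenge tilings of `R` invariant under rotation by `180°`
about the center (of the hexagon with parameters `A`, `b` from which `R` was built). -/
def Mrot (A b : ℕ) (R : Set Pt) : ℕ :=
  Nat.card {T : Set (Set Pt) // IsLozengeTiling R T ∧ RotInvariant A b T}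

/-- `M_{⊙,|}(R)`: the number of lozenge tilings of `R` invariant both under rotation by
`180°` about the center and under reflection across the vertical symmetry axis. -/
def MrotRefl (A b : ℕ) (R : Set Pt) : ℕ :=
  Nat.card {T : Set (Set Pt) //
    IsLozengeTiling R T ∧ RotInvariant A b T ∧ ReflInvariant A T}

end PP

noncomputable section
namespace PPX

open Finset in
theorem lagr {r : ℕ} (x : Fin (r+1) → ℚ) (hx : Function.Injective x) (y : ℚ) :
    ∑ i, 2 * x i * ∏ j : Fin r, ((x i + x (i.succAbove j)) / (x i - x (i.succAbove j)) *
      (y - x (i.succAbove j))) = ∏ j, (y + x j) - ∏ j, (y - x j) := by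
  classical
  set p : Polynomial ℚ := ∏ j, (Polynomial.X + Polynomial.C (x j)) - ∏ j, (Polynomial.X - Polynomial.C (x j)) with hp
  have hdeg : p.degree < #(univ : Finset (Fin (r+1))) := by
    have h1 : (∏ j, (Polynomial.X + Polynomial.C (x j))).Monic :=
      Polynomial.monic_prod_of_monic _ _ (fun i _ => Polynomial.monic_X_add_C _)
    have h2 : (∏ j, (Polynomial.X - Polynomial.C (x j))).Monic :=
      Polynomial.monic_prod_of_monic _ _ (fun i _ => Polynomial.monic_X_sub_C _)
    have d1 : (∏ j, (Polynomial.X + Polynomial.C (x j))).degree = ((r+1 : ℕ) : WithBot ℕ) := by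
      rw [Polynomial.degree_prod]; simp
    have d2 : (∏ j, (Polynomial.X - Polynomial.C (x j))).degree = ((r+1 : ℕ) : WithBot ℕ) := by
      rw [Polynomial.degree_prod]; simp
    have := Polynomial.degree_sub_lt_left (d1.trans d2.symm) h1.ne_zero (h1.leadingCoeff.trans h2.leadingCoeff.symm)
    rw [d1] at this
    simpa using this
  have h := Lagrange.eq_interpolate (s := univ) (v := x) (f := p) hx.injOn hdeg
  have h' := congrArg (Polynomial.eval y) h
  rw [Lagrange.interpolate_apply, Polynomial.eval_finsetSum] at h'
  have e0 : ∀ z, Polynomial.eval z p = ∏ j, (z + x j) - ∏ j, (z - x j) := by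
    intro z; simp [hp, Polynomial.eval_prod]
  rw [← e0 y, h']
  refine Finset.sum_congr rfl fun i _ => ?_
  rw [Polynomial.eval_mul, Polynomial.eval_C, e0, Lagrange.basis, Polynomial.eval_prod]
  have z1 : ∏ j, (x i - x j) = 0 := Finset.prod_eq_zero (mem_univ i) (sub_self _)
  have z2 : ∏ j, (x i + x j) = 2 * x i * ∏ j : Fin r, (x i + x (i.succAbove j)) := by
    rw [Fin.prod_univ_succAbove _ i]; ring
  have z3 : ∏ j ∈ univ.erase i, Polynomial.eval y (Lagrange.basisDivisor (x i) (x j)) =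
     ∏ j : Fin r, ((x i - x (i.succAbove j))⁻¹ * (y - x (i.succAbove j))) := by
    have : (univ : Finset (Fin (r+1))).erase i = univ.image i.succAbove := by
      rw [Fin.image_succAbove_univ]; ext; simp
    rw [this, Finset.prod_image (fun a _ b _ h => Fin.succAbove_right_injective h)]
    simp [Lagrange.basisDivisor]
  rw [z1, z2, z3, sub_zero, mul_assoc (2 * x i) (∏ j : Fin r, (x i + x (i.succAbove j))), ← Finset.prod_mul_distrib]
  congr 1
  refine Finset.prod_congr rfl fun j _ => ?_
  ring

/-- pair product -/
def V {r : ℕ} (q : Fin r → ℚ) : ℚ :=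
  ∏ j, ∏ l, if j < l then (q l - q j) / (q j + q l - 1) else 1

theorem V_eq {r : ℕ} (q : Fin r → ℚ) :
    ∏ p ∈ Finset.univ.filter (fun p : Fin r × Fin r => p.1 < p.2),
            (q p.2 - q p.1) / (q p.1 + q p.2 - 1) = V q := by
  rw [Finset.prod_filter, V, Fintype.prod_prod_type]

theorem sgn_prod {r : ℕ} (i : Fin (r+1)) :
    (∏ l : Fin r, if i < i.succAbove l then (-1 : ℚ) else 1) = (-1) ^ ((i : ℕ) + r) := by
  rw [Finset.prod_ite]
  simp only [Finset.prod_const]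
  have : (Finset.univ.filter fun l : Fin r => i < i.succAbove l).card = r - i := by
    have h : (Finset.univ.filter fun l : Fin r => i < i.succAbove l) =
       (Finset.univ.filter fun l : Fin r => (l:ℕ) < i)ᶜ := by
      ext l
      simp [Fin.lt_succAbove_iff_le_castSucc, Fin.le_def]
    rw [h, Finset.card_compl]
    simp
    have := i.isLt
    congr 1
    have h2 : _ = min r (i:ℕ) := Fin.card_filter_val_lt
    omega
  rw [this]
  have hi : (i:ℕ) ≤ r := Nat.lt_succ_iff.mp i.isLt
  obtain ⟨t, ht⟩ := Nat.exists_eq_add_of_le hi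
  have h3 : r - i = t := by omega
  have h4 : (i:ℕ) + r = 2 * i + t := by omega
  rw [h3, h4, pow_add, pow_mul]
  simp

theorem V_succAbove {r : ℕ} (q : Fin (r+1) → ℚ) (i : Fin (r+1)) :
    V q = (-1) ^ ((i:ℕ) + r) * V (q ∘ i.succAbove) *
      ∏ j : Fin r, (q i - q (i.succAbove j)) / (q i + q (i.succAbove j) - 1) := by
  unfold V
  rw [Fin.prod_univ_succAbove _ i]
  have hh : ∀ F : Fin (r+1) → ℚ, ∏ l, F l = F i * ∏ l, F (i.succAbove l) :=
    fun F => Fin.prod_univ_succAbove F i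
  simp only [hh, lt_irrefl, if_false, one_mul]
  rw [Finset.prod_mul_distrib, ← sgn_prod i]
  simp only [Fin.succAbove_lt_succAbove_iff, Function.comp]
  have e : (∏ j : Fin r, if i < i.succAbove j then (q (i.succAbove j) - q i) / (q i + q (i.succAbove j) - 1) else 1) *
      (∏ j : Fin r, if i.succAbove j < i then (q i - q (i.succAbove j)) / (q (i.succAbove j) + q i - 1) else 1)
      = (∏ l : Fin r, if i < i.succAbove l then (-1 : ℚ) else 1) *
        ∏ j : Fin r, (q i - q (i.succAbove j)) / (q i + q (i.succAbove j) - 1) := by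
    rw [← Finset.prod_mul_distrib, ← Finset.prod_mul_distrib]
    refine Finset.prod_congr rfl fun j _ => ?_
    rcases lt_trichotomy i (i.succAbove j) with h | h | h
    · simp only [h, if_true, not_lt.mpr h.le, if_false]
      ring
    · exact absurd h.symm (Fin.succAbove_ne i j)
    · simp only [h, if_true, not_lt.mpr h.le, if_false]
      ring
  rw [← mul_assoc, e]
  ring

def B (N q : ℕ) : ℚ := ((N + q - 1).choose (2 * q - 1) : ℕ)
def f (q x : ℕ) : ℚ := ((x + q - 1).choose (2 * q - 2) : ℕ)

theorem BBf (N q : ℕ) (hq : 1 ≤ q) : ∃ g : ℚ, B N q = g * (N + 1 - q) ∧ B (N+1) q = g * (N + q) ∧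
    f q N = g * (2 * q - 1) := by
  rcases le_or_gt q (N+1) with h | h
  · obtain ⟨t, rfl⟩ := Nat.exists_eq_add_of_le' hq
    obtain ⟨u, rfl⟩ : ∃ u, N = t + u := ⟨N - t, by omega⟩
    have a1 : t + u + (t+1) - 1 = 2 * t + u := by omega
    have a2 : t + u + 1 + (t+1) - 1 = 2 * t + u + 1 := by omega
    have a3 : 2 * (t+1) - 1 = 2 * t + 1 := by omega
    have a4 : 2 * (t+1) - 2 = 2 * t := by omega
    refine ⟨((2 * t + u).choose (2*t) : ℕ) / (2 * t + 1), ?_⟩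
    have c1 : (2 * t + u).choose (2*t+1) * (2 * t + 1) = (2*t+u).choose (2*t) * u := by
      have := Nat.choose_succ_right_eq (2*t+u) (2*t)
      rw [this]; congr 1; omega
    have c2 : (2 * t + u + 1) * (2*t+u).choose (2*t) = (2 * t + u + 1).choose (2*t+1) * (2 * t + 1) :=
      Nat.add_one_mul_choose_eq (2*t+u) (2*t)
    have c1' : ((2 * t + u).choose (2*t+1) : ℚ) * (2 * t + 1) = (2*t+u).choose (2*t) * u := by
      exact_mod_cast c1
    have c2' : (2 * t + u + 1 : ℚ) * (2*t+u).choose (2*t) = (2 * t + u + 1).choose (2*t+1) * (2 * t + 1) := by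
      exact_mod_cast c2
    have hne : (2 * (t:ℚ) + 1) ≠ 0 := by positivity
    unfold B f
    rw [a1, a2, a3, a4]
    push_cast
    refine ⟨?_, ?_, ?_⟩
    · field_simp
      linarith
    · field_simp
      linarith
    · field_simp
      ring
  · refine ⟨0, ?_, ?_, ?_⟩
    · unfold B; rw [Nat.choose_eq_zero_of_lt (by omega)]; simp
    · unfold B; rw [Nat.choose_eq_zero_of_lt (by omega)]; simp
    · unfold f; rw [Nat.choose_eq_zero_of_lt (by omega)]; simp

theorem ident {r : ℕ} (N : ℕ) (q : Fin (r+1) → ℕ) (hq : StrictMono q) (h1 : ∀ i, 1 ≤ q i) :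
    (∏ j, B N (q j)) * V (fun i => (q i : ℚ)) +
    ∑ i : Fin (r+1), (-1) ^ ((i:ℕ) + r) * f (q i) N *
      ((∏ j, B N (q (i.succAbove j))) * V (fun j => (q (i.succAbove j) : ℚ)))
    = (∏ j, B (N+1) (q j)) * V (fun i => (q i : ℚ)) := by
  choose g hB hB1 hf using fun i => BBf N (q i) (h1 i)
  have hl := lagr (fun i => (q i : ℚ) - 1/2) (by
    intro i j h
    simp only [sub_left_inj, Nat.cast_inj] at h
    exact hq.injective h) (N + 1/2)
  have key : ∀ i : Fin (r+1), (-1) ^ ((i:ℕ) + r) * f (q i) N *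
      ((∏ j, B N (q (i.succAbove j))) * V (fun j => (q (i.succAbove j) : ℚ))) =
      V (fun i => (q i : ℚ)) * (∏ j, g j) * (2 * ((q i : ℚ) - 1/2) * ∏ j : Fin r, (((q i : ℚ) - 1/2 + ((q (i.succAbove j) : ℚ) - 1/2)) / ((q i : ℚ) - 1/2 - ((q (i.succAbove j) : ℚ) - 1/2)) *
      ((N:ℚ) + 1/2 - ((q (i.succAbove j) : ℚ) - 1/2)))) := by
    intro i
    rw [V_succAbove (fun i => (q i : ℚ)) i, hf]
    simp only [hB]
    rw [Fin.prod_univ_succAbove g i, Finset.prod_mul_distrib, Finset.prod_mul_distrib]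
    have : (∏ j : Fin r, ((q i : ℚ) - q (i.succAbove j)) / (q i + q (i.succAbove j) - 1)) *
      (∏ j : Fin r, (((q i : ℚ) - 1/2 + ((q (i.succAbove j) : ℚ) - 1/2)) / ((q i : ℚ) - 1/2 - ((q (i.succAbove j) : ℚ) - 1/2)))) = 1 := by
      rw [← Finset.prod_mul_distrib]
      refine Finset.prod_eq_one fun j _ => ?_
      have n1 : ((q i : ℚ) - q (i.succAbove j)) ≠ 0 := by
        rw [sub_ne_zero]
        intro h
        exact Fin.succAbove_ne i j (hq.injective (Nat.cast_injective h)).symm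
      have n2 : ((q i : ℚ) + q (i.succAbove j) - 1) ≠ 0 := by
        have a1 : (1:ℚ) ≤ q i := by exact_mod_cast h1 i
        have a2 : (1:ℚ) ≤ q (i.succAbove j) := by exact_mod_cast h1 _
        linarith
      have e1 : ((q i : ℚ) - 1/2 + ((q (i.succAbove j) : ℚ) - 1/2)) = (q i : ℚ) + q (i.succAbove j) - 1 := by ring
      have e2 : ((q i : ℚ) - 1/2 - ((q (i.succAbove j) : ℚ) - 1/2)) = (q i : ℚ) - q (i.succAbove j) := by ring
      rw [e1, e2]
      field_simp
    have e3 : ∏ j : Fin r, ((N:ℚ) + 1/2 - ((q (i.succAbove j) : ℚ) - 1/2)) =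
        ∏ j : Fin r, ((N:ℚ) + 1 - q (i.succAbove j)) :=
      Finset.prod_congr rfl fun j _ => by ring
    rw [e3]
    simp only [Function.comp_def]
    generalize (∏ j : Fin r, ((q i : ℚ) - q (i.succAbove j)) / (q i + q (i.succAbove j) - 1)) = P at *
    generalize (∏ j : Fin r, (((q i : ℚ) - 1/2 + ((q (i.succAbove j) : ℚ) - 1/2)) / ((q i : ℚ) - 1/2 - ((q (i.succAbove j) : ℚ) - 1/2)))) = Q at *
    generalize V (fun j => (q (i.succAbove j) : ℚ)) = W
    generalize ∏ j : Fin r, ((N:ℚ) + 1 - q (i.succAbove j)) = R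
    generalize ∏ j : Fin r, g (i.succAbove j) = S
    linear_combination (-(-1) ^ ((i:ℕ) + r) * (g i * (2 * (q i) - 1)) * S * R * W) * this
  rw [Finset.sum_congr rfl (fun i _ => key i), ← Finset.mul_sum, hl]
  simp only [hB, hB1, Finset.prod_mul_distrib]
  have e1 : ∏ j, ((N:ℚ) + 1/2 + ((q j : ℚ) - 1/2)) = ∏ j, ((N:ℚ) + q j) :=
    Finset.prod_congr rfl fun j _ => by ring
  have e2 : ∏ j, ((N:ℚ) + 1/2 - ((q j : ℚ) - 1/2)) = ∏ j, ((N:ℚ) + 1 - q j) :=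
    Finset.prod_congr rfl fun j _ => by ring
  rw [e1, e2]
  ring

end PPX

end

noncomputable section
namespace PPX

def en (C : Finset ℕ) (j : ℕ) : ℕ := if h : j < C.card then C.orderEmbOfFin rfl ⟨j, h⟩ else 0

theorem exists_enum {r : ℕ} (C : Finset ℕ) (h : C.card = r) :
    ∃ c : Fin r → ℕ, StrictMono c ∧ Finset.univ.image c = C := by
  refine ⟨C.orderEmbOfFin h, (C.orderEmbOfFin h).strictMono, ?_⟩
  apply Finset.coe_injective
  rw [Finset.coe_image, Finset.coe_univ, Set.image_univ, Finset.range_orderEmbOfFin]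

theorem en_image {r : ℕ} (c : Fin r → ℕ) (hc : StrictMono c) (j : Fin r) :
    en (Finset.univ.image c) j = c j := by
  have hcard : (Finset.univ.image c).card = r := by
    rw [Finset.card_image_of_injective _ hc.injective]; simp
  have key : ∀ (C : Finset ℕ) (h : C.card = r), C = Finset.univ.image c → en C j = c j := by
    intro C h hC
    subst h
    unfold en
    rw [dif_pos j.isLt]
    have := Finset.orderEmbOfFin_unique (s := C) rfl (f := c) (fun x => by
      rw [hC]; exact Finset.mem_image_of_mem _ (Finset.mem_univ _)) hc
    rw [this]
  exact key _ hcard rfl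

def detC {r : ℕ} (q : Fin r → ℕ) (C : Finset ℕ) : ℚ :=
  Matrix.det (Matrix.of fun i j : Fin r => f (q i) (en C j))

theorem detC_image {r : ℕ} (q : Fin r → ℕ) (c : Fin r → ℕ) (hc : StrictMono c) :
    detC q (Finset.univ.image c) = Matrix.det (Matrix.of fun i j : Fin r => f (q i) (c j)) := by
  unfold detC
  congr 1
  ext i j
  simp [en_image c hc]

theorem detC_insert {r : ℕ} (N : ℕ) (q : Fin (r+1) → ℕ) (C : Finset ℕ) (hC : C ∈ (Finset.range N).powersetCard r) :
    detC q (insert N C) = ∑ i : Fin (r+1), (-1) ^ ((i:ℕ) + r) * f (q i) N * detC (fun j => q (i.succAbove j)) C := by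
  rw [Finset.mem_powersetCard] at hC
  obtain ⟨c, hc, rfl⟩ := exists_enum C hC.2
  have hlt : ∀ i, c i < N := fun i => Finset.mem_range.mp (hC.1 (Finset.mem_image_of_mem _ (Finset.mem_univ _)))
  have hs : StrictMono (Fin.snoc c N : Fin (r+1) → ℕ) := by
    intro i j hij
    induction j using Fin.lastCases with
    | last =>
      induction i using Fin.lastCases with
      | last => exact absurd hij (lt_irrefl _)
      | cast i => simpa using hlt i
    | cast j =>
      induction i using Fin.lastCases with
      | last => exact absurd hij (not_lt.mpr (Fin.le_last _))
      | cast i => simpa using hc (by simpa using hij)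
  have hi : insert N (Finset.univ.image c) = Finset.univ.image (Fin.snoc c N : Fin (r+1) → ℕ) := by
    ext x
    simp only [Finset.mem_insert, Finset.mem_image, Finset.mem_univ, true_and]
    constructor
    · rintro (h | ⟨i, h⟩)
      · exact ⟨Fin.last _, by simp [h]⟩
      · exact ⟨i.castSucc, by simp [h]⟩
    · rintro ⟨i, h⟩
      induction i using Fin.lastCases with
      | last => left; simpa using h.symm
      | cast i => right; exact ⟨i, by simpa using h⟩
  rw [hi, detC_image _ _ hs, Matrix.det_succ_column _ (Fin.last r)]
  refine Finset.sum_congr rfl fun i _ => ?_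
  rw [detC_image _ _ hc]
  have : (Matrix.of fun i j : Fin (r+1) => f (q i) ((Fin.snoc c N : Fin (r+1) → ℕ) j)).submatrix i.succAbove (Fin.last r).succAbove =
      (Matrix.of fun i' j : Fin r => f (q (i.succAbove i')) (c j)) := by
    ext a b
    simp
  rw [this]
  simp

theorem sumdet (N : ℕ) : ∀ (r : ℕ) (q : Fin r → ℕ), StrictMono q → (∀ i, 1 ≤ q i) →
    ∑ C ∈ (Finset.range N).powersetCard r, detC q C = (∏ j, B N (q j)) * V (fun i => (q i : ℚ)) := by
  induction N with
  | zero =>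
    intro r q hq h1
    cases r with
    | zero => simp [detC, V]
    | succ r =>
      have : B 0 (q 0) = 0 := by
        have := h1 0
        unfold B
        rw [Nat.choose_eq_zero_of_lt (by omega)]; simp
      rw [Finset.prod_eq_zero (Finset.mem_univ 0) this, Finset.powersetCard_eq_empty.mpr (by simp)]
      simp
  | succ N ih =>
    intro r q hq h1
    cases r with
    | zero => simp [detC, V]
    | succ r =>
      have hN : N ∉ Finset.range N := by simp
      rw [Finset.range_add_one, Finset.powersetCard_succ_insert hN, Finset.sum_union, ih _ q hq h1, Finset.sum_image]
      · rw [Finset.sum_congr rfl (fun C hC => detC_insert N q C hC), Finset.sum_comm,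
          ← ident N q hq h1]
        congr 1
        refine Finset.sum_congr rfl fun i _ => ?_
        rw [← Finset.mul_sum, ih r (fun j => q (i.succAbove j)) (fun a b h => hq (Fin.strictMono_succAbove i h)) (fun _ => h1 _)]
      · intro C hC D hD h
        have hC' : N ∉ C := fun h => hN ((Finset.mem_powersetCard.mp hC).1 h)
        have hD' : N ∉ D := fun h => hN ((Finset.mem_powersetCard.mp hD).1 h)
        have := congrArg (fun S => S.erase N) h
        simpa [Finset.erase_insert hC', Finset.erase_insert hD'] using this
      · rw [Finset.disjoint_left]
        intro C hC hC'
        obtain ⟨D, _, rfl⟩ := Finset.mem_image.mp hC'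
        exact hN ((Finset.mem_powersetCard.mp hC).1 (Finset.mem_insert_self _ _))

end PPX

end

noncomputable section
namespace PPX

def cnt (C : Finset ℕ) (x : ℕ) : ℕ := (C.filter (· < x)).card

def Rel (C D : Finset ℕ) : Prop := ∀ x, cnt D x ≤ cnt C x ∧ cnt C (x+1) ≤ cnt D x + 1

instance (C D : Finset ℕ) : Decidable (Rel C D) := Classical.propDecidable _

theorem cnt_zero (C : Finset ℕ) : cnt C 0 = 0 := by simp [cnt]

theorem cnt_succ (C : Finset ℕ) (x : ℕ) : cnt C (x+1) = cnt C x + if x ∈ C then 1 else 0 := by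
  unfold cnt
  have : C.filter (· < x+1) = C.filter (· < x) ∪ (if x ∈ C then {x} else ∅) := by
    ext y
    by_cases hx : x ∈ C
    · simp only [Finset.mem_filter, Finset.mem_union, hx, if_true, Finset.mem_singleton]
      constructor
      · rintro ⟨h1, h2⟩
        rcases Nat.lt_succ_iff_lt_or_eq.mp h2 with h | h
        · exact Or.inl ⟨h1, h⟩
        · exact Or.inr h
      · rintro (⟨h1, h2⟩ | h)
        · exact ⟨h1, by omega⟩
        · subst h; exact ⟨hx, by omega⟩
    · simp only [Finset.mem_filter, Finset.mem_union, hx, if_false, Finset.notMem_empty, or_false]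
      constructor
      · rintro ⟨h1, h2⟩
        refine ⟨h1, ?_⟩
        have : y ≠ x := fun h => hx (h ▸ h1)
        omega
      · rintro ⟨h1, h2⟩
        exact ⟨h1, by omega⟩
  rw [this, Finset.card_union_of_disjoint]
  · split_ifs <;> simp
  · rw [Finset.disjoint_left]
    intro y hy
    split_ifs
    · simp at hy ⊢; omega
    · simp

theorem cnt_of_bound (C : Finset ℕ) (M x : ℕ) (h : C ⊆ Finset.range M) (hx : M ≤ x) : cnt C x = C.card := by
  unfold cnt
  rw [Finset.filter_true_of_mem]
  intro y hy
  have := Finset.mem_range.mp (h hy)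
  omega

theorem lt_cnt {r : ℕ} (c : Fin r → ℕ) (hc : StrictMono c) (i : Fin r) (x : ℕ) :
    c i < x ↔ (i : ℕ) < cnt (Finset.univ.image c) x := by
  have e : cnt (Finset.univ.image c) x = (Finset.univ.filter fun j => c j < x).card := by
    unfold cnt
    rw [Finset.filter_image, Finset.card_image_of_injective _ hc.injective]
  rw [e]
  constructor
  · intro h
    have : Finset.Iic i ⊆ Finset.univ.filter fun j => c j < x := by
      intro j hj
      simp only [Finset.mem_filter, Finset.mem_univ, true_and]
      exact lt_of_le_of_lt (hc.monotone (Finset.mem_Iic.mp hj)) h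
    have h2 := Finset.card_le_card this
    rw [Fin.card_Iic] at h2
    omega
  · intro h
    by_contra hx
    have : (Finset.univ.filter fun j => c j < x) ⊆ Finset.Iio i := by
      intro j hj
      simp only [Finset.mem_filter, Finset.mem_univ, true_and] at hj
      rw [Finset.mem_Iio]
      by_contra hij
      have := hc.monotone (not_lt.mp hij)
      omega
    have h2 := Finset.card_le_card this
    rw [Fin.card_Iio] at h2
    omega

theorem cnt_le {r : ℕ} (c : Fin r → ℕ) (x : ℕ) : cnt (Finset.univ.image c) x ≤ r := by
  unfold cnt
  refine (Finset.card_filter_le _ _).trans (Finset.card_image_le.trans ?_)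
  simp

theorem rel_iff {r : ℕ} (c : Fin (r+1) → ℕ) (hc : StrictMono c) (d : Fin r → ℕ) (hd : StrictMono d) :
    Rel (Finset.univ.image c) (Finset.univ.image d) ↔ ∀ l : Fin r, c l.castSucc ≤ d l ∧ d l < c l.succ := by
  constructor
  · intro h l
    constructor
    · by_contra hlt
      have h1 := (lt_cnt d hd l _).mp (not_le.mp hlt)
      have h2 := (lt_cnt c hc l.castSucc (c l.castSucc)).not.mp (lt_irrefl _)
      have := (h (c l.castSucc)).1
      simp at h2
      omega
    · by_contra hlt
      have h1 := (lt_cnt c hc l.succ _).mp (Nat.lt_succ_self _)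
      have h2 := (lt_cnt d hd l (c l.succ)).not.mp hlt
      have := (h (c l.succ)).2
      simp at h1
      omega
  · intro h x
    constructor
    · by_contra hlt
      have hle := cnt_le d x
      have hl := not_le.mp hlt
      let i : Fin r := ⟨cnt (Finset.univ.image c) x, by omega⟩
      have h1 : d i < x := (lt_cnt d hd i x).mpr hl
      have h2 := (lt_cnt c hc i.castSucc x).mp (lt_of_le_of_lt (h i).1 h1)
      simp [i] at h2
    · by_contra hlt
      have hle := cnt_le c (x+1)
      have hl := not_le.mp hlt
      let i : Fin r := ⟨cnt (Finset.univ.image d) x, by omega⟩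
      have h1 : c i.succ < x + 1 := (lt_cnt c hc i.succ (x+1)).mpr (by simpa [i] using hl)
      have h2 := (lt_cnt d hd i x).mp (lt_of_lt_of_le (h i).2 (by omega))
      simp [i] at h2

/-- determinant of a family of functions along a strictly increasing tuple -/
def DD {r : ℕ} (φ : Fin r → ℕ → ℚ) (c : Fin r → ℕ) : ℚ :=
  Matrix.det (Matrix.of fun l i : Fin r => φ i (c l))

theorem det_sum {r : ℕ} (φ : Fin r → ℕ → ℚ) (I : Fin r → Finset ℕ) :
    ∑ c ∈ Fintype.piFinset I, DD φ c = Matrix.det (Matrix.of fun l i : Fin r => ∑ t ∈ I l, φ i t) := by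
  have := (Matrix.detRowAlternating (n := Fin r) (R := ℚ)).toMultilinearMap.map_sum_finset
    (fun l (t : ℕ) => fun i => φ i t) I
  simp only [AlternatingMap.coe_multilinearMap] at this
  unfold DD Matrix.det
  have e : (fun l => ∑ j ∈ I l, fun i => φ i j) = (Matrix.of fun l i : Fin r => ∑ t ∈ I l, φ i t) := by
    ext l i; simp
  rw [e] at this
  exact this.symm

def psum (φ : ℕ → ℚ) (x : ℕ) : ℚ := ∑ t ∈ Finset.range x, φ t

theorem det_cons {r : ℕ} (Ψ : Fin r → ℕ → ℚ) (c : Fin (r+1) → ℕ) :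
    DD (Fin.cons (fun _ => 1) Ψ : Fin (r+1) → ℕ → ℚ) c =
      Matrix.det (Matrix.of fun l i : Fin r => Ψ i (c l.succ) - Ψ i (c l.castSucc)) := by
  set A : Matrix (Fin (r+1)) (Fin (r+1)) ℚ := Matrix.of fun l i => (Fin.cons (fun _ => 1) Ψ : Fin (r+1) → ℕ → ℚ) i (c l) with hA
  set A' : Matrix (Fin (r+1)) (Fin (r+1)) ℚ := Matrix.of fun l i =>
    (Fin.cases (A 0 i) (fun l' => A l'.succ i - A l'.castSucc i) l : ℚ) with hA'
  have h1 : A.det = A'.det := by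
    apply Matrix.det_eq_of_forall_row_eq_smul_add_pred (fun _ => 1)
    · intro j; simp [hA']
    · intro i j; simp [hA']
  unfold DD
  rw [← hA, h1, Matrix.det_succ_column_zero, Fin.sum_univ_succ]
  have e : A'.submatrix (Fin.succAbove 0) Fin.succ = (Matrix.of fun l i : Fin r => Ψ i (c l.succ) - Ψ i (c l.castSucc)) := by
    ext l i
    simp [hA', hA]
  rw [e]
  have z : ∀ i : Fin r, A' i.succ 0 = 0 := by intro i; simp [hA', hA]
  have z0 : A' 0 0 = 1 := by simp [hA', hA]
  simp [z, z0]

/-- the core transfer -/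
theorem transfer {r : ℕ} (φ : Fin r → ℕ → ℚ) (w : Finset ℕ → ℚ) (M : ℕ)
    (hw : ∀ c : Fin r → ℕ, StrictMono c → (∀ i, c i < M) → w (Finset.univ.image c) = DD φ c)
    (c : Fin (r+1) → ℕ) (hc : StrictMono c) (hM : ∀ i, c i ≤ M) :
    ∑ D ∈ ((Finset.range M).powerset).filter (fun D => Rel (Finset.univ.image c) D ∧ D.card = r), w D =
      DD (Fin.cons (fun _ => 1) (fun i => psum (φ i)) : Fin (r+1) → ℕ → ℚ) c := by
  classical
  rw [det_cons]
  have e : (Matrix.of fun l i : Fin r => psum (φ i) (c l.succ) - psum (φ i) (c l.castSucc)) =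
      (Matrix.of fun l i : Fin r => ∑ t ∈ Finset.Ico (c l.castSucc) (c l.succ), φ i t) := by
    ext l i
    simp only [Matrix.of_apply, psum]
    rw [Finset.sum_Ico_eq_sub _ (hc.monotone (Fin.castSucc_lt_succ).le)]
  rw [e, ← det_sum]
  symm
  have hmem : ∀ d ∈ Fintype.piFinset (fun l : Fin r => Finset.Ico (c l.castSucc) (c l.succ)),
      StrictMono d ∧ (∀ l, c l.castSucc ≤ d l ∧ d l < c l.succ) := by
    intro d hd
    rw [Fintype.mem_piFinset] at hd
    have h : ∀ l, c l.castSucc ≤ d l ∧ d l < c l.succ := fun l => Finset.mem_Ico.mp (hd l)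
    refine ⟨?_, h⟩
    intro i j hij
    refine (h i).2.trans_le ((hc.monotone ?_).trans (h j).1)
    rw [Fin.le_def]; simpa using hij
  refine Finset.sum_bij (fun d _ => Finset.univ.image d) ?_ ?_ ?_ ?_
  · intro d hd
    obtain ⟨h1, h2⟩ := hmem d hd
    rw [Finset.mem_filter, Finset.mem_powerset]
    refine ⟨?_, (rel_iff c hc d h1).mpr h2, ?_⟩
    · intro x hx
      obtain ⟨i, _, rfl⟩ := Finset.mem_image.mp hx
      exact Finset.mem_range.mpr ((h2 i).2.trans_le (hM _))
    · rw [Finset.card_image_of_injective _ h1.injective]; simp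
  · intro d hd d' hd' h
    obtain ⟨h1, _⟩ := hmem d hd
    obtain ⟨h1', _⟩ := hmem d' hd'
    funext i
    rw [← en_image d h1 i, ← en_image d' h1' i]
    exact congrArg (fun S => en S i) h
  · intro D hD
    rw [Finset.mem_filter, Finset.mem_powerset] at hD
    obtain ⟨d, hd, rfl⟩ := exists_enum D hD.2.2
    refine ⟨d, ?_, rfl⟩
    rw [Fintype.mem_piFinset]
    intro l
    exact Finset.mem_Ico.mpr ((rel_iff c hc d hd).mp hD.2.1 l)
  · intro d hd
    obtain ⟨h1, h2⟩ := hmem d hd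
    exact (hw d h1 (fun i => (h2 i).2.trans_le (hM _))).symm

theorem DD_cons_zero {r : ℕ} (Ψ : Fin r → ℕ → ℚ) (h0 : ∀ i, Ψ i 0 = 0) (d : Fin r → ℕ) :
    DD (Fin.cons (fun _ => 1) Ψ : Fin (r+1) → ℕ → ℚ) (Fin.cons 0 d : Fin (r+1) → ℕ) = DD Ψ d := by
  unfold DD
  rw [Matrix.det_succ_row_zero, Fin.sum_univ_succ]
  have e : (Matrix.of fun l i => (Fin.cons (fun _ => 1) Ψ : Fin (r+1) → ℕ → ℚ) i ((Fin.cons 0 d : Fin (r+1) → ℕ) l)).submatrix Fin.succ (Fin.succAbove 0) = (Matrix.of fun l i : Fin r => Ψ i (d l)) := by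
    ext l i
    simp
  rw [e]
  simp [h0]

theorem cons_strictMono {r : ℕ} (d : Fin r → ℕ) (hd : StrictMono d) (x : ℕ) (hx : ∀ i, x < d i) :
    StrictMono (Fin.cons x d : Fin (r+1) → ℕ) := by
  intro i j hij
  induction j using Fin.cases with
  | zero => exact absurd hij (Fin.not_lt_zero _)
  | succ j =>
    induction i using Fin.cases with
    | zero => simpa using hx j
    | succ i => simpa using hd (by simpa using hij)

theorem image_cons {r : ℕ} (d : Fin r → ℕ) (x : ℕ) :
    Finset.univ.image (Fin.cons x d : Fin (r+1) → ℕ) = insert x (Finset.univ.image d) := by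
  ext y
  simp only [Finset.mem_insert, Finset.mem_image, Finset.mem_univ, true_and]
  rw [Fin.exists_fin_succ]
  simp [eq_comm]

end PPX

end

noncomputable section
namespace PPX

def Step (b : ℕ) (dent : ℕ → Prop) (m : ℕ) (C C' : Finset ℕ) : Prop :=
  C ⊆ Finset.range (b + m / 2) ∧ C' ⊆ Finset.range (b + (m + 1) / 2) ∧
  (m % 2 = 0 → Rel C C' ∧ C.card = C'.card) ∧
  (m % 2 = 1 → ¬ dent ((m + 1) / 2) → Rel C' C ∧ C'.card = C.card + 1) ∧
  (m % 2 = 1 → dent ((m + 1) / 2) → 0 ∉ C' ∧ Rel (insert 0 C') C ∧ C'.card = C.card)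

instance (b : ℕ) (dent : ℕ → Prop) (m : ℕ) (C C' : Finset ℕ) : Decidable (Step b dent m C C') :=
  Classical.propDecidable _

def w (b : ℕ) (dent : ℕ → Prop) : ℕ → Finset ℕ → ℕ
  | 0, C => if C = ∅ then 1 else 0
  | m+1, C' => ∑ C ∈ ((Finset.range (b + m / 2)).powerset).filter (fun C => Step b dent m C C'), w b dent m C

def f' (q x : ℕ) : ℚ := ((x + q).choose (2 * q - 1) : ℕ)

theorem psum_f (q : ℕ) (hq : 1 ≤ q) (x : ℕ) : psum (f q) (x+1) = f' q x := by
  induction x with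
  | zero =>
    simp only [psum, f, f']
    obtain ⟨t, rfl⟩ := Nat.exists_eq_add_of_le' hq
    simp
    rcases t with _ | t
    · simp
    · rw [Nat.choose_eq_zero_of_lt (by omega), Nat.choose_eq_zero_of_lt (by omega)]
  | succ x ih =>
    rw [psum, Finset.sum_range_succ, ← psum, ih]
    obtain ⟨t, rfl⟩ := Nat.exists_eq_add_of_le' hq
    simp only [f, f']
    have e1 : 2 * (t+1) - 1 = 2 * t + 1 := by omega
    have e2 : 2 * (t+1) - 2 = 2 * t := by omega
    have e3 : x + 1 + (t + 1) - 1 = x + (t + 1) := by omega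
    have e4 : x + 1 + (t + 1) = x + (t + 1) + 1 := by omega
    rw [e1, e2, e3, e4, Nat.choose_succ_succ']
    push_cast; ring

theorem psum_f' (q : ℕ) (hq : 1 ≤ q) (x : ℕ) : psum (f' q) x = f (q+1) x := by
  induction x with
  | zero =>
    simp only [psum, f]
    rw [Nat.choose_eq_zero_of_lt (by omega)]
    simp
  | succ x ih =>
    rw [psum, Finset.sum_range_succ, ← psum, ih]
    obtain ⟨t, rfl⟩ := Nat.exists_eq_add_of_le' hq
    simp only [f, f']
    have e1 : 2 * (t+1) - 1 = 2 * t + 1 := by omega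
    have e2 : 2 * (t+1+1) - 2 = 2 * t + 1 + 1 := by omega
    have e3 : x + 1 + (t + 1 + 1) - 1 = x + (t + 1) + 1 := by omega
    have e4 : x + (t + 1 + 1) - 1 = x + (t + 1) := by omega
    rw [e1, e2, e3, e4, Nat.choose_succ_succ']
    push_cast; ring

theorem cnt_shift (C : Finset ℕ) (x : ℕ) : cnt (insert 0 (C.image (· + 1))) (x+1) = cnt C x + 1 := by
  induction x with
  | zero => rw [cnt_succ]; simp [cnt_zero]
  | succ x ih => rw [cnt_succ, ih, cnt_succ]; simp; ring

theorem rel_shift (C C' : Finset ℕ) : Rel C C' ↔ Rel (insert 0 (C'.image (· + 1))) C := by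
  constructor
  · intro h x
    rw [cnt_shift]
    refine ⟨?_, by have := (h x).1; omega⟩
    cases x with
    | zero => simp [cnt_zero]
    | succ x => rw [cnt_shift]; exact (h x).2
  · intro h x
    have h1 := (h x).2
    have h2 := (h (x+1)).1
    rw [cnt_shift] at h1 h2
    omega

theorem DD_congr {r : ℕ} {φ ψ : Fin r → ℕ → ℚ} {c d : Fin r → ℕ} (h : ∀ i l, φ i (c l) = ψ i (d l)) :
    DD φ c = DD ψ d := by
  unfold DD
  congr 1
  ext l i
  simp [h]

theorem main_det (b : ℕ) (dent : ℕ → Prop) (j : ℕ) : ∃ (r : ℕ) (q : Fin r → ℕ), StrictMono q ∧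
    (∀ x, (∃ i, q i = x) ↔ 1 ≤ x ∧ x ≤ j ∧ ¬ dent (j + 1 - x)) ∧
    (∀ C ⊆ Finset.range (b + j), C.card ≠ r → w b dent (2 * j) C = 0) ∧
    (∀ c : Fin r → ℕ, StrictMono c → (∀ i, c i < b + j) →
      (w b dent (2 * j) (Finset.univ.image c) : ℚ) = DD (fun i => f (q i)) c) := by
  classical
  induction j with
  | zero =>
    refine ⟨0, Fin.elim0, fun i => i.elim0, ?_, ?_, ?_⟩
    · intro x
      constructor
      · rintro ⟨i, _⟩; exact i.elim0
      · intro h; omega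
    · intro C _ hC
      have : C ≠ ∅ := fun h => hC (by simp [h])
      simp [w, this]
    · intro c _ _
      simp [w, DD]
  | succ j ih =>
    obtain ⟨r, q, hq, hqr, hz, hd⟩ := ih
    have hq1 : ∀ i, 1 ≤ q i := fun i => ((hqr (q i)).mp ⟨i, rfl⟩).1
    have m0 : (2 * j) % 2 = 0 := by omega
    have m1 : (2 * j + 1) % 2 = 1 := by omega
    have m2 : 2 * j / 2 = j := by omega
    have m3 : (2 * j + 1) / 2 = j := by omega
    have m4 : (2 * j + 1 + 1) / 2 = j + 1 := by omega
    have hz1 : ∀ C ⊆ Finset.range (b + j), C.card ≠ r → w b dent (2 * j + 1) C = 0 := by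
      intro C' hC' hne
      rw [w]
      refine Finset.sum_eq_zero fun C hC => ?_
      rw [Finset.mem_filter, Finset.mem_powerset] at hC
      rw [m2] at hC
      exact hz C hC.1 (by rw [(hC.2.2.2.1 m0).2]; exact hne)
    have hd1 : ∀ c : Fin r → ℕ, StrictMono c → (∀ i, c i < b + j) →
      (w b dent (2 * j + 1) (Finset.univ.image c) : ℚ) = DD (fun i => f' (q i)) c := by
      intro c hc hcM
      have hc1 : StrictMono (fun i => c i + 1) := fun i j h => Nat.succ_lt_succ (hc h)
      have ht := transfer (fun i => f (q i)) (fun C => (w b dent (2 * j) C : ℚ)) (b + j) hd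
        (Fin.cons 0 (fun i => c i + 1)) (cons_strictMono _ hc1 0 (fun i => Nat.succ_pos _)) (by
          intro i
          induction i using Fin.cases with
          | zero => simp
          | succ i => simpa using hcM i)
      rw [DD_cons_zero _ (fun i => by simp [psum]), image_cons] at ht
      have himg : Finset.univ.image (fun i => c i + 1) = (Finset.univ.image c).image (· + 1) := by
        rw [Finset.image_image]; rfl
      rw [himg] at ht
      have hcard : (Finset.univ.image c).card = r := by
        rw [Finset.card_image_of_injective _ hc.injective]; simp
      rw [w, Nat.cast_sum]
      have e : DD (fun i => f' (q i)) c = DD (fun i => psum (f (q i))) (fun i => c i + 1) :=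
        DD_congr (fun i l => (psum_f (q i) (hq1 i) (c l)).symm)
      rw [e, ← ht, m2]
      refine Finset.sum_congr ?_ (fun _ _ => rfl)
      apply Finset.filter_congr
      intro C hC
      rw [Finset.mem_powerset] at hC
      rw [← rel_shift]
      unfold Step
      rw [m0, m2, m3, hcard]
      constructor
      · rintro ⟨_, _, h, _⟩
        exact h rfl
      · intro h
        refine ⟨hC, ?_, fun _ => h, by simp, by simp⟩
        intro x hx
        obtain ⟨i, _, rfl⟩ := Finset.mem_image.mp hx
        exact Finset.mem_range.mpr (hcM i)
    have e2 : 2 * (j + 1) = 2 * j + 1 + 1 := by ring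
    by_cases hdent : dent (j + 1)
    · refine ⟨r, fun i => q i + 1, fun i j h => Nat.succ_lt_succ (hq h), ?_, ?_, ?_⟩
      · intro x
        constructor
        · rintro ⟨i, rfl⟩
          obtain ⟨h1, h2, h3⟩ := (hqr (q i)).mp ⟨i, rfl⟩
          refine ⟨by show 1 ≤ q i + 1; omega, by show q i + 1 ≤ j + 1; omega, ?_⟩
          show ¬ dent (j + 1 + 1 - (q i + 1))
          have : j + 1 + 1 - (q i + 1) = j + 1 - q i := by omega
          rwa [this]
        · rintro ⟨h1, h2, h3⟩
          have hx : x ≠ 1 := by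
            rintro rfl
            exact h3 (by simpa using hdent)
          have : j + 1 + 1 - x = j + 1 - (x - 1) := by omega
          rw [this] at h3
          obtain ⟨i, hi⟩ := (hqr (x-1)).mpr ⟨by omega, by omega, h3⟩
          exact ⟨i, by show q i + 1 = x; omega⟩
      · intro C' hC' hne
        rw [e2, w]
        refine Finset.sum_eq_zero fun C hC => ?_
        rw [Finset.mem_filter, Finset.mem_powerset] at hC
        rw [m3] at hC
        exact hz1 C hC.1 (by rw [← (hC.2.2.2.2.2 m1 (by rw [m4]; exact hdent)).2.2]; exact hne)
      · intro c hc hcM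
        have hcard : (Finset.univ.image c).card = r := by
          rw [Finset.card_image_of_injective _ hc.injective]; simp
        have e : DD (fun i => f (q i + 1)) c = DD (fun i => psum (f' (q i))) c :=
          DD_congr (fun i l => (psum_f' (q i) (hq1 i) (c l)).symm)
        rw [e2, w, Nat.cast_sum, e, m3]
        by_cases h0 : 0 ∈ Finset.univ.image c
        · obtain ⟨l, _, hl⟩ := Finset.mem_image.mp h0
          rw [DD, Matrix.det_eq_zero_of_row_eq_zero l (by intro i; simp [hl, psum])]
          refine Finset.sum_eq_zero fun C hC => ?_
          rw [Finset.mem_filter] at hC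
          exact absurd h0 (hC.2.2.2.2.2 m1 (by rw [m4]; exact hdent)).1
        · have hpos : ∀ i, 0 < c i := by
            intro i
            rcases Nat.eq_zero_or_pos (c i) with h | h
            · exact absurd (Finset.mem_image.mpr ⟨i, Finset.mem_univ _, h⟩) h0
            · exact h
          have ht := transfer (fun i => f' (q i)) (fun C => (w b dent (2 * j + 1) C : ℚ)) (b + j) hd1
            (Fin.cons 0 c) (cons_strictMono _ hc 0 hpos) (by
              intro i
              induction i using Fin.cases with
              | zero => simp
              | succ i => have := hcM i; simp; omega)
          rw [DD_cons_zero _ (fun i => by simp [psum]), image_cons] at ht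
          rw [← ht]
          refine Finset.sum_congr ?_ (fun _ _ => rfl)
          apply Finset.filter_congr
          intro C hC
          rw [Finset.mem_powerset] at hC
          unfold Step
          rw [m1, m3, m4, hcard]
          constructor
          · rintro ⟨_, _, _, _, h⟩
            have := h rfl hdent
            exact ⟨this.2.1, this.2.2.symm⟩
          · intro h
            refine ⟨hC, ?_, by simp, fun _ h => absurd hdent h, fun _ _ => ⟨h0, h.1, h.2.symm⟩⟩
            intro x hx
            obtain ⟨i, _, rfl⟩ := Finset.mem_image.mp hx
            exact Finset.mem_range.mpr (hcM i)
    · refine ⟨r + 1, Fin.cons 1 (fun i => q i + 1), cons_strictMono _ (fun i j h => Nat.succ_lt_succ (hq h)) 1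
          (fun i => by have := hq1 i; omega), ?_, ?_, ?_⟩
      · intro x
        rw [Fin.exists_fin_succ]
        simp only [Fin.cons_zero, Fin.cons_succ]
        constructor
        · rintro (rfl | ⟨i, rfl⟩)
          · exact ⟨by omega, by omega, by simpa using hdent⟩
          · obtain ⟨h1, h2, h3⟩ := (hqr (q i)).mp ⟨i, rfl⟩
            refine ⟨by omega, by omega, ?_⟩
            have : j + 1 + 1 - (q i + 1) = j + 1 - q i := by omega
            rwa [this]
        · rintro ⟨h1, h2, h3⟩
          by_cases hx : x = 1
          · left; exact hx.symm
          · right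
            have : j + 1 + 1 - x = j + 1 - (x - 1) := by omega
            rw [this] at h3
            obtain ⟨i, hi⟩ := (hqr (x-1)).mpr ⟨by omega, by omega, h3⟩
            exact ⟨i, by show q i + 1 = x; omega⟩
      · intro C' hC' hne
        rw [e2, w]
        refine Finset.sum_eq_zero fun C hC => ?_
        rw [Finset.mem_filter, Finset.mem_powerset] at hC
        rw [m3] at hC
        have := (hC.2.2.2.2.1 m1 (by rw [m4]; exact hdent)).2
        exact hz1 C hC.1 (by omega)
      · intro c hc hcM
        have hcard : (Finset.univ.image c).card = r + 1 := by
          rw [Finset.card_image_of_injective _ hc.injective]; simp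
        have e : DD (fun i => f ((Fin.cons 1 (fun i => q i + 1) : Fin (r+1) → ℕ) i)) c =
            DD (Fin.cons (fun _ => 1) (fun i => psum (f' (q i))) : Fin (r+1) → ℕ → ℚ) c := by
          apply DD_congr
          intro i l
          induction i using Fin.cases with
          | zero => simp [f]
          | succ i => simp [psum_f' (q i) (hq1 i)]
        rw [e2, w, Nat.cast_sum, e, m3]
        have ht := transfer (fun i => f' (q i)) (fun C => (w b dent (2 * j + 1) C : ℚ)) (b + j) hd1
            c hc (by intro i; have := hcM i; omega)
        rw [← ht]
        refine Finset.sum_congr ?_ (fun _ _ => rfl)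
        apply Finset.filter_congr
        intro C hC
        rw [Finset.mem_powerset] at hC
        unfold Step
        rw [m1, m3, m4, hcard]
        constructor
        · rintro ⟨_, _, _, h, _⟩
          have := h rfl hdent
          exact ⟨this.1, by omega⟩
        · intro h
          refine ⟨hC, ?_, by simp, fun _ _ => ⟨h.1, by omega⟩, fun _ h => absurd h hdent⟩
          intro x hx
          obtain ⟨i, _, rfl⟩ := Finset.mem_image.mp hx
          exact Finset.mem_range.mpr (hcM i)

theorem total (a b : ℕ) (dent : ℕ → Prop) (n : ℕ) (q : Fin n → ℕ) (hq : StrictMono q)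
    (hqr : ∀ x, (∃ i, q i = x) ↔ 1 ≤ x ∧ x ≤ a ∧ ¬ dent (a + 1 - x)) :
    ((∑ C ∈ (Finset.range (b + a)).powerset, w b dent (2 * a) C : ℕ) : ℚ) =
      (∏ j, B (a + b) (q j)) * V (fun i => (q i : ℚ)) := by
  classical
  obtain ⟨r, q', hq', hqr', hz, hd⟩ := main_det b dent a
  have himg : Finset.univ.image q = Finset.univ.image q' := by
    ext x
    simp only [Finset.mem_image, Finset.mem_univ, true_and]
    rw [hqr, hqr']
  have hr : n = r := by
    have := congrArg Finset.card himg
    rw [Finset.card_image_of_injective _ hq.injective, Finset.card_image_of_injective _ hq'.injective] at this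
    simpa using this
  subst hr
  have hqq : q = q' := by
    funext i
    rw [← en_image q hq i, ← en_image q' hq' i, himg]
  subst hqq
  have h1 : ∀ i, 1 ≤ q i := fun i => ((hqr (q i)).mp ⟨i, rfl⟩).1
  rw [add_comm a b, ← sumdet (b + a) n q hq h1, Nat.cast_sum]
  symm
  have hsub : (Finset.range (b + a)).powersetCard n ⊆ (Finset.range (b + a)).powerset := by
    intro C hC
    rw [Finset.mem_powersetCard] at hC
    exact Finset.mem_powerset.mpr hC.1
  rw [← Finset.sum_subset hsub]
  · refine Finset.sum_congr rfl fun C hC => ?_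
    rw [Finset.mem_powersetCard] at hC
    obtain ⟨c, hc, rfl⟩ := exists_enum C hC.2
    rw [detC_image _ _ hc, hd c hc (fun i => Finset.mem_range.mp (hC.1 (Finset.mem_image_of_mem _ (Finset.mem_univ _))))]
    rw [DD, ← Matrix.det_transpose]
    rfl
  · intro C hC hC'
    rw [Finset.mem_powerset] at hC
    rw [hz C hC (fun h => hC' (Finset.mem_powersetCard.mpr ⟨hC, h⟩))]
    simp

end PPX

end

noncomputable section
namespace PPX

open Classical in
def seqF (b : ℕ) (dent : ℕ → Prop) : ℕ → Finset ℕ → Finset (ℕ → Finset ℕ)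
  | 0, C => if C = ∅ then {fun _ => ∅} else ∅
  | M+1, C' => (((Finset.range (b + M / 2)).powerset).filter (fun C => Step b dent M C C')).biUnion
      (fun C => (seqF b dent M C).image (fun c => Function.update c (M+1) C'))

theorem mem_seqF (b : ℕ) (dent : ℕ → Prop) (M : ℕ) (C : Finset ℕ) (c : ℕ → Finset ℕ) :
    c ∈ seqF b dent M C ↔ c 0 = ∅ ∧ (∀ m < M, Step b dent m (c m) (c (m+1))) ∧ c M = C ∧
      ∀ m, M < m → c m = ∅ := by
  induction M generalizing C c with
  | zero =>
    rw [seqF]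
    split_ifs with h
    · subst h
      rw [Finset.mem_singleton]
      constructor
      · rintro rfl; simp
      · rintro ⟨h0, _, _, h⟩
        funext m
        rcases Nat.eq_zero_or_pos m with rfl | hm
        · exact h0
        · exact h m hm
    · simp only [Finset.notMem_empty, false_iff]
      rintro ⟨h0, _, h1, _⟩
      exact h (h1 ▸ h0)
  | succ M ih =>
    rw [seqF]
    simp only [Finset.mem_biUnion, Finset.mem_filter, Finset.mem_powerset, Finset.mem_image, ih]
    constructor
    · rintro ⟨D, ⟨hD, hst⟩, e, ⟨h0, h1, h2, h3⟩, rfl⟩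
      refine ⟨by rw [Function.update_of_ne (by omega)]; exact h0, ?_, by simp, ?_⟩
      · intro m hm
        rcases Nat.lt_succ_iff_lt_or_eq.mp hm with hm | rfl
        · rw [Function.update_of_ne (by omega), Function.update_of_ne (by omega)]
          exact h1 m hm
        · rw [Function.update_of_ne (by omega), Function.update_self, h2]
          exact hst
      · intro m hm
        rw [Function.update_of_ne (by omega)]
        exact h3 m (by omega)
    · rintro ⟨h0, h1, h2, h3⟩
      have hs := h1 M (by omega)
      refine ⟨c M, ⟨hs.1, h2 ▸ hs⟩, Function.update c (M+1) ∅, ⟨?_, ?_, ?_, ?_⟩, ?_⟩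
      · rw [Function.update_of_ne (by omega)]; exact h0
      · intro m hm
        rw [Function.update_of_ne (by omega), Function.update_of_ne (by omega)]
        exact h1 m (by omega)
      · rw [Function.update_of_ne (by omega)]
      · intro m hm
        by_cases h : m = M + 1
        · subst h; simp
        · rw [Function.update_of_ne h]; exact h3 m (by omega)
      · rw [Function.update_idem, ← h2, Function.update_eq_self]

open Classical in
theorem card_seqF (b : ℕ) (dent : ℕ → Prop) (M : ℕ) (C : Finset ℕ) :
    (seqF b dent M C).card = w b dent M C := by
  induction M generalizing C with
  | zero => rw [seqF, w]; split_ifs <;> simp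
  | succ M ih =>
    rw [seqF, w, Finset.card_biUnion]
    · refine Finset.sum_congr rfl fun D _ => ?_
      rw [Finset.card_image_of_injOn, ih]
      intro c hc c' hc' h
      rw [Finset.mem_coe, mem_seqF] at hc hc'
      funext m
      by_cases hm : m = M + 1
      · subst hm; rw [hc.2.2.2 _ (by omega), hc'.2.2.2 _ (by omega)]
      · have := congrFun h m
        simpa [Function.update_of_ne hm] using this
    · intro D _ D' _ hne
      rw [Function.onFun, Finset.disjoint_left]
      intro c hc hc'
      rw [Finset.mem_image] at hc hc'
      obtain ⟨e, he, rfl⟩ := hc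
      obtain ⟨e', he', h⟩ := hc'
      rw [mem_seqF] at he he'
      apply hne
      rw [← he.2.2.1, ← he'.2.2.1]
      have := congrFun h M
      simpa [Function.update_of_ne (show M ≠ M + 1 by omega)] using this.symm

def IsSeq (a b : ℕ) (dent : ℕ → Prop) (c : ℕ → Finset ℕ) : Prop :=
  c 0 = ∅ ∧ (∀ m < 2 * a, Step b dent m (c m) (c (m+1))) ∧ ∀ m, 2 * a < m → c m = ∅

theorem card_seq (a b : ℕ) (ha : 0 < a) (dent : ℕ → Prop) :
    Nat.card {c // IsSeq a b dent c} = ∑ C ∈ (Finset.range (b+a)).powerset, w b dent (2*a) C := by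
  classical
  have : ∀ c, IsSeq a b dent c ↔ c ∈ ((Finset.range (b+a)).powerset).biUnion (seqF b dent (2*a)) := by
    intro c
    simp only [Finset.mem_biUnion, Finset.mem_powerset, mem_seqF, IsSeq]
    constructor
    · rintro ⟨h0, h1, h2⟩
      refine ⟨c (2*a), ?_, h0, h1, rfl, h2⟩
      have := (h1 (2*a-1) (by omega)).2.1
      rw [show 2 * a - 1 + 1 = 2 * a by omega, show 2 * a / 2 = a by omega] at this
      exact this
    · rintro ⟨C, hC, h0, h1, _, h2⟩
      exact ⟨h0, h1, h2⟩
  rw [Nat.card_congr (Equiv.subtypeEquivRight this)]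
  rw [Nat.card_eq_fintype_card, Fintype.card_coe, Finset.card_biUnion]
  · exact Finset.sum_congr rfl fun C _ => card_seqF _ _ _ _
  · intro D _ D' _ hne
    rw [Function.onFun, Finset.disjoint_left]
    intro c hc hc'
    rw [mem_seqF] at hc hc'
    exact hne (hc.2.2.1.symm.trans hc'.2.2.1)

end PPX

end

noncomputable section
namespace PPX
open Classical

structure IsQuart (a b : ℕ) (dent : ℕ → Prop) (Q : (ℕ → ℕ → ℕ) × (ℕ → ℕ → ℕ) × (ℕ → ℕ → ℕ)) : Prop where
  R : ∀ m < 2 * a, ∀ e, Q.1 m e + Q.2.1 m e + Q.2.2 m e = if e < b + m / 2 then 1 else 0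
  Le : ∀ m < 2 * a, m % 2 = 0 → ∀ e, Q.1 (m+1) e + Q.2.1 m e + Q.2.2 m (e+1) = if e < b + m / 2 then 1 else 0
  D0 : ∀ m < 2 * a, m % 2 = 0 → Q.2.2 m 0 = 0
  Lo0 : ∀ m < 2 * a, m % 2 = 1 → Q.1 (m+1) 0 + Q.2.2 m 0 = if dent ((m+1)/2) then 0 else 1
  Lo : ∀ m < 2 * a, m % 2 = 1 → ∀ e, Q.1 (m+1) (e+1) + Q.2.1 m e + Q.2.2 m (e+1) = if e < b + m / 2 then 1 else 0
  X0 : ∀ e, Q.1 0 e = 0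
  Xz : ∀ m e, 2 * a < m → Q.1 m e = 0
  Uz : ∀ m e, 2 * a ≤ m → Q.2.1 m e = 0
  Dz : ∀ m e, 2 * a ≤ m → Q.2.2 m e = 0

def cOf (b : ℕ) (X : ℕ → ℕ → ℕ) (m : ℕ) : Finset ℕ := (Finset.range (b + m / 2)).filter (fun e => X m e = 1)

theorem mem_cOf (b : ℕ) (X : ℕ → ℕ → ℕ) (m e : ℕ) : e ∈ cOf b X m ↔ e < b + m / 2 ∧ X m e = 1 := by
  unfold cOf
  rw [Finset.mem_filter, Finset.mem_range]

variable {a b : ℕ} {dent : ℕ → Prop} {Q : (ℕ → ℕ → ℕ) × (ℕ → ℕ → ℕ) × (ℕ → ℕ → ℕ)}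

theorem IsQuart.mem (h : IsQuart a b dent Q) (hb : 0 < b) (m e : ℕ) :
    Q.1 m e = if e ∈ cOf b Q.1 m then 1 else 0 := by
  have key : Q.1 m e = 0 ∨ Q.1 m e = 1 ∧ e < b + m / 2 := by
    rcases Nat.lt_or_ge m (2 * a) with hm | hm
    · have := h.R m hm e
      split_ifs at this with h1
      · omega
      · omega
    · rcases Nat.lt_or_ge (2*a) m with hm' | hm'
      · left; exact h.Xz m e hm'
      · obtain rfl : m = 2 * a := by omega
        rcases Nat.eq_zero_or_pos a with rfl | ha
        · left; exact h.X0 e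
        · have h2 : 2 * a - 1 + 1 = 2 * a := by omega
          rcases e with _ | e
          · have h1 := h.Lo0 (2 * a - 1) (by omega) (by omega)
            rw [h2] at h1
            split_ifs at h1 <;> omega
          · have h1 := h.Lo (2 * a - 1) (by omega) (by omega) e
            rw [h2] at h1
            split_ifs at h1 <;> omega
  by_cases hh : e ∈ cOf b Q.1 m
  · rw [if_pos hh]; rw [mem_cOf] at hh; omega
  · rw [if_neg hh]; rw [mem_cOf] at hh; omega

theorem IsQuart.cnt_s (h : IsQuart a b dent Q) (hb : 0 < b) (m e : ℕ) :
    cnt (cOf b Q.1 m) (e+1) = cnt (cOf b Q.1 m) e + Q.1 m e := by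
  rw [cnt_succ, h.mem hb m e]

theorem IsQuart.even (h : IsQuart a b dent Q) (hb : 0 < b) (m : ℕ) (hm : m < 2 * a) (hm2 : m % 2 = 0) (e : ℕ) :
    Q.2.2 m e + cnt (cOf b Q.1 (m+1)) e = cnt (cOf b Q.1 m) e := by
  induction e with
  | zero => simp [cnt_zero, h.D0 m hm hm2]
  | succ e ih =>
    rw [h.cnt_s hb, h.cnt_s hb]
    have h1 := h.R m hm e
    have h2 := h.Le m hm hm2 e
    split_ifs at h1 h2 <;> omega

def cc (dent : ℕ → Prop) (m : ℕ) (C : Finset ℕ) : Finset ℕ :=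
  if dent ((m+1)/2) then insert 0 C else C

theorem cnt_insert0 (C : Finset ℕ) (h : 0 ∉ C) (e : ℕ) : cnt (insert 0 C) (e+1) = cnt C (e+1) + 1 := by
  induction e with
  | zero => simp [cnt_succ, cnt_zero, h]
  | succ e ih => rw [cnt_succ, ih, cnt_succ C (e+1)]; simp; omega

theorem IsQuart.dent0 (h : IsQuart a b dent Q) (m : ℕ) (hm : m < 2 * a) (hm2 : m % 2 = 1)
    (hd : dent ((m+1)/2)) : 0 ∉ cOf b Q.1 (m+1) := by
  have := h.Lo0 m hm hm2
  rw [if_pos hd] at this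
  simp [cOf]; omega

theorem IsQuart.cc_cnt (h : IsQuart a b dent Q) (hb : 0 < b) (m : ℕ) (hm : m < 2 * a) (hm2 : m % 2 = 1) (e : ℕ) :
    cnt (cc dent m (cOf b Q.1 (m+1))) (e+1) = cnt (cOf b Q.1 (m+1)) (e+1) + if dent ((m+1)/2) then 1 else 0 := by
  unfold cc
  split_ifs with hd
  · exact cnt_insert0 _ (h.dent0 m hm hm2 hd) e
  · simp

theorem IsQuart.odd (h : IsQuart a b dent Q) (hb : 0 < b) (m : ℕ) (hm : m < 2 * a) (hm2 : m % 2 = 1) (e : ℕ)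
    (he : e < b + m / 2) :
    Q.2.1 m e + cnt (cOf b Q.1 m) (e+1) = cnt (cc dent m (cOf b Q.1 (m+1))) (e+1) := by
  rw [h.cc_cnt hb m hm hm2]
  induction e with
  | zero =>
    rw [h.cnt_s hb, h.cnt_s hb]
    have h1 := h.R m hm 0
    have h2 := h.Lo0 m hm hm2
    simp only [cnt_zero]
    split_ifs at h1 h2 ⊢ <;> omega
  | succ e ih =>
    rw [h.cnt_s hb m (e+1), h.cnt_s hb (m+1) (e+1)]
    have h1 := h.R m hm (e+1)
    have h2 := h.Lo m hm hm2 e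
    have := ih (by omega)
    split_ifs at h1 h2 this ⊢ <;> omega

theorem cOf_sub (X : ℕ → ℕ → ℕ) (m : ℕ) : cOf b X m ⊆ Finset.range (b + m / 2) := Finset.filter_subset _ _

theorem IsQuart.isSeq (h : IsQuart a b dent Q) (hb : 0 < b) :
    IsSeq a b dent (cOf b Q.1) := by
  refine ⟨?_, ?_, ?_⟩
  · simp [cOf, h.X0]
  · intro m hm
    refine ⟨cOf_sub _ _, cOf_sub _ _, ?_, ?_⟩
    · intro hm2
      have hM : b + (m+1)/2 = b + m / 2 := by omega
      have s1 := cOf_sub (b := b) Q.1 m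
      have s2 := cOf_sub (b := b) Q.1 (m+1)
      rw [hM] at s2
      refine ⟨fun x => ⟨?_, ?_⟩, ?_⟩
      · have := h.even hb m hm hm2 x; omega
      · have h3 := h.even hb m hm hm2 x
        have h1 := h.R m hm x
        rw [h.cnt_s hb]
        split_ifs at h1 <;> omega
      · rw [← cnt_of_bound _ _ _ s1 le_rfl, ← cnt_of_bound _ _ _ s2 le_rfl]
        have h3 := h.even hb m hm hm2 (b + m/2)
        have h1 := h.R m hm (b + m/2)
        rw [if_neg (by omega)] at h1
        omega
    · have hM : b + (m+1)/2 = b + m / 2 + m % 2 := by omega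
      have s1 := cOf_sub (b := b) Q.1 m
      have s2 := cOf_sub (b := b) Q.1 (m+1)
      have main : m % 2 = 1 → Rel (cc dent m (cOf b Q.1 (m+1))) (cOf b Q.1 m) ∧
          (cc dent m (cOf b Q.1 (m+1))).card = (cOf b Q.1 m).card + 1 := by
        intro hm2
        rw [hM, hm2] at s2
        have s3 : cc dent m (cOf b Q.1 (m+1)) ⊆ Finset.range (b + m / 2 + 1) := by
          unfold cc; split_ifs
          · intro x hx
            rw [Finset.mem_insert] at hx
            rcases hx with rfl | hx
            · simp
            · exact s2 hx
          · exact s2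
        have hc : (cc dent m (cOf b Q.1 (m+1))).card = (cOf b Q.1 m).card + 1 := by
          rw [← cnt_of_bound _ _ _ s1 le_rfl, ← cnt_of_bound _ _ _ s3 le_rfl]
          obtain ⟨N, hN⟩ : ∃ N, b + m / 2 = N + 1 := ⟨b + m/2 - 1, by omega⟩
          have h1 := h.odd hb m hm hm2 N (by omega)
          have h2 := h.Lo m hm hm2 N
          have h3 := h.R m hm (N+1)
          rw [h.cc_cnt hb m hm hm2] at h1 ⊢
          rw [hN] at h2 h3 ⊢
          rw [if_neg (by omega)] at h3
          rw [if_pos (by omega)] at h2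
          rw [h.cnt_s hb _ (N+1)]
          omega
        refine ⟨fun x => ?_, hc⟩
        rcases Nat.lt_or_ge x (b + m/2) with hx | hx
        · constructor
          · rcases x with _ | x
            · simp [cnt_zero]
            · rw [← h.odd hb m hm hm2 x (by omega)]; omega
          · rw [← h.odd hb m hm hm2 x (by omega), h.cnt_s hb]
            have h1 := h.R m hm x
            split_ifs at h1 <;> omega
        · rw [cnt_of_bound _ _ _ s1 hx, cnt_of_bound _ _ (x+1) s3 (by omega), hc]
          refine ⟨?_, le_rfl⟩
          obtain ⟨N, rfl⟩ : ∃ N, x = N + 1 := ⟨x - 1, by omega⟩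
          rcases Nat.lt_or_ge (b + m/2) (N+1) with hx' | hx'
          · rw [cnt_of_bound _ _ _ s3 (by omega)]; omega
          · rw [← h.odd hb m hm hm2 N (by omega), cnt_of_bound _ _ _ s1 hx]; omega
      constructor
      · intro hm2 hd
        have := main hm2
        rwa [cc, if_neg hd] at this
      · intro hm2 hd
        have := main hm2
        rw [cc, if_pos hd, Finset.card_insert_of_notMem (h.dent0 m hm hm2 hd)] at this
        exact ⟨h.dent0 m hm hm2 hd, this.1, by omega⟩
  · intro m hm
    simp [cOf, h.Xz m _ hm]

theorem quart_inj (hb : 0 < b) {Q Q' : (ℕ → ℕ → ℕ) × (ℕ → ℕ → ℕ) × (ℕ → ℕ → ℕ)}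
    (h : IsQuart a b dent Q) (h' : IsQuart a b dent Q') (hc : cOf b Q.1 = cOf b Q'.1) : Q = Q' := by
  have hX : Q.1 = Q'.1 := by
    funext m e; rw [h.mem hb, h'.mem hb, hc]
  have hUD : ∀ m e, Q.2.1 m e = Q'.2.1 m e ∧ Q.2.2 m e = Q'.2.2 m e := by
    intro m e
    rcases Nat.lt_or_ge m (2 * a) with hm | hm
    · have r := h.R m hm e
      have r' := h'.R m hm e
      rw [hX] at r
      rcases Nat.mod_two_eq_zero_or_one m with hm2 | hm2
      · have e1 := h.even hb m hm hm2 e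
        have e2 := h'.even hb m hm hm2 e
        rw [hc] at e1
        omega
      · rcases Nat.lt_or_ge e (b + m/2) with he | he
        · have e1 := h.odd hb m hm hm2 e he
          have e2 := h'.odd hb m hm hm2 e he
          rw [hc] at e1
          omega
        · rw [if_neg (by omega)] at r r'; omega
    · rw [h.Uz m e hm, h'.Uz m e hm, h.Dz m e hm, h'.Dz m e hm]; simp
  exact Prod.ext hX (Prod.ext (funext fun m => funext fun e => (hUD m e).1) (funext fun m => funext fun e => (hUD m e).2))

def qX (c : ℕ → Finset ℕ) (m e : ℕ) : ℕ := if e ∈ c m then 1 else 0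
def qU (a b : ℕ) (dent : ℕ → Prop) (c : ℕ → Finset ℕ) (m e : ℕ) : ℕ :=
  if m < 2 * a ∧ e < b + m / 2 then
    (if m % 2 = 0 then 1 - qX c m e - (cnt (c m) e - cnt (c (m+1)) e)
    else cnt (cc dent m (c (m+1))) (e+1) - cnt (c m) (e+1)) else 0
def qD (a b : ℕ) (dent : ℕ → Prop) (c : ℕ → Finset ℕ) (m e : ℕ) : ℕ :=
  if m < 2 * a ∧ e < b + m / 2 then
    (if m % 2 = 0 then (cnt (c m) e - cnt (c (m+1)) e)
    else 1 - qX c m e - (cnt (cc dent m (c (m+1))) (e+1) - cnt (c m) (e+1))) else 0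

theorem quart_surj (hb : 0 < b) (c : ℕ → Finset ℕ) (hc : IsSeq a b dent c) :
    IsQuart a b dent (qX c, qU a b dent c, qD a b dent c) := by
  obtain ⟨h0, h1, h2⟩ := hc
  have qs : ∀ m e, cnt (c m) (e+1) = cnt (c m) e + qX c m e := fun m e => cnt_succ _ _
  have out : ∀ m < 2 * a, ∀ e, b + m / 2 ≤ e → qX c m e = 0 := by
    intro m hm e he
    unfold qX
    rw [if_neg]
    intro hh
    have := Finset.mem_range.mp ((h1 m hm).1 hh)
    omega
  have out' : ∀ m < 2 * a, ∀ e, b + (m+1) / 2 ≤ e → qX c (m+1) e = 0 := by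
    intro m hm e he
    unfold qX
    rw [if_neg]
    intro hh
    have := Finset.mem_range.mp ((h1 m hm).2.1 hh)
    omega
  have ev : ∀ m < 2 * a, m % 2 = 0 → ∀ e, cnt (c (m+1)) e ≤ cnt (c m) e ∧ cnt (c m) e + qX c m e ≤ cnt (c (m+1)) e + 1 := by
    intro m hm hm2 e
    have := ((h1 m hm).2.2.1 hm2).1 e
    rwa [qs] at this
  have evc : ∀ m < 2 * a, m % 2 = 0 → ∀ e, b + m/2 ≤ e → cnt (c (m+1)) e = cnt (c m) e := by
    intro m hm hm2 e he
    have := ((h1 m hm).2.2.1 hm2).2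
    rw [cnt_of_bound _ _ _ (h1 m hm).1 he, cnt_of_bound _ _ _ (h1 m hm).2.1 (by omega), this]
  have ccs : ∀ m < 2 * a, m % 2 = 1 → ∀ e, cnt (cc dent m (c (m+1))) (e+1) =
      cnt (c (m+1)) (e+1) + if dent ((m+1)/2) then 1 else 0 := by
    intro m hm hm2 e
    unfold cc
    split_ifs with hd
    · exact cnt_insert0 _ ((h1 m hm).2.2.2.2 hm2 hd).1 e
    · simp
  have od : ∀ m < 2 * a, m % 2 = 1 → Rel (cc dent m (c (m+1))) (c m) ∧ (cc dent m (c (m+1))).card = (c m).card + 1 := by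
    intro m hm hm2
    unfold cc
    split_ifs with hd
    · have := (h1 m hm).2.2.2.2 hm2 hd
      rw [Finset.card_insert_of_notMem this.1]
      exact ⟨this.2.1, by omega⟩
    · exact (h1 m hm).2.2.2.1 hm2 hd
  have od1 : ∀ m < 2 * a, m % 2 = 1 → ∀ e, cnt (c m) e ≤ cnt (cc dent m (c (m+1))) e ∧
      cnt (cc dent m (c (m+1))) (e+1) ≤ cnt (c m) e + 1 := fun m hm hm2 e => (od m hm hm2).1 e
  have odc : ∀ m < 2 * a, m % 2 = 1 → ∀ e, b + m/2 ≤ e → cnt (c (m+1)) (e+1) + (if dent ((m+1)/2) then 1 else 0) = cnt (c m) e + 1 := by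
    intro m hm hm2 e he
    have := (od m hm hm2).2
    rw [← ccs m hm hm2, cnt_of_bound _ _ e (h1 m hm).1 he, ← this]
    apply cnt_of_bound _ (b + (m+1)/2) _ _ (by omega)
    unfold cc; split_ifs
    · intro x hx
      rw [Finset.mem_insert] at hx
      rcases hx with rfl | hx
      · simp; omega
      · exact (h1 m hm).2.1 hx
    · exact (h1 m hm).2.1
  refine ⟨?_, ?_, ?_, ?_, ?_, ?_, ?_, ?_, ?_⟩
  · intro m hm e
    show qX c m e + qU a b dent c m e + qD a b dent c m e = _
    unfold qU qD
    rcases Nat.mod_two_eq_zero_or_one m with hm2 | hm2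
    · have := ev m hm hm2 e
      have := out m hm e
      simp only [hm, hm2, true_and, if_true]
      split_ifs <;> omega
    · have := od1 m hm hm2 e
      have := od1 m hm hm2 (e+1)
      have := out m hm e
      have := qs m e
      have : qX c m e ≤ 1 := by unfold qX; split_ifs <;> simp
      simp only [hm, hm2, true_and, one_ne_zero, if_false]
      split_ifs <;> omega
  · intro m hm hm2 e
    show qX c (m+1) e + qU a b dent c m e + qD a b dent c m (e+1) = _
    unfold qU qD
    have := ev m hm hm2 e
    have := ev m hm hm2 (e+1)
    have := out m hm e
    have := out' m hm e
    have := qs m e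
    have := qs (m+1) e
    have := evc m hm hm2 (e+1)
    simp only [hm, hm2, true_and, if_true]
    split_ifs <;> omega
  · intro m hm hm2
    show qD a b dent c m 0 = 0
    simp [qD, hm2, cnt_zero]
  · intro m hm hm2
    show qX c (m+1) 0 + qD a b dent c m 0 = _
    unfold qD
    have := od1 m hm hm2 0
    have := od1 m hm hm2 1
    have e1 := ccs m hm hm2 0
    have e2 := qs m 0
    have e3 := qs (m+1) 0
    simp only [cnt_zero, zero_add] at *
    simp only [hm, hm2, true_and, one_ne_zero, if_false]
    split_ifs at * <;> omega
  · intro m hm hm2 e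
    show qX c (m+1) (e+1) + qU a b dent c m e + qD a b dent c m (e+1) = _
    unfold qU qD
    have := od1 m hm hm2 (e+1)
    have := od1 m hm hm2 (e+1+1)
    have := od1 m hm hm2 e
    have := out m hm e
    have := out' m hm (e+1)
    have := out m hm (e+1)
    have := ccs m hm hm2 e
    have := ccs m hm hm2 (e+1)
    have := qs m e
    have := qs m (e+1)
    have := qs (m+1) (e+1)
    have := odc m hm hm2 (e+1)
    simp only [hm, hm2, true_and, one_ne_zero, if_false]
    split_ifs at * <;> omega
  · intro e
    simp [qX, h0]
  · intro m e hm
    simp [qX, h2 m hm]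
  · intro m e hm
    show qU a b dent c m e = 0
    unfold qU; rw [if_neg (by omega)]
  · intro m e hm
    show qD a b dent c m e = 0
    unfold qD; rw [if_neg (by omega)]

theorem card_quart (a b : ℕ) (hb : 0 < b) (dent : ℕ → Prop) :
    Nat.card {Q // IsQuart a b dent Q} = Nat.card {c // IsSeq a b dent c} := by
  refine Nat.card_eq_of_bijective (fun Q => ⟨cOf b Q.1.1, Q.2.isSeq hb⟩) ⟨?_, ?_⟩
  · rintro ⟨Q, hQ⟩ ⟨Q', hQ'⟩ h
    exact Subtype.ext (quart_inj hb hQ hQ' (congrArg Subtype.val h))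
  · rintro ⟨c, hc⟩
    refine ⟨⟨_, quart_surj hb c hc⟩, Subtype.ext ?_⟩
    funext m
    ext e
    show e ∈ cOf b (qX c) m ↔ e ∈ c m
    rw [mem_cOf]
    unfold qX
    constructor
    · rintro ⟨_, h⟩
      by_contra hh
      simp [hh] at h
    · intro h
      refine ⟨?_, by simp [h]⟩
      rcases Nat.lt_or_ge m (2 * a) with hm | hm
      · exact Finset.mem_range.mp ((hc.2.1 m hm).1 h)
      · rcases Nat.lt_or_ge (2 * a) m with hm' | hm'
        · rw [hc.2.2 m hm'] at h; simp at h
        · rcases m with _ | m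
          · rw [hc.1] at h; simp at h
          · exact Finset.mem_range.mp ((hc.2.1 m (by omega)).2.1 h)

end PPX

end

noncomputable section
namespace PPX
open Classical

def inCell (a b : ℕ) (dent : ℕ → Prop) (i j l : ℤ) : Prop :=
  (0 ≤ i ∧ i + 1 ≤ 4 * a ∧ -(2 * a) ≤ j ∧ j + 1 ≤ 2 * b ∧ 0 ≤ l ∧ l + 1 ≤ 2 * b + 2 * a) ∧
  ∀ t : ℕ, dent t → ¬ (i + 1 ≤ 2 * t ∧ j + 1 ≤ b - t + 1 ∧ (b:ℤ) + t - 1 ≤ l) ∧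
    ¬ (2 * (2 * a - t) ≤ i ∧ (b:ℤ) - 2 * a + t - 1 ≤ j ∧ l + 1 ≤ b + 2 * a - t + 1)

abbrev Tri3 := (ℤ → ℤ → ℕ) × (ℤ → ℤ → ℕ) × (ℤ → ℤ → ℕ)

structure IsSym (a b : ℕ) (P : Tri3) : Prop where
  Vx : ∀ m n, P.1 m n = P.1 (4 * a - m) (n + m - 2 * a)
  Vu : ∀ m n, P.2.1 m n = P.2.2 (4 * a - m - 1) (n + m + 1 - 2 * a)
  Rx : ∀ m n, P.1 m n = P.1 (4 * a - m) (2 * b - 2 * a - 1 - n)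
  Ru : ∀ m n, P.2.1 m n = P.2.1 (4 * a - 1 - m) (2 * b - 2 * a - 1 - n)
  Rd : ∀ m n, P.2.2 m n = P.2.2 (4 * a - 1 - m) (2 * b - 2 * a - n)

def Req (a b : ℕ) (dent : ℕ → Prop) (P : Tri3) (m n : ℤ) : Prop :=
  P.1 m n + P.2.1 m n + P.2.2 m n = if inCell a b dent m n (m + n) then 1 else 0
def Leq (a b : ℕ) (dent : ℕ → Prop) (P : Tri3) (m n : ℤ) : Prop :=
  P.1 m n + P.2.1 (m-1) n + P.2.2 (m-1) (n+1) = if inCell a b dent (m-1) n (m + n) then 1 else 0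

structure IsConf (a b : ℕ) (dent : ℕ → Prop) (P : Tri3) : Prop where
  sym : IsSym a b P
  R : ∀ m n, Req a b dent P m n
  L : ∀ m n, Leq a b dent P m n

variable {a b : ℕ} {dent : ℕ → Prop} {P : Tri3}

theorem IsSym.Hx (h : IsSym a b P) (m n : ℤ) : P.1 m n = P.1 m (2 * b - 1 - m - n) := by
  rw [h.Vx, h.Rx]; ring_nf

theorem IsSym.Hu (h : IsSym a b P) (m n : ℤ) : P.2.1 m n = P.2.2 m (2 * b - 1 - m - n) := by
  rw [h.Vu, h.Rd]; ring_nf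

theorem IsSym.Hd (h : IsSym a b P) (m n : ℤ) : P.2.2 m n = P.2.1 m (2 * b - 1 - m - n) := by
  rw [h.Hu]; ring_nf

theorem IsSym.Vd (h : IsSym a b P) (m n : ℤ) : P.2.2 m n = P.2.1 (4 * a - m - 1) (n + m - 2 * a) := by
  rw [h.Vu]; ring_nf

theorem inCell_H (i j l : ℤ) : inCell a b dent i j l ↔ inCell a b dent i (2 * b - 1 - l) (2 * b - 1 - j) := by
  unfold inCell
  constructor
  · rintro ⟨h1, h2⟩
    refine ⟨by omega, fun t ht => ?_⟩
    have := h2 t ht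
    omega
  · rintro ⟨h1, h2⟩
    refine ⟨by omega, fun t ht => ?_⟩
    have := h2 t ht
    omega

theorem inCell_V (i j l : ℤ) : inCell a b dent i j l ↔ inCell a b dent (4 * a - 1 - i) (l - 2 * a) (j + 2 * a) := by
  unfold inCell
  constructor
  · rintro ⟨h1, h2⟩
    refine ⟨by omega, fun t ht => ?_⟩
    have := h2 t ht
    omega
  · rintro ⟨h1, h2⟩
    refine ⟨by omega, fun t ht => ?_⟩
    have := h2 t ht
    omega

theorem IsSym.R_H (h : IsSym a b P) (m n : ℤ) (hr : Req a b dent P m (2 * b - 1 - m - n)) : Req a b dent P m n := by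
  unfold Req at *
  rw [inCell_H, h.Hx m n, h.Hu m n, h.Hd m n]
  rw [show m + (2 * (b:ℤ) - 1 - m - n) = 2 * b - 1 - n by ring] at hr
  rw [show 2 * (b:ℤ) - 1 - (m + n) = 2 * b - 1 - m - n by ring]
  rw [← hr]; ring

theorem IsSym.L_H (h : IsSym a b P) (m n : ℤ) (hr : Leq a b dent P m (2 * b - 1 - m - n)) : Leq a b dent P m n := by
  unfold Leq at *
  rw [inCell_H, h.Hx m n, h.Hu (m-1) n, h.Hd (m-1) (n+1)]
  rw [show m + (2 * (b:ℤ) - 1 - m - n) = 2 * b - 1 - n by ring] at hr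
  rw [show 2 * (b:ℤ) - 1 - (m + n) = 2 * b - 1 - m - n by ring]
  rw [← hr, show 2 * (b:ℤ) - 1 - (m-1) - n = 2 * b - 1 - m - n + 1 by ring,
    show 2 * (b:ℤ) - 1 - (m-1) - (n + 1) = 2 * b - 1 - m - n by ring]; ring

theorem IsSym.R_V (h : IsSym a b P) (m n : ℤ) (hr : Leq a b dent P (4 * a - m) (n + m - 2 * a)) : Req a b dent P m n := by
  unfold Leq at hr
  unfold Req
  rw [inCell_V, h.Vx m n, h.Vu m n, h.Vd m n]
  rw [show 4 * (a:ℤ) - m + (n + m - 2 * a) = n + 2 * a by ring] at hr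
  rw [show 4 * (a:ℤ) - 1 - m = 4 * a - m - 1 by ring, show m + n - 2 * (a:ℤ) = n + m - 2 * a by ring, ← hr,
    show n + m - 2 * (a:ℤ) + 1 = n + m + 1 - 2 * a by ring]; ring

theorem IsSym.L_V (h : IsSym a b P) (m n : ℤ) (hr : Req a b dent P (4 * a - m) (n + m - 2 * a)) : Leq a b dent P m n := by
  unfold Req at hr
  unfold Leq
  rw [inCell_V, h.Vx m n, h.Vu (m-1) n, h.Vd (m-1) (n+1)]
  rw [show 4 * (a:ℤ) - m + (n + m - 2 * a) = n + 2 * a by ring] at hr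
  rw [show 4 * (a:ℤ) - 1 - (m-1) = 4 * a - m by ring, show m + n - 2 * (a:ℤ) = n + m - 2 * a by ring, ← hr,
    show 4 * (a:ℤ) - (m-1) - 1 = 4 * a - m by ring, show n + (m-1) + 1 - 2 * (a:ℤ) = n + m - 2 * a by ring,
    show n + 1 + (m-1) - 2 * (a:ℤ) = n + m - 2 * a by ring]; ring

theorem isConf_of_quarter (h : IsSym a b P)
    (hR : ∀ m n : ℤ, m < 2 * a → 0 ≤ 2 * n + m + 1 - 2 * b → Req a b dent P m n)
    (hL : ∀ m n : ℤ, m ≤ 2 * a → 0 ≤ 2 * n + m + 1 - 2 * b → Leq a b dent P m n) : IsConf a b dent P := by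
  have R1 : ∀ m n : ℤ, m < 2 * a → Req a b dent P m n := by
    intro m n hm
    by_cases h0 : 0 ≤ 2 * n + m + 1 - 2 * b
    · exact hR m n hm h0
    · exact h.R_H _ _ (hR _ _ hm (by omega))
  have L1 : ∀ m n : ℤ, m ≤ 2 * a → Leq a b dent P m n := by
    intro m n hm
    by_cases h0 : 0 ≤ 2 * n + m + 1 - 2 * b
    · exact hL m n hm h0
    · exact h.L_H _ _ (hL _ _ hm (by omega))
  refine ⟨h, fun m n => ?_, fun m n => ?_⟩
  · by_cases hm : m < 2 * a
    · exact R1 m n hm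
    · exact h.R_V _ _ (L1 _ _ (by omega))
  · by_cases hm : m ≤ 2 * a
    · exact L1 m n hm
    · exact h.L_V _ _ (R1 _ _ (by omega))

/-- cell facts -/
theorem cellR (hd : ∀ t, dent t → 2 ≤ t ∧ t + 1 ≤ a) (m e : ℕ) (hm : m < 2 * a) :
    inCell a b dent m (b - (m/2 : ℕ) + e) (m + (b - (m/2 : ℕ) + e)) ↔ e < b + m / 2 := by
  constructor
  · rintro ⟨h, _⟩; omega
  · intro h
    refine ⟨by omega, fun t ht => ?_⟩
    have := hd t ht
    omega

theorem cellLe (hd : ∀ t, dent t → 2 ≤ t ∧ t + 1 ≤ a) (m e : ℕ) (hm : m < 2 * a) (hm2 : m % 2 = 0) :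
    inCell a b dent m (b - (m/2 : ℕ) + e) (m + 1 + (b - (m/2 : ℕ) + e)) ↔ e < b + m / 2 := by
  constructor
  · rintro ⟨h, _⟩; omega
  · intro h
    refine ⟨by omega, fun t ht => ?_⟩
    have := hd t ht
    omega

theorem cellLo (hd : ∀ t, dent t → 2 ≤ t ∧ t + 1 ≤ a) (m e : ℕ) (hm : m < 2 * a) (hm2 : m % 2 = 1) :
    inCell a b dent m (b - (m/2 : ℕ) + e) (m + 1 + (b - (m/2 : ℕ) + e)) ↔ e < b + m / 2 := by
  constructor
  · rintro ⟨h, _⟩; omega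
  · intro h
    refine ⟨by omega, fun t ht => ?_⟩
    have := hd t ht
    omega

theorem cellLo0 (hb : 0 < b) (hd : ∀ t, dent t → 2 ≤ t ∧ t + 1 ≤ a) (m : ℕ) (hm : m < 2 * a) (hm2 : m % 2 = 1) :
    inCell a b dent m (b - (m/2 : ℕ) - 1) (m + 1 + (b - (m/2 : ℕ) - 1)) ↔ ¬ dent ((m+1)/2) := by
  constructor
  · rintro ⟨_, h⟩ hdd
    have := h _ hdd
    omega
  · intro h
    refine ⟨by omega, fun t ht => ?_⟩
    have := hd t ht
    have : t ≠ (m+1)/2 := fun hh => h (hh ▸ ht)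
    omega

/-- axis cells, `m` odd -/
theorem cellAx (hb : 0 < b) (hd : ∀ t, dent t → 2 ≤ t ∧ t + 1 ≤ a) (m : ℕ) (hm : m < 2 * a) (hm2 : m % 2 = 1) :
    (inCell a b dent m (b - (m/2 : ℕ) - 1) (m + (b - (m/2 : ℕ) - 1)) ↔ ¬ dent ((m+1)/2)) ∧
    (inCell a b dent (m-1) (b - (m/2 : ℕ) - 1) (m + (b - (m/2 : ℕ) - 1)) ↔ ¬ dent ((m+1)/2)) := by
  constructor <;> constructor
  · rintro ⟨_, h⟩ hdd
    have := h _ hdd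
    omega
  · intro h
    refine ⟨by omega, fun t ht => ?_⟩
    have := hd t ht
    have : t ≠ (m+1)/2 := fun hh => h (hh ▸ ht)
    omega
  · rintro ⟨_, h⟩ hdd
    have := h _ hdd
    omega
  · intro h
    refine ⟨by omega, fun t ht => ?_⟩
    have := hd t ht
    have : t ≠ (m+1)/2 := fun hh => h (hh ▸ ht)
    omega

def quartOf (a b : ℕ) (P : Tri3) : (ℕ → ℕ → ℕ) × (ℕ → ℕ → ℕ) × (ℕ → ℕ → ℕ) :=
  (fun m e => if m ≤ 2 * a then P.1 m (b - (m/2 : ℕ) + e) else 0,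
   fun m e => if m < 2 * a then P.2.1 m (b - (m/2 : ℕ) + e) else 0,
   fun m e => if m < 2 * a then P.2.2 m (b - (m/2 : ℕ) + e) else 0)

theorem IsConf.axisR (h : IsConf a b dent P) (m : ℕ) (hm2 : m % 2 = 1) :
    P.2.1 m (b - (m/2 : ℕ) - 1) = 0 ∧ P.2.2 m (b - (m/2 : ℕ) - 1) = 0 := by
  have h1 := h.R m (b - (m/2:ℕ) - 1)
  have h2 := h.sym.Hu m (b - (m/2:ℕ) - 1)
  rw [show 2 * (b:ℤ) - 1 - m - (b - (m/2:ℕ) - 1) = (b - (m/2:ℕ) - 1) by omega] at h2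
  unfold Req at h1
  split_ifs at h1 <;> omega

theorem IsConf.axisL (h : IsConf a b dent P) (m : ℕ) (hm2 : m % 2 = 0) :
    P.2.2 m (b - (m/2 : ℕ)) = 0 := by
  have h1 := h.L (m+1) (b - (m/2:ℕ) - 1)
  have h2 := h.sym.Hu m (b - (m/2:ℕ) - 1)
  rw [show 2 * (b:ℤ) - 1 - m - (b - (m/2:ℕ) - 1) = (b - (m/2:ℕ)) by omega] at h2
  unfold Leq at h1
  rw [show (m:ℤ) + 1 - 1 = m by ring, show (b:ℤ) - (m/2:ℕ) - 1 + 1 = b - (m/2:ℕ) by ring] at h1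
  split_ifs at h1 <;> omega

theorem IsConf.isQuart (h : IsConf a b dent P) (hb : 0 < b) (hd : ∀ t, dent t → 2 ≤ t ∧ t + 1 ≤ a) :
    IsQuart a b dent (quartOf a b P) := by
  refine ⟨?_, ?_, ?_, ?_, ?_, ?_, ?_, ?_, ?_⟩
  · intro m hm e
    have := h.R m (b - (m/2:ℕ) + e)
    unfold Req at this
    simp only [quartOf, hm, hm.le, if_true, this]
    exact if_congr (cellR hd m e hm) rfl rfl
  · intro m hm hm2 e
    have := h.L (m+1) (b - (m/2:ℕ) + e)
    unfold Leq at this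
    have hm1 : m + 1 ≤ 2 * a := by omega
    have e1 : (m+1)/2 = m/2 := by omega
    simp only [quartOf, hm, hm1, if_true, e1, ← if_congr (cellLe hd m e hm hm2) rfl rfl]
    push_cast at this ⊢
    rw [show (m:ℤ) + 1 - 1 = m by ring] at this
    rw [← this]; ring_nf
  · intro m hm hm2
    simp only [quartOf, hm, if_true, Nat.cast_zero, add_zero]
    exact h.axisL m hm2
  · intro m hm hm2
    have := h.L (m+1) (b - (m/2:ℕ) - 1)
    unfold Leq at this
    have hm1 : m + 1 ≤ 2 * a := by omega
    have e1 : (m+1)/2 = m/2 + 1 := by omega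
    have e2 := if_congr (cellLo0 hb hd m hm hm2) (rfl : 1 = 1) (rfl : 0 = 0)
    rw [ite_not] at e2
    rw [← e2]
    simp only [quartOf, hm, hm1, if_true, e1]
    have e3 := (h.axisR m hm2).1
    rw [show (m:ℤ) + 1 - 1 = m by ring, e3] at this
    rw [← this]
    push_cast
    ring_nf
  · intro m hm hm2 e
    have := h.L (m+1) (b - (m/2:ℕ) + e)
    unfold Leq at this
    have hm1 : m + 1 ≤ 2 * a := by omega
    have e1 : (m+1)/2 = m/2 + 1 := by omega
    simp only [quartOf, hm, hm1, if_true, e1, ← if_congr (cellLo hd m e hm hm2) rfl rfl]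
    push_cast at this ⊢
    rw [show (m:ℤ) + 1 - 1 = m by ring] at this
    rw [← this]; ring_nf
  · intro e
    simp only [quartOf, Nat.zero_le, if_true]
    have := h.L 0 (b - (0/2:ℕ) + e)
    unfold Leq at this
    rw [if_neg] at this
    · simp at this ⊢; omega
    · rintro ⟨h, _⟩; omega
  · intro m e hm
    simp only [quartOf]; rw [if_neg (by omega)]
  · intro m e hm
    simp only [quartOf]; rw [if_neg (by omega)]
  · intro m e hm
    simp only [quartOf]; rw [if_neg (by omega)]

end PPX

end

noncomputable section
namespace PPX
open Classical
variable {a b : ℕ} {dent : ℕ → Prop}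

/-- trichotomy of positions in the left half -/
theorem pos_cases (b : ℕ) (m : ℕ) (n : ℤ) :
    (∃ e : ℕ, n = b - (m/2 : ℕ) + e) ∨ (m % 2 = 1 ∧ n = b - (m/2:ℕ) - 1) ∨
    (∃ e : ℕ, 2 * b - 1 - m - n = b - (m/2 : ℕ) + e) := by
  rcases lt_trichotomy 0 (2 * n + m + 1 - 2 * b) with h | h | h
  · left
    exact ⟨(n - (b - (m/2:ℕ))).toNat, by omega⟩
  · right; left; omega
  · right; right
    exact ⟨(2 * b - 1 - m - n - (b - (m/2:ℕ))).toNat, by omega⟩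

theorem conf_inj (hb : 0 < b) {P P' : Tri3} (h : IsConf a b dent P) (h' : IsConf a b dent P')
    (hq : quartOf a b P = quartOf a b P') : P = P' := by
  have qx : ∀ m e : ℕ, m ≤ 2 * a → P.1 m (b - (m/2:ℕ) + e) = P'.1 m (b - (m/2:ℕ) + e) := by
    intro m e hm
    have := congrFun (congrFun (congrArg Prod.fst hq) m) e
    simpa only [quartOf, hm, if_true] using this
  have qu : ∀ m e : ℕ, m < 2 * a → P.2.1 m (b - (m/2:ℕ) + e) = P'.2.1 m (b - (m/2:ℕ) + e) := by
    intro m e hm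
    have := congrFun (congrFun (congrArg (fun q => q.2.1) hq) m) e
    simpa only [quartOf, hm, if_true] using this
  have qd : ∀ m e : ℕ, m < 2 * a → P.2.2 m (b - (m/2:ℕ) + e) = P'.2.2 m (b - (m/2:ℕ) + e) := by
    intro m e hm
    have := congrFun (congrFun (congrArg (fun q => q.2.2) hq) m) e
    simpa only [quartOf, hm, if_true] using this
  have neg : ∀ P : Tri3, IsConf a b dent P → ∀ m n : ℤ, m < 0 → P.1 m n = 0 ∧ P.2.1 m n = 0 := by
    intro P h m n hm
    have := h.R m n
    unfold Req at this
    rw [if_neg (by rintro ⟨h, _⟩; omega)] at this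
    omega
  have hu1 : ∀ m n : ℤ, m < 2 * a → P.2.1 m n = P'.2.1 m n := by
    intro m n hm
    by_cases h0 : m < 0
    · rw [(neg P h m n h0).2, (neg P' h' m n h0).2]
    · lift m to ℕ using by omega
      rcases pos_cases b m n with ⟨e, he⟩ | ⟨hm2, he⟩ | ⟨e, he⟩
      · rw [he]; exact qu m e (by omega)
      · rw [he, (h.axisR m hm2).1, (h'.axisR m hm2).1]
      · rw [h.sym.Hu, h'.sym.Hu, he]; exact qd m e (by omega)
  have hu : ∀ m n : ℤ, P.2.1 m n = P'.2.1 m n := by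
    intro m n
    by_cases hm : m < 2 * a
    · exact hu1 m n hm
    · rw [h.sym.Ru, h'.sym.Ru]; exact hu1 _ _ (by omega)
  have hd : ∀ m n : ℤ, P.2.2 m n = P'.2.2 m n := by
    intro m n
    rw [h.sym.Hd, h'.sym.Hd, hu]
  have hx1 : ∀ m n : ℤ, m ≤ 2 * a → P.1 m n = P'.1 m n := by
    intro m n hm
    by_cases h0 : m < 0
    · rw [(neg P h m n h0).1, (neg P' h' m n h0).1]
    · lift m to ℕ using by omega
      rcases pos_cases b m n with ⟨e, he⟩ | ⟨hm2, he⟩ | ⟨e, he⟩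
      · rw [he]; exact qx m e (by omega)
      · have r := h.R m n
        have r' := h'.R m n
        unfold Req at r r'
        rw [hu, hd] at r
        omega
      · rw [h.sym.Hx, h'.sym.Hx, he]; exact qx m e (by omega)
  have hx : ∀ m n : ℤ, P.1 m n = P'.1 m n := by
    intro m n
    by_cases hm : m ≤ 2 * a
    · exact hx1 m n hm
    · rw [h.sym.Vx, h'.sym.Vx]; exact hx1 _ _ (by omega)
  exact Prod.ext (funext fun m => funext fun n => hx m n)
    (Prod.ext (funext fun m => funext fun n => hu m n) (funext fun m => funext fun n => hd m n))

def ul (b : ℕ) (U D : ℕ → ℕ → ℕ) (m n : ℤ) : ℕ :=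
  if m < 0 then 0 else if 0 < 2 * n + m + 1 - 2 * b then U m.toNat (n - (b - (m.toNat/2:ℕ))).toNat
  else if 2 * n + m + 1 - 2 * b = 0 then 0 else D m.toNat (2 * b - 1 - m - n - (b - (m.toNat/2:ℕ))).toNat

def xl (b : ℕ) (dent : ℕ → Prop) (X : ℕ → ℕ → ℕ) (m n : ℤ) : ℕ :=
  if m < 0 then 0 else if 0 < 2 * n + m + 1 - 2 * b then X m.toNat (n - (b - (m.toNat/2:ℕ))).toNat
  else if 2 * n + m + 1 - 2 * b = 0 then (if dent ((m.toNat + 1)/2) then 0 else 1)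
  else X m.toNat (2 * b - 1 - m - n - (b - (m.toNat/2:ℕ))).toNat

theorem ul_pos (b : ℕ) (U D : ℕ → ℕ → ℕ) (m e : ℕ) : ul b U D m (b - (m/2:ℕ) + e) = U m e := by
  unfold ul
  rw [if_neg (by omega), if_pos (by omega)]
  congr 1; omega

theorem ul_neg (b : ℕ) (U D : ℕ → ℕ → ℕ) (m e : ℕ) : ul b U D m (2 * b - 1 - m - (b - (m/2:ℕ) + e)) = D m e := by
  unfold ul
  rw [if_neg (by omega), if_neg (by omega), if_neg (by omega)]
  congr 1; omega

theorem ul_ax (b : ℕ) (U D : ℕ → ℕ → ℕ) (m : ℕ) (hm : m % 2 = 1) : ul b U D m (b - (m/2:ℕ) - 1) = 0 := by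
  unfold ul
  rw [if_neg (by omega), if_neg (by omega), if_pos (by omega)]

theorem xl_pos (b : ℕ) (X : ℕ → ℕ → ℕ) (m e : ℕ) : xl b dent X m (b - (m/2:ℕ) + e) = X m e := by
  unfold xl
  rw [if_neg (by omega), if_pos (by omega)]
  congr 1; omega

theorem xl_ax (b : ℕ) (X : ℕ → ℕ → ℕ) (m : ℕ) (hm : m % 2 = 1) :
    xl b dent X m (b - (m/2:ℕ) - 1) = if dent ((m+1)/2) then 0 else 1 := by
  unfold xl
  rw [if_neg (by omega), if_neg (by omega), if_pos (by omega)]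
  simp

theorem xl_H (b : ℕ) (X : ℕ → ℕ → ℕ) (m n : ℤ) : xl b dent X m n = xl b dent X m (2 * b - 1 - m - n) := by
  unfold xl
  split_ifs <;> first | rfl | (exfalso; omega) | (congr 1; omega)

def mkU (a b : ℕ) (U D : ℕ → ℕ → ℕ) (m n : ℤ) : ℕ :=
  if m < 2 * a then ul b U D m n else ul b U D (4 * a - 1 - m) (2 * b - 2 * a - 1 - n)
def mkX (a b : ℕ) (dent : ℕ → Prop) (X : ℕ → ℕ → ℕ) (m n : ℤ) : ℕ :=
  if m ≤ 2 * a then xl b dent X m n else xl b dent X (4 * a - m) (n + m - 2 * a)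
def mkD (a b : ℕ) (U D : ℕ → ℕ → ℕ) (m n : ℤ) : ℕ := mkU a b U D m (2 * b - 1 - m - n)

theorem mkU_R (a b : ℕ) (U D : ℕ → ℕ → ℕ) (m n : ℤ) :
    mkU a b U D m n = mkU a b U D (4 * a - 1 - m) (2 * b - 2 * a - 1 - n) := by
  unfold mkU
  by_cases hm : m < 2 * a
  · rw [if_pos hm, if_neg (by omega)]; ring_nf
  · rw [if_neg hm, if_pos (by omega)]

theorem mkX_V (a b : ℕ) (X : ℕ → ℕ → ℕ) (m n : ℤ) :
    mkX a b dent X m n = mkX a b dent X (4 * a - m) (n + m - 2 * a) := by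
  unfold mkX
  rcases lt_trichotomy m (2 * a) with hm | hm | hm
  · rw [if_pos (by omega), if_neg (by omega)]; ring_nf
  · subst hm
    rw [if_pos (by omega), if_pos (by omega)]; ring_nf
  · rw [if_neg (by omega), if_pos (by omega)]

theorem mkX_H (a b : ℕ) (X : ℕ → ℕ → ℕ) (m n : ℤ) :
    mkX a b dent X m n = mkX a b dent X m (2 * b - 1 - m - n) := by
  unfold mkX
  split_ifs
  · rw [xl_H]
  · rw [xl_H]; ring_nf

def mkP (a b : ℕ) (dent : ℕ → Prop) (Q : (ℕ → ℕ → ℕ) × (ℕ → ℕ → ℕ) × (ℕ → ℕ → ℕ)) : Tri3 :=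
  (mkX a b dent Q.1, mkU a b Q.2.1 Q.2.2, mkD a b Q.2.1 Q.2.2)

theorem mkP_sym (Q) : IsSym a b (mkP a b dent Q) := by
  refine ⟨?_, ?_, ?_, ?_, ?_⟩
  · intro m n; exact mkX_V _ _ _ _ _
  · intro m n
    show mkU _ _ _ _ _ _ = mkD _ _ _ _ _ _
    rw [mkD, mkU_R]; ring_nf
  · intro m n
    show mkX _ _ _ _ _ _ = mkX _ _ _ _ _ _
    rw [mkX_V, mkX_H]; ring_nf
  · intro m n; exact mkU_R _ _ _ _ _ _
  · intro m n
    show mkD _ _ _ _ _ _ = mkD _ _ _ _ _ _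
    rw [mkD, mkD, mkU_R]; ring_nf

variable {Q : (ℕ → ℕ → ℕ) × (ℕ → ℕ → ℕ) × (ℕ → ℕ → ℕ)}
theorem mkX_pos (m e : ℕ) (hm : m ≤ 2 * a) : (mkP a b dent Q).1 m (b - (m/2:ℕ) + e) = Q.1 m e := by
  show mkX _ _ _ _ _ _ = _
  rw [mkX, if_pos (by omega), xl_pos]
theorem mkU_pos (m e : ℕ) (hm : m < 2 * a) : (mkP a b dent Q).2.1 m (b - (m/2:ℕ) + e) = Q.2.1 m e := by
  show mkU _ _ _ _ _ _ = _
  rw [mkU, if_pos (by omega), ul_pos]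
theorem mkD_pos (m e : ℕ) (hm : m < 2 * a) : (mkP a b dent Q).2.2 m (b - (m/2:ℕ) + e) = Q.2.2 m e := by
  show mkD _ _ _ _ _ _ = _
  rw [mkD, mkU, if_pos (by omega), ul_neg]
theorem mkU_ax (m : ℕ) (hm : m < 2 * a) (hm2 : m % 2 = 1) : (mkP a b dent Q).2.1 m (b - (m/2:ℕ) - 1) = 0 := by
  show mkU _ _ _ _ _ _ = _
  rw [mkU, if_pos (by omega), ul_ax _ _ _ _ hm2]
theorem mkD_ax (m : ℕ) (hm : m < 2 * a) (hm2 : m % 2 = 1) : (mkP a b dent Q).2.2 m (b - (m/2:ℕ) - 1) = 0 := by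
  show mkD _ _ _ _ _ _ = _
  rw [mkD, mkU, if_pos (by omega)]
  rw [show 2 * (b:ℤ) - 1 - m - (b - (m/2:ℕ) - 1) = (b - (m/2:ℕ) - 1) by omega]
  rw [ul_ax _ _ _ _ hm2]
theorem mkX_ax (m : ℕ) (hm : m < 2 * a) (hm2 : m % 2 = 1) : (mkP a b dent Q).1 m (b - (m/2:ℕ) - 1) = 
    if dent ((m+1)/2) then 0 else 1 := by
  show mkX _ _ _ _ _ _ = _
  rw [mkX, if_pos (by omega), xl_ax _ _ _ hm2]
theorem mk_neg (m n : ℤ) (hm : m < 0) : (mkP a b dent Q).1 m n = 0 ∧ (mkP a b dent Q).2.1 m n = 0 ∧ (mkP a b dent Q).2.2 m n = 0 := by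
  refine ⟨?_, ?_, ?_⟩
  · show mkX _ _ _ _ _ _ = _
    rw [mkX, if_pos (by omega), xl, if_pos hm]
  · show mkU _ _ _ _ _ _ = _
    rw [mkU, if_pos (by omega), ul, if_pos hm]
  · show mkD _ _ _ _ _ _ = _
    rw [mkD, mkU, if_pos (by omega), ul, if_pos hm]

theorem mk_conf (hb : 0 < b) (hd : ∀ t, dent t → 2 ≤ t ∧ t + 1 ≤ a) (hQ : IsQuart a b dent Q) :
    IsConf a b dent (mkP a b dent Q) := by
  have S : IsSym a b (mkP a b dent Q) := mkP_sym Q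
  refine isConf_of_quarter S ?_ ?_
  · intro m n hm h0
    unfold Req
    by_cases hneg : m < 0
    · obtain ⟨e1, e2, e3⟩ := mk_neg (a := a) (b := b) (dent := dent) (Q := Q) m n hneg
      rw [e1, e2, e3, if_neg]
      rintro ⟨h, _⟩; omega
    lift m to ℕ using by omega
    have hm' : m < 2 * a := by omega
    rcases pos_cases b m n with ⟨e, he⟩ | ⟨hm2, he⟩ | ⟨e, he⟩
    · rw [he, mkX_pos _ _ hm'.le, mkU_pos _ _ hm', mkD_pos _ _ hm', hQ.R m hm']
      exact if_congr (cellR hd m e hm').symm rfl rfl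
    · rw [he, mkX_ax _ hm' hm2, mkU_ax _ hm' hm2, mkD_ax _ hm' hm2, if_congr (cellAx hb hd m hm' hm2).1 rfl rfl, ite_not, add_zero, add_zero]
    · omega
  · intro m n hm h0
    unfold Leq
    by_cases hneg : m ≤ 0
    · obtain ⟨e1, e2, e3⟩ := mk_neg (a := a) (b := b) (dent := dent) (Q := Q) (m-1) n (by omega)
      obtain ⟨f1, f2, f3⟩ := mk_neg (a := a) (b := b) (dent := dent) (Q := Q) (m-1) (n+1) (by omega)
      rw [e2, f3, if_neg (by rintro ⟨h, _⟩; omega)]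
      rcases lt_or_eq_of_le hneg with hm0 | rfl
      · rw [(mk_neg m n hm0).1]
      · obtain ⟨e, rfl⟩ : ∃ e : ℕ, n = b - ((0:ℕ)/2 : ℕ) + e := ⟨(n - b).toNat, by omega⟩
        have := mkX_pos (a := a) (b := b) (dent := dent) (Q := Q) 0 e (by omega)
        rw [hQ.X0] at this
        simpa using this
    obtain ⟨M, rfl⟩ : ∃ M : ℕ, m = M + 1 := ⟨(m - 1).toNat, by omega⟩
    have hm' : M < 2 * a := by omega
    rw [show (M:ℤ) + 1 - 1 = M by ring]
    have hc : (M:ℤ) + 1 = ((M+1 : ℕ) : ℤ) := by push_cast; ring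
    rcases Nat.mod_two_eq_zero_or_one M with hm2 | hm2
    · have e1 : (M+1)/2 = M/2 := by omega
      rcases pos_cases b (M+1) n with ⟨e, he⟩ | ⟨hm2', he⟩ | ⟨e, he⟩
      · have h2 : n + 1 = b - (M/2:ℕ) + (e + 1 : ℕ) := by omega
        have h3 : n = b - (M/2:ℕ) + e := by omega
        rw [h2, mkD_pos _ _ hm', hc, he, mkX_pos _ _ (by omega), e1, mkU_pos _ _ hm', hQ.Le _ hm' hm2]
        refine if_congr ?_ rfl rfl
        rw [← cellLe hd M e hm' hm2, ← hc]
      · have hax := cellAx hb hd (M+1) (by omega) hm2'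
        have hD := mkD_pos (a := a) (b := b) (dent := dent) (Q := Q) M 0 hm'
        rw [hQ.D0 M hm' hm2] at hD
        have h2 : n + 1 = b - (M/2:ℕ) + (0 : ℕ) := by omega
        have hU : (mkP a b dent Q).2.1 M n = 0 := by
          rw [S.Hu, show 2 * (b:ℤ) - 1 - M - n = b - (M/2:ℕ) + (0:ℕ) by omega, hD]
        rw [hU, h2, hD, hc, he, mkX_ax _ (by omega) hm2', add_zero, add_zero]
        have := hax.2
        rw [show ((M+1:ℕ):ℤ) - 1 = M by omega] at this
        rw [if_congr this rfl rfl, ite_not]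
      · omega
    · have e1 : (M+1)/2 = M/2 + 1 := by omega
      rcases pos_cases b (M+1) n with ⟨e, he⟩ | ⟨hm2', he⟩ | ⟨e, he⟩
      · have hX := mkX_pos (a := a) (b := b) (dent := dent) (Q := Q) (M+1) e (by omega)
        rw [← he, ← hc] at hX
        rcases e with _ | e
        · have h1 : n = b - (M/2:ℕ) - 1 := by omega
          have h2 : n + 1 = b - (M/2:ℕ) + (0 : ℕ) := by omega
          have hU := mkU_ax (a := a) (b := b) (dent := dent) (Q := Q) M hm' hm2
          have hD := mkD_pos (a := a) (b := b) (dent := dent) (Q := Q) M 0 hm'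
          rw [hX, h2, hD, h1, hU, add_zero, hQ.Lo0 M hm' hm2, if_congr (cellLo0 hb hd M hm' hm2) rfl rfl, ite_not]
        · have h2 : n + 1 = b - (M/2:ℕ) + (e + 1 : ℕ) := by omega
          have h3 : n = b - (M/2:ℕ) + e := by omega
          rw [hX, h2, mkD_pos _ _ hm', h3, mkU_pos _ _ hm', hQ.Lo _ hm' hm2]
          exact if_congr (cellLo hd M e hm' hm2).symm rfl rfl
      · omega
      · omega

theorem card_conf (a b : ℕ) (hb : 0 < b) (dent : ℕ → Prop) (hd : ∀ t, dent t → 2 ≤ t ∧ t + 1 ≤ a) :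
    Nat.card {P // IsConf a b dent P} = Nat.card {Q // IsQuart a b dent Q} := by
  refine Nat.card_eq_of_bijective (fun P => ⟨quartOf a b P.1, P.2.isQuart hb hd⟩) ⟨?_, ?_⟩
  · rintro ⟨Q, hQ⟩ ⟨Q', hQ'⟩ h
    exact Subtype.ext (conf_inj hb hQ hQ' (congrArg Subtype.val h))
  · rintro ⟨Q, hQ⟩
    refine ⟨⟨_, mk_conf hb hd hQ⟩, Subtype.ext ?_⟩
    refine Prod.ext ?_ (Prod.ext ?_ ?_)
    · funext m e
      simp only [quartOf]
      split_ifs with hm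
      · exact mkX_pos m e hm
      · exact (hQ.Xz m e (by omega)).symm
    · funext m e
      simp only [quartOf]
      split_ifs with hm
      · exact mkU_pos m e hm
      · exact (hQ.Uz m e (by omega)).symm
    · funext m e
      simp only [quartOf]
      split_ifs with hm
      · exact mkD_pos m e hm
      · exact (hQ.Dz m e (by omega)).symm

end PPX

end

noncomputable section
namespace PPG
open PP Set

theorem s3_pos : 0 < s3 := by unfold s3; positivity
theorem s3_ne : s3 ≠ 0 := s3_pos.ne'

def al (p : Pt) : ℝ := 2 / s3 * p.1
def be (p : Pt) : ℝ := p.2 - 1 / s3 * p.1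
def ga (p : Pt) : ℝ := p.2 + 1 / s3 * p.1
def mk (x y : ℝ) : Pt := (x * (s3 / 2), x / 2 + y)

theorem al_be (p : Pt) : al p + be p = ga p := by unfold al be ga; ring
theorem al_mk (x y : ℝ) : al (mk x y) = x := by
  unfold al mk; have := s3_ne; field_simp
theorem be_mk (x y : ℝ) : be (mk x y) = y := by
  unfold be mk; have := s3_ne; field_simp; ring
theorem ga_mk (x y : ℝ) : ga (mk x y) = x + y := by rw [← al_be, al_mk, be_mk]
theorem mk_al_be (p : Pt) : mk (al p) (be p) = p := by
  unfold mk al be; have := s3_ne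
  ext
  · simp; field_simp
  · simp; field_simp; ring
theorem pt_ext {p q : Pt} (h1 : al p = al q) (h2 : be p = be q) : p = q := by
  rw [← mk_al_be p, ← mk_al_be q, h1, h2]

def alL : Pt →ₗ[ℝ] ℝ := (2 / s3) • LinearMap.fst ℝ ℝ ℝ
def beL : Pt →ₗ[ℝ] ℝ := LinearMap.snd ℝ ℝ ℝ - (1 / s3) • LinearMap.fst ℝ ℝ ℝ
def gaL : Pt →ₗ[ℝ] ℝ := LinearMap.snd ℝ ℝ ℝ + (1 / s3) • LinearMap.fst ℝ ℝ ℝ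
theorem alL_eq : ⇑alL = al := rfl
theorem beL_eq : ⇑beL = be := rfl
theorem gaL_eq : ⇑gaL = ga := rfl

theorem al_cont : Continuous al := by unfold al; fun_prop
theorem be_cont : Continuous be := by unfold be; fun_prop
theorem ga_cont : Continuous ga := by unfold ga; fun_prop

theorem al_open : IsOpenMap al := by
  rw [← alL_eq]
  exact LinearMap.isOpenMap_of_finiteDimensional _ (fun x => ⟨mk x 0, al_mk x 0⟩)
theorem be_open : IsOpenMap be := by
  rw [← beL_eq]
  exact LinearMap.isOpenMap_of_finiteDimensional _ (fun x => ⟨mk 0 x, be_mk 0 x⟩)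
theorem ga_open : IsOpenMap ga := by
  rw [← gaL_eq]
  exact LinearMap.isOpenMap_of_finiteDimensional _ (fun x => ⟨mk 0 x, (ga_mk 0 x).trans (zero_add x)⟩)

def box (i i' j j' l l' : ℝ) : Set Pt := al ⁻¹' Icc i i' ∩ (be ⁻¹' Icc j j' ∩ ga ⁻¹' Icc l l')
def obox (i i' j j' l l' : ℝ) : Set Pt := al ⁻¹' Ioo i i' ∩ (be ⁻¹' Ioo j j' ∩ ga ⁻¹' Ioo l l')

theorem mem_box {i i' j j' l l' : ℝ} {p : Pt} : p ∈ box i i' j j' l l' ↔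
    (i ≤ al p ∧ al p ≤ i') ∧ (j ≤ be p ∧ be p ≤ j') ∧ (l ≤ ga p ∧ ga p ≤ l') := Iff.rfl
theorem mem_obox {i i' j j' l l' : ℝ} {p : Pt} : p ∈ obox i i' j j' l l' ↔
    (i < al p ∧ al p < i') ∧ (j < be p ∧ be p < j') ∧ (l < ga p ∧ ga p < l') := Iff.rfl

theorem interior_box (i i' j j' l l' : ℝ) : interior (box i i' j j' l l') = obox i i' j j' l l' := by
  unfold box obox
  rw [interior_inter, interior_inter, ← al_open.preimage_interior_eq_interior_preimage al_cont,
    ← be_open.preimage_interior_eq_interior_preimage be_cont,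
    ← ga_open.preimage_interior_eq_interior_preimage ga_cont, interior_Icc, interior_Icc, interior_Icc]

theorem box_closed (i i' j j' l l' : ℝ) : IsClosed (box i i' j j' l l') :=
  (isClosed_Icc.preimage al_cont).inter ((isClosed_Icc.preimage be_cont).inter (isClosed_Icc.preimage ga_cont))

theorem obox_open (i i' j j' l l' : ℝ) : IsOpen (obox i i' j j' l l') := by
  rw [← interior_box]; exact isOpen_interior

theorem box_convex (i i' j j' l l' : ℝ) : Convex ℝ (box i i' j j' l l') := by
  refine Convex.inter ?_ (Convex.inter ?_ ?_)
  · rw [← alL_eq]; exact (convex_Icc i i').linear_preimage alL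
  · rw [← beL_eq]; exact (convex_Icc j j').linear_preimage beL
  · rw [← gaL_eq]; exact (convex_Icc l l').linear_preimage gaL

theorem mk_add (x y x' y' : ℝ) : mk x y + mk x' y' = mk (x + x') (y + y') := by
  unfold mk; ext
  · simp; ring
  · simp; ring
theorem mk_smul (c x y : ℝ) : c • mk x y = mk (c * x) (c * y) := by
  unfold mk; ext
  · simp; ring
  · simp; ring

theorem conv2 {S : Set Pt} (hS : Convex ℝ S) {x y x' y' X Y : ℝ} (h : mk x y ∈ S) (h' : mk x' y' ∈ S)
    (t : ℝ) (t0 : 0 ≤ t) (t1 : t ≤ 1) (hX : X = (1-t) * x + t * x') (hY : Y = (1-t) * y + t * y') : mk X Y ∈ S := by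
  have := hS h h' (sub_nonneg.mpr t1) t0 (by ring)
  rw [mk_smul, mk_smul, mk_add] at this
  rwa [hX, hY]

/-- trapezoid fill: parallel-ish sides -/
theorem hexagon_eq (A b : ℕ) (hA : 0 < A) (hb : 0 < b) :
    hexagon A b = box 0 (2 * A) (-A) (2 * b) 0 (2 * b + A) := by
  have hA' : (0:ℝ) < A := by exact_mod_cast hA
  have hb' : (0:ℝ) < b := by exact_mod_cast hb
  have e : ({((0 : ℝ), (0 : ℝ)), ((0 : ℝ), 2 * (b : ℝ)),
      ((A : ℝ) * (s3 / 2), (A : ℝ) / 2 + 2 * (b : ℝ)),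
      ((A : ℝ) * s3, 2 * (b : ℝ)), ((A : ℝ) * s3, (0 : ℝ)),
      ((A : ℝ) * (s3 / 2), -((A : ℝ) / 2))} : Set Pt) =
      {mk 0 0, mk 0 (2 * b), mk A (2 * b), mk (2 * A) (2 * b - A), mk (2 * A) (-A), mk A (-A)} := by
    unfold mk
    congr 1
    · ext <;> simp
    congr 1
    · ext <;> simp
    congr 1
    congr 1
    · ext
      · simp; ring
      · simp
    congr 1
    · ext
      · simp; ring
      · simp
    congr 1
    ext
    · simp
    · simp; ring
  unfold hexagon
  rw [e]
  apply subset_antisymm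
  · apply convexHull_min _ (box_convex _ _ _ _ _ _)
    intro p hp
    simp only [mem_insert_iff, mem_singleton_iff] at hp
    rcases hp with rfl | rfl | rfl | rfl | rfl | rfl <;>
      rw [mem_box, al_mk, be_mk, ga_mk] <;> refine ⟨⟨?_, ?_⟩, ⟨?_, ?_⟩, ?_, ?_⟩ <;> linarith
  · intro p hp
    rw [mem_box] at hp
    obtain ⟨⟨h1, h2⟩, ⟨h3, h4⟩, h5, h6⟩ := hp
    rw [← al_be] at h5 h6
    rw [← mk_al_be p]
    set x := al p
    set y := be p
    set S : Set Pt := {mk 0 0, mk 0 (2 * b), mk A (2 * b), mk (2 * A) (2 * b - A), mk (2 * A) (-A), mk A (-A)} with hS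
    have C := convex_convexHull ℝ S
    have sub := subset_convexHull ℝ S
    rcases le_total x A with hx | hx
    · have t0 : 0 ≤ x / A := by positivity
      have t1 : x / A ≤ 1 := (div_le_one hA').mpr hx
      have b1 : mk x (-x) ∈ convexHull ℝ S :=
        conv2 C (sub (by simp [hS]) : mk 0 0 ∈ _) (sub (by simp [hS]) : mk A (-A) ∈ _) (x / A) t0 t1 (by field_simp; ring) (by field_simp; ring)
      have b2 : mk x (2 * b) ∈ convexHull ℝ S :=
        conv2 C (sub (by simp [hS]) : mk 0 (2 * b) ∈ _) (sub (by simp [hS]) : mk A (2 * b) ∈ _) (x / A) t0 t1 (by field_simp; ring) (by ring)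
      have hp : 0 < 2 * b + x := by positivity
      exact conv2 C b1 b2 ((y + x) / (2 * b + x)) (div_nonneg (by linarith) hp.le) ((div_le_one hp).mpr (by linarith)) (by ring) (by field_simp; ring)
    · have t0 : 0 ≤ (x - A) / A := div_nonneg (by linarith) hA'.le
      have t1 : (x - A) / A ≤ 1 := (div_le_one hA').mpr (by linarith)
      have b1 : mk x (-A) ∈ convexHull ℝ S :=
        conv2 C (sub (by simp [hS]) : mk A (-A) ∈ _) (sub (by simp [hS]) : mk (2 * A) (-A) ∈ _) ((x - A) / A) t0 t1 (by field_simp; ring) (by ring)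
      have b2 : mk x (2 * b + A - x) ∈ convexHull ℝ S :=
        conv2 C (sub (by simp [hS]) : mk A (2 * b) ∈ _) (sub (by simp [hS]) : mk (2 * A) (2 * b - A) ∈ _) ((x - A) / A) t0 t1 (by field_simp; ring) (by field_simp; ring)
      have hp : 0 < 2 * b + 2 * A - x := by linarith
      exact conv2 C b1 b2 ((y + A) / (2 * b + 2 * A - x)) (div_nonneg (by linarith) hp.le) ((div_le_one hp).mpr (by linarith)) (by ring) (by have h := div_mul_cancel₀ (y + A) hp.ne'; linear_combination -h)

theorem leftHole_eq (b k : ℕ) : leftHole b k = box (2 * k - 2) (2 * k) (b - k - 1) (b - k + 1) (b + k - 1) (b + k + 1) := by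
  have e : ({((k : ℝ) * s3, (b : ℝ) - 1), ((k : ℝ) * s3, (b : ℝ) + 1), (((k : ℝ) - 1) * s3, (b : ℝ))} : Set Pt) =
      {mk (2 * k) (b - k - 1), mk (2 * k) (b - k + 1), mk (2 * k - 2) (b - k + 1)} := by
    unfold mk
    congr 1
    · ext
      · simp; ring
      · simp; ring
    congr 1
    · ext
      · simp; ring
      · simp; ring
    congr 1
    ext
    · simp; ring
    · simp; ring
  unfold leftHole
  rw [e]
  apply subset_antisymm
  · apply convexHull_min _ (box_convex _ _ _ _ _ _)
    intro p hp
    simp only [mem_insert_iff, mem_singleton_iff] at hp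
    rcases hp with rfl | rfl | rfl <;>
      rw [mem_box, al_mk, be_mk, ga_mk] <;> refine ⟨⟨?_, ?_⟩, ⟨?_, ?_⟩, ?_, ?_⟩ <;> linarith
  · intro p hp
    rw [mem_box] at hp
    obtain ⟨⟨h1, h2⟩, ⟨h3, h4⟩, h5, h6⟩ := hp
    rw [← al_be] at h5 h6
    rw [← mk_al_be p]
    set x := al p
    set y := be p
    set S : Set Pt := {mk (2 * k) (b - k - 1), mk (2 * k) (b - k + 1), mk (2 * k - 2) (b - k + 1)} with hS
    have C := convex_convexHull ℝ S
    have sub := subset_convexHull ℝ S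
    -- slice be = y
    have b1 : mk (2 * k) y ∈ convexHull ℝ S :=
      conv2 C (sub (by simp [hS]) : mk (2 * k) (b - k - 1) ∈ _) (sub (by simp [hS]) : mk (2 * k) (b - k + 1) ∈ _) ((y - (b - k - 1))/2) (by linarith) (by linarith) (by ring) (by ring)
    have b2 : mk (b + k - 1 - y) y ∈ convexHull ℝ S :=
      conv2 C (sub (by simp [hS]) : mk (2 * k) (b - k - 1) ∈ _) (sub (by simp [hS]) : mk (2 * k - 2) (b - k + 1) ∈ _) ((y - (b - k - 1))/2) (by linarith) (by linarith) (by ring) (by ring)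
    rcases eq_or_lt_of_le (show 0 ≤ y - (b - k - 1) by linarith) with h | h
    · have : x = 2 * k := by linarith
      rw [this]; exact b1
    · exact conv2 C b1 b2 ((2 * k - x) / (y - (b - k - 1))) (div_nonneg (by linarith) h.le) ((div_le_one h).mpr (by linarith)) (by field_simp; ring) (by ring)

theorem rightHole_eq (A b k : ℕ) : rightHole A b k =
    box (2 * A - 2 * k) (2 * A - 2 * k + 2) (b - A + k - 1) (b - A + k + 1) (b + A - k - 1) (b + A - k + 1) := by
  have e : ({(((A : ℝ) - k) * s3, (b : ℝ) - 1), (((A : ℝ) - k) * s3, (b : ℝ) + 1),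
      (((A : ℝ) - k + 1) * s3, (b : ℝ))} : Set Pt) =
      {mk (2 * A - 2 * k) (b - A + k - 1), mk (2 * A - 2 * k) (b - A + k + 1), mk (2 * A - 2 * k + 2) (b - A + k - 1)} := by
    unfold mk
    congr 1
    · ext
      · simp; ring
      · simp; ring
    congr 1
    · ext
      · simp; ring
      · simp; ring
    congr 1
    ext
    · simp; ring
    · simp; ring
  unfold rightHole
  rw [e]
  apply subset_antisymm
  · apply convexHull_min _ (box_convex _ _ _ _ _ _)
    intro p hp
    simp only [mem_insert_iff, mem_singleton_iff] at hp
    rcases hp with rfl | rfl | rfl <;>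
      rw [mem_box, al_mk, be_mk, ga_mk] <;> refine ⟨⟨?_, ?_⟩, ⟨?_, ?_⟩, ?_, ?_⟩ <;> linarith
  · intro p hp
    rw [mem_box] at hp
    obtain ⟨⟨h1, h2⟩, ⟨h3, h4⟩, h5, h6⟩ := hp
    rw [← al_be] at h5 h6
    rw [← mk_al_be p]
    set x := al p
    set y := be p
    set S : Set Pt := {mk (2 * A - 2 * k) (b - A + k - 1), mk (2 * A - 2 * k) (b - A + k + 1), mk (2 * A - 2 * k + 2) (b - A + k - 1)} with hS
    have C := convex_convexHull ℝ S
    have sub := subset_convexHull ℝ S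
    have b1 : mk (2 * A - 2 * k) y ∈ convexHull ℝ S :=
      conv2 C (sub (by simp [hS]) : mk (2 * A - 2 * k) (b - A + k + 1) ∈ _) (sub (by simp [hS]) : mk (2 * A - 2 * k) (b - A + k - 1) ∈ _) (((b - A + k + 1) - y)/2) (by linarith) (by linarith) (by ring) (by ring)
    have b2 : mk (b + A - k + 1 - y) y ∈ convexHull ℝ S :=
      conv2 C (sub (by simp [hS]) : mk (2 * A - 2 * k) (b - A + k + 1) ∈ _) (sub (by simp [hS]) : mk (2 * A - 2 * k + 2) (b - A + k - 1) ∈ _) (((b - A + k + 1) - y)/2) (by linarith) (by linarith) (by ring) (by ring)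
    rcases eq_or_lt_of_le (show 0 ≤ (b - A + k + 1) - y by linarith) with h | h
    · have : x = 2 * A - 2 * k := by linarith
      rw [this]; exact b1
    · exact conv2 C b1 b2 ((x - (2 * A - 2 * k)) / ((b - A + k + 1) - y)) (div_nonneg (by linarith) h.le) ((div_le_one h).mpr (by linarith)) (by field_simp; ring) (by ring)

end PPG

end

noncomputable section
namespace PPG
open PP Set

inductive LI : Type
  | X (m n : ℤ) : LI
  | U (m n : ℤ) : LI
  | D (m n : ℤ) : LI

def zbox (i i' j j' l l' : ℤ) : Set Pt := box i i' j j' l l'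
def zobox (i i' j j' l l' : ℤ) : Set Pt := obox i i' j j' l l'

theorem interior_zbox (i i' j j' l l' : ℤ) : interior (zbox i i' j j' l l') = zobox i i' j j' l l' :=
  interior_box _ _ _ _ _ _
theorem zbox_closed (i i' j j' l l' : ℤ) : IsClosed (zbox i i' j j' l l') := box_closed _ _ _ _ _ _
theorem zbox_convex (i i' j j' l l' : ℤ) : Convex ℝ (zbox i i' j j' l l') := box_convex _ _ _ _ _ _

def lz : LI → Set Pt
  | .X m n => zbox (m-1) (m+1) n (n+1) (m+n) (m+n+1)
  | .U m n => zbox m (m+1) n (n+1) (m+n) (m+n+2)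
  | .D m n => zbox m (m+1) (n-1) (n+1) (m+n) (m+n+1)

def olz : LI → Set Pt
  | .X m n => zobox (m-1) (m+1) n (n+1) (m+n) (m+n+1)
  | .U m n => zobox m (m+1) n (n+1) (m+n) (m+n+2)
  | .D m n => zobox m (m+1) (n-1) (n+1) (m+n) (m+n+1)

theorem interior_lz (t : LI) : interior (lz t) = olz t := by
  cases t <;> exact interior_zbox _ _ _ _ _ _

def cinb (i1 i2 j1 j2 l1 l2 i j l : ℤ) : Prop :=
  (i1 ≤ i ∧ i + 1 ≤ i2) ∧ (j1 ≤ j ∧ j + 1 ≤ j2) ∧ (l1 ≤ l ∧ l + 1 ≤ l2)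

def has : LI → ℤ → ℤ → ℤ → Prop
  | .X m n => cinb (m-1) (m+1) n (n+1) (m+n) (m+n+1)
  | .U m n => cinb m (m+1) n (n+1) (m+n) (m+n+2)
  | .D m n => cinb m (m+1) (n-1) (n+1) (m+n) (m+n+1)

theorem has_R (t : LI) (m n : ℤ) : has t m n (m+n) ↔ t = .X m n ∨ t = .U m n ∨ t = .D m n := by
  cases t <;> simp only [has, cinb, LI.X.injEq, LI.U.injEq, LI.D.injEq, reduceCtorEq, or_false, false_or] <;> omega

theorem has_L (t : LI) (m n : ℤ) : has t (m-1) n (m+n) ↔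
    t = .X m n ∨ t = .U (m-1) n ∨ t = .D (m-1) (n+1) := by
  cases t <;> simp only [has, cinb, LI.X.injEq, LI.U.injEq, LI.D.injEq, reduceCtorEq, or_false, false_or] <;> omega

def valid (i j l : ℤ) : Prop := l = i + j ∨ l = i + j + 1

def cen (i j l : ℤ) : Pt := mk (i + 1/3 + (l - i - j) / 3) (j + 1/3 + (l - i - j) / 3)

theorem cz1 (x y : ℤ) (e : ℝ) (h0 : 0 < e) (h1 : e < 1) : ((x:ℝ) ≤ y + e ↔ x ≤ y) := by
  constructor
  · intro h
    have : (x:ℝ) < ((y + 1 : ℤ):ℝ) := by push_cast; linarith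
    have := Int.cast_lt.mp this
    omega
  · intro h
    have : (x:ℝ) ≤ y := Int.cast_le.mpr h
    linarith
theorem cz1' (x y : ℤ) (e : ℝ) (h0 : 0 < e) (h1 : e < 1) : ((x:ℝ) < y + e ↔ x ≤ y) := by
  constructor
  · intro h; exact (cz1 x y e h0 h1).mp h.le
  · intro h
    have : (x:ℝ) ≤ y := Int.cast_le.mpr h
    linarith
theorem cz2 (x y : ℤ) (e : ℝ) (h0 : 0 < e) (h1 : e < 1) : (y + e ≤ (x:ℝ) ↔ y + 1 ≤ x) := by
  constructor
  · intro h
    have : (y:ℝ) < (x:ℝ) := by linarith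
    have := Int.cast_lt.mp this
    omega
  · intro h
    have : ((y+1:ℤ):ℝ) ≤ x := Int.cast_le.mpr h
    push_cast at this
    linarith
theorem cz2' (x y : ℤ) (e : ℝ) (h0 : 0 < e) (h1 : e < 1) : (y + e < (x:ℝ) ↔ y + 1 ≤ x) := by
  constructor
  · intro h; exact (cz2 x y e h0 h1).mp h.le
  · intro h
    have : ((y+1:ℤ):ℝ) ≤ x := Int.cast_le.mpr h
    push_cast at this
    linarith

theorem cen_coords {i j l : ℤ} (h : valid i j l) : ∃ e f : ℝ, 0 < e ∧ e < 1 ∧ 0 < f ∧ f < 1 ∧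
    al (cen i j l) = i + e ∧ be (cen i j l) = j + e ∧ ga (cen i j l) = l + f := by
  unfold cen
  rw [al_mk, be_mk, ga_mk]
  rcases h with rfl | rfl
  · refine ⟨1/3, 2/3, ?_⟩; push_cast; norm_num; ring
  · refine ⟨2/3, 1/3, ?_⟩; push_cast; norm_num; constructor
    · ring
    constructor <;> ring

theorem cen_zbox {i j l : ℤ} (h : valid i j l) (i1 i2 j1 j2 l1 l2 : ℤ) :
    cen i j l ∈ zbox i1 i2 j1 j2 l1 l2 ↔ cinb i1 i2 j1 j2 l1 l2 i j l := by
  obtain ⟨e, f, e0, e1, f0, f1, h1, h2, h3⟩ := cen_coords h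
  unfold zbox cinb
  rw [mem_box, h1, h2, h3, cz1 _ _ e e0 e1, cz1 _ _ e e0 e1, cz1 _ _ f f0 f1, cz2 _ _ e e0 e1, cz2 _ _ e e0 e1, cz2 _ _ f f0 f1]
theorem cen_zobox {i j l : ℤ} (h : valid i j l) (i1 i2 j1 j2 l1 l2 : ℤ) :
    cen i j l ∈ zobox i1 i2 j1 j2 l1 l2 ↔ cinb i1 i2 j1 j2 l1 l2 i j l := by
  obtain ⟨e, f, e0, e1, f0, f1, h1, h2, h3⟩ := cen_coords h
  unfold zobox cinb
  rw [mem_obox, h1, h2, h3, cz1' _ _ e e0 e1, cz1' _ _ e e0 e1, cz1' _ _ f f0 f1, cz2' _ _ e e0 e1, cz2' _ _ e e0 e1, cz2' _ _ f f0 f1]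

theorem cen_lz {i j l : ℤ} (h : valid i j l) (t : LI) : cen i j l ∈ lz t ↔ has t i j l := by
  cases t <;> exact cen_zbox h _ _ _ _ _ _
theorem cen_olz {i j l : ℤ} (h : valid i j l) (t : LI) : cen i j l ∈ interior (lz t) ↔ has t i j l := by
  rw [interior_lz]; cases t <;> exact cen_zobox h _ _ _ _ _ _

/-- floor cell -/
theorem fl_valid (p : Pt) : valid ⌊al p⌋ ⌊be p⌋ ⌊ga p⌋ := by
  rw [← al_be]
  have h1 := Int.floor_le (al p)
  have h2 := Int.lt_floor_add_one (al p)
  have h3 := Int.floor_le (be p)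
  have h4 := Int.lt_floor_add_one (be p)
  have h5 := Int.floor_le (al p + be p)
  have h6 := Int.lt_floor_add_one (al p + be p)
  have h7 : ⌊al p + be p⌋ < ⌊al p⌋ + ⌊be p⌋ + 2 := by
    have : ((⌊al p + be p⌋:ℤ):ℝ) < ((⌊al p⌋ + ⌊be p⌋ + 2 : ℤ):ℝ) := by push_cast; linarith
    exact_mod_cast this
  have h8 : ⌊al p⌋ + ⌊be p⌋ < ⌊al p + be p⌋ + 1 := by
    have : ((⌊al p⌋ + ⌊be p⌋ : ℤ):ℝ) < ((⌊al p + be p⌋ + 1:ℤ):ℝ) := by push_cast; linarith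
    exact_mod_cast this
  unfold valid; omega

theorem fl_zobox {p : Pt} {i1 i2 j1 j2 l1 l2 : ℤ} (h : p ∈ zobox i1 i2 j1 j2 l1 l2) :
    cinb i1 i2 j1 j2 l1 l2 ⌊al p⌋ ⌊be p⌋ ⌊ga p⌋ := by
  obtain ⟨⟨h1, h2⟩, ⟨h3, h4⟩, h5, h6⟩ := mem_obox.mp h
  exact ⟨⟨Int.le_floor.mpr h1.le, Int.floor_lt.mpr h2⟩, ⟨Int.le_floor.mpr h3.le, Int.floor_lt.mpr h4⟩,
    Int.le_floor.mpr h5.le, Int.floor_lt.mpr h6⟩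

theorem fl_zbox {p : Pt} {i1 i2 j1 j2 l1 l2 : ℤ} (h : cinb i1 i2 j1 j2 l1 l2 ⌊al p⌋ ⌊be p⌋ ⌊ga p⌋) :
    p ∈ zbox i1 i2 j1 j2 l1 l2 := by
  obtain ⟨⟨h1, h2⟩, ⟨h3, h4⟩, h5, h6⟩ := h
  refine mem_box.mpr ⟨⟨Int.le_floor.mp h1, (Int.floor_lt.mp h2).le⟩, ⟨Int.le_floor.mp h3, (Int.floor_lt.mp h4).le⟩,
    Int.le_floor.mp h5, (Int.floor_lt.mp h6).le⟩

theorem fl_olz {p : Pt} {t : LI} (h : p ∈ interior (lz t)) : has t ⌊al p⌋ ⌊be p⌋ ⌊ga p⌋ := by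
  rw [interior_lz] at h; cases t <;> exact fl_zobox h
theorem fl_lz {p : Pt} {t : LI} (h : has t ⌊al p⌋ ⌊be p⌋ ⌊ga p⌋) : p ∈ lz t := by
  cases t <;> exact fl_zbox h

theorem lz_inj {t t' : LI} (h : lz t = lz t') : t = t' := by
  have key : ∀ i j l, valid i j l → (has t i j l ↔ has t' i j l) := fun i j l hv => by
    rw [← cen_lz hv, ← cen_lz hv, h]
  have kR : ∀ m n, has t m n (m+n) ↔ has t' m n (m+n) := fun m n => key _ _ _ (Or.inl rfl)
  have kL : ∀ m n, has t (m-1) n (m+n) ↔ has t' (m-1) n (m+n) := fun m n => key _ _ _ (Or.inr (by ring))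
  simp only [has_R, has_L] at kR kL
  cases t with
  | X m n =>
    have h1 := (kR m n).mp (by simp)
    have h2 := (kL m n).mp (by simp)
    rcases h1 with rfl | rfl | rfl
    · rfl
    · simp at h2; omega
    · simp at h2
  | U m n =>
    have h1 := (kR m n).mp (by simp)
    have h2 := (kL (m+1) n).mp (by simp)
    rcases h1 with rfl | rfl | rfl
    · simp at h2
    · rfl
    · simp at h2
  | D m n =>
    have h1 := (kR m n).mp (by simp)
    have h2 := (kL (m+1) (n-1)).mp (by simp)
    rcases h1 with rfl | rfl | rfl
    · simp at h2
    · simp at h2; omega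
    · rfl

theorem closure_int_lz (t : LI) : lz t ⊆ closure (interior (lz t)) := by
  have hc : Convex ℝ (lz t) := by cases t <;> exact zbox_convex _ _ _ _ _ _
  have hn : (interior (lz t)).Nonempty := by
    cases t with
    | X m n => exact ⟨cen m n (m+n), (cen_olz (Or.inl rfl) _).mpr ((has_R _ _ _).mpr (by simp))⟩
    | U m n => exact ⟨cen m n (m+n), (cen_olz (Or.inl rfl) _).mpr ((has_R _ _ _).mpr (by simp))⟩
    | D m n => exact ⟨cen m n (m+n), (cen_olz (Or.inl rfl) _).mpr ((has_R _ _ _).mpr (by simp))⟩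
  rw [hc.closure_interior_eq_closure_of_nonempty_interior hn]
  exact subset_closure

def quad (p u v : Pt) : Set Pt := {p, p + u, p + v, p + u + v}
theorem quad_swap (p u v : Pt) : quad p u v = quad p v u := by
  unfold quad; rw [add_right_comm p u v, insert_comm (p+u)]
theorem quad_neg (p u v : Pt) : quad p (-u) v = quad (p - u) u v := by
  unfold quad
  rw [show p - u + u = p by abel, ← sub_eq_add_neg, show p - u + v = p + v - u by abel]
  ext q; simp only [mem_insert_iff, mem_singleton_iff]; tauto

theorem hull_U (m n : ℤ) : convexHull ℝ (quad (mk m n) (mk 1 0) (mk 0 1)) = lz (.U m n) := by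
  unfold quad
  simp only [mk_add, add_zero]
  apply subset_antisymm
  · apply convexHull_min _ (zbox_convex _ _ _ _ _ _)
    intro p hp
    simp only [mem_insert_iff, mem_singleton_iff] at hp
    rcases hp with rfl | rfl | rfl | rfl <;>
      rw [zbox, mem_box, al_mk, be_mk, ga_mk] <;> push_cast <;> refine ⟨⟨?_, ?_⟩, ⟨?_, ?_⟩, ?_, ?_⟩ <;> linarith
  · intro p hp
    rw [lz, zbox, mem_box] at hp
    push_cast at hp
    obtain ⟨⟨h1, h2⟩, ⟨h3, h4⟩, h5, h6⟩ := hp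
    rw [← mk_al_be p]
    set x := al p
    set y := be p
    set S : Set Pt := {mk m n, mk (m+1) n, mk m (n+1), mk (m+1) (n+1)} with hS
    have C := convex_convexHull ℝ S
    have sub := subset_convexHull ℝ S
    have b1 : mk x n ∈ convexHull ℝ S :=
      conv2 C (sub (by simp [hS]) : mk m n ∈ _) (sub (by simp [hS]) : mk (m+1) n ∈ _) (x-m) (by linarith) (by linarith) (by ring) (by ring)
    have b2 : mk x (n+1) ∈ convexHull ℝ S :=
      conv2 C (sub (by simp [hS]) : mk m (n+1) ∈ _) (sub (by simp [hS]) : mk (m+1) (n+1) ∈ _) (x-m) (by linarith) (by linarith) (by ring) (by ring)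
    exact conv2 C b1 b2 (y-n) (by linarith) (by linarith) (by ring) (by ring)

theorem hull_X (m n : ℤ) : convexHull ℝ (quad (mk m n) (mk 1 0) (mk 1 (-1))) = lz (.X (m+1) (n-1)) := by
  unfold quad
  simp only [mk_add, add_zero]
  apply subset_antisymm
  · apply convexHull_min _ (zbox_convex _ _ _ _ _ _)
    intro p hp
    simp only [mem_insert_iff, mem_singleton_iff] at hp
    rcases hp with rfl | rfl | rfl | rfl <;>
      rw [zbox, mem_box, al_mk, be_mk, ga_mk] <;> push_cast <;> refine ⟨⟨?_, ?_⟩, ⟨?_, ?_⟩, ?_, ?_⟩ <;> linarith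
  · intro p hp
    rw [lz, zbox, mem_box] at hp
    push_cast at hp
    obtain ⟨⟨h1, h2⟩, ⟨h3, h4⟩, h5, h6⟩ := hp
    rw [← al_be] at h5 h6
    rw [← mk_al_be p]
    set x := al p
    set y := be p
    set S : Set Pt := {mk m n, mk (m+1) n, mk (m+1) (n+-1), mk (m+1+1) (n+-1)} with hS
    have C := convex_convexHull ℝ S
    have sub := subset_convexHull ℝ S
    have b1 : mk (m+n-y) y ∈ convexHull ℝ S :=
      conv2 C (sub (by simp [hS]) : mk m n ∈ _) (sub (by simp [hS]) : mk (m+1) (n+-1) ∈ _) (n-y) (by linarith) (by linarith) (by ring) (by ring)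
    have b2 : mk (m+n-y+1) y ∈ convexHull ℝ S :=
      conv2 C (sub (by simp [hS]) : mk (m+1) n ∈ _) (sub (by simp [hS]) : mk (m+1+1) (n+-1) ∈ _) (n-y) (by linarith) (by linarith) (by ring) (by ring)
    exact conv2 C b1 b2 (x+y-m-n) (by linarith) (by linarith) (by ring) (by ring)

theorem hull_D (m n : ℤ) : convexHull ℝ (quad (mk m n) (mk 0 1) (mk 1 (-1))) = lz (.D m n) := by
  unfold quad
  simp only [mk_add, add_zero]
  apply subset_antisymm
  · apply convexHull_min _ (zbox_convex _ _ _ _ _ _)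
    intro p hp
    simp only [mem_insert_iff, mem_singleton_iff] at hp
    rcases hp with rfl | rfl | rfl | rfl <;>
      rw [zbox, mem_box, al_mk, be_mk, ga_mk] <;> push_cast <;> refine ⟨⟨?_, ?_⟩, ⟨?_, ?_⟩, ?_, ?_⟩ <;> linarith
  · intro p hp
    rw [lz, zbox, mem_box] at hp
    push_cast at hp
    obtain ⟨⟨h1, h2⟩, ⟨h3, h4⟩, h5, h6⟩ := hp
    rw [← al_be] at h5 h6
    rw [← mk_al_be p]
    set x := al p
    set y := be p
    set S : Set Pt := {mk m n, mk m (n+1), mk (m+1) (n+-1), mk (m+1) (n+1+-1)} with hS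
    have C := convex_convexHull ℝ S
    have sub := subset_convexHull ℝ S
    have b1 : mk x (m+n-x) ∈ convexHull ℝ S :=
      conv2 C (sub (by simp [hS]) : mk m n ∈ _) (sub (by simp [hS]) : mk (m+1) (n+-1) ∈ _) (x-m) (by linarith) (by linarith) (by ring) (by ring)
    have b2 : mk x (m+n-x+1) ∈ convexHull ℝ S :=
      conv2 C (sub (by simp [hS]) : mk m (n+1) ∈ _) (sub (by simp [hS]) : mk (m+1) (n+1+-1) ∈ _) (x-m) (by linarith) (by linarith) (by ring) (by ring)
    exact conv2 C b1 b2 (x+y-m-n) (by linarith) (by linarith) (by ring) (by ring)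

theorem uv1 : ((0, 1) : Pt) = mk 0 1 := by unfold mk; simp
theorem uv2 : ((s3/2, 1/2) : Pt) = mk 1 0 := by unfold mk; simp
theorem uv3 : ((s3/2, -(1/2)) : Pt) = mk 1 (-1) := by unfold mk; ext <;> simp; norm_num
theorem mk_neg (x y : ℝ) : -mk x y = mk (-x) (-y) := by
  have := mk_smul (-1) x y; simpa using this
theorem mk_sub (x y x' y' : ℝ) : mk x y - mk x' y' = mk (x - x') (y - y') := by
  rw [sub_eq_add_neg, mk_neg, mk_add]; ring_nf

theorem uvec {u : Pt} (h : u ∈ unitVecs) : ∃ e, (e = mk 0 1 ∨ e = mk 1 0 ∨ e = mk 1 (-1)) ∧ (u = e ∨ u = -e) := by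
  simp only [unitVecs, mem_insert_iff, mem_singleton_iff] at h
  rcases h with rfl | rfl | rfl | rfl | rfl | rfl
  · exact ⟨_, Or.inl rfl, Or.inl uv1⟩
  · exact ⟨_, Or.inl rfl, Or.inr (by rw [← uv1]; simp)⟩
  · exact ⟨_, Or.inr (Or.inl rfl), Or.inl uv2⟩
  · exact ⟨_, Or.inr (Or.inl rfl), Or.inr (by rw [← uv2]; simp)⟩
  · exact ⟨_, Or.inr (Or.inr rfl), Or.inl uv3⟩
  · exact ⟨_, Or.inr (Or.inr rfl), Or.inr (by rw [← uv3]; simp)⟩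

theorem base_sub {e : Pt} (h : e = mk 0 1 ∨ e = mk 1 0 ∨ e = mk 1 (-1)) (m n : ℤ) :
    ∃ m' n' : ℤ, mk m n - e = mk m' n' := by
  rcases h with rfl | rfl | rfl
  · exact ⟨m, n-1, by rw [mk_sub]; push_cast; ring_nf⟩
  · exact ⟨m-1, n, by rw [mk_sub]; push_cast; ring_nf⟩
  · exact ⟨m-1, n+1, by rw [mk_sub]; push_cast; ring_nf⟩

theorem base_pair {e f : Pt} (he : e = mk 0 1 ∨ e = mk 1 0 ∨ e = mk 1 (-1)) (hf : f = mk 0 1 ∨ f = mk 1 0 ∨ f = mk 1 (-1))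
    (hne : e ≠ f) (m n : ℤ) : ∃ t, convexHull ℝ (quad (mk m n) e f) = lz t := by
  rcases he with rfl | rfl | rfl <;> rcases hf with rfl | rfl | rfl
  · exact absurd rfl hne
  · exact ⟨_, by rw [quad_swap]; exact hull_U m n⟩
  · exact ⟨_, hull_D m n⟩
  · exact ⟨_, hull_U m n⟩
  · exact absurd rfl hne
  · exact ⟨_, hull_X m n⟩
  · exact ⟨_, by rw [quad_swap]; exact hull_D m n⟩
  · exact ⟨_, by rw [quad_swap]; exact hull_X m n⟩
  · exact absurd rfl hne

theorem isLoz_iff (L : Set Pt) : IsLozenge L ↔ ∃ t, L = lz t := by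
  constructor
  · rintro ⟨p, u, v, ⟨m, n, hp⟩, hu, hv, huv, huv', rfl⟩
    have hp' : p = mk m n := hp
    subst hp'
    obtain ⟨e, he, hue⟩ := uvec hu
    obtain ⟨f, hf, hvf⟩ := uvec hv
    have hne : e ≠ f := by
      rintro rfl
      rcases hue with rfl | rfl <;> rcases hvf with rfl | rfl <;> simp at huv huv'
    change ∃ t, convexHull ℝ (quad (mk m n) u v) = lz t
    have step1 : ∃ m' n' : ℤ, quad (mk m n) u v = quad (mk m' n') e v := by
      rcases hue with rfl | rfl
      · exact ⟨m, n, rfl⟩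
      · obtain ⟨m', n', h⟩ := base_sub he m n
        exact ⟨m', n', by rw [quad_neg, h]⟩
    obtain ⟨m', n', h'⟩ := step1
    have step2 : ∃ m'' n'' : ℤ, quad (mk m' n') e v = quad (mk m'' n'') e f := by
      rcases hvf with rfl | rfl
      · exact ⟨m', n', rfl⟩
      · obtain ⟨m'', n'', h⟩ := base_sub hf m' n'
        exact ⟨m'', n'', by rw [quad_swap, quad_neg, h, quad_swap]⟩
    obtain ⟨m'', n'', h''⟩ := step2
    rw [h', h'']
    exact base_pair he hf hne _ _
  · rintro ⟨t, rfl⟩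
    have tl : ∀ m n : ℤ, mk m n ∈ triLattice := fun m n => ⟨m, n, rfl⟩
    have u1 : mk 0 1 ∈ unitVecs := by rw [← uv1]; simp [unitVecs]
    have u2 : mk 1 0 ∈ unitVecs := by rw [← uv2]; simp [unitVecs]
    have u3 : mk 1 (-1) ∈ unitVecs := by rw [← uv3]; simp [unitVecs]
    have nemk : ∀ x y x' y' : ℝ, (x ≠ x' ∨ y ≠ y') → mk x y ≠ mk x' y' := by
      rintro x y x' y' h he
      have h1 := congrArg al he
      have h2 := congrArg be he
      rw [al_mk, al_mk] at h1
      rw [be_mk, be_mk] at h2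
      rcases h with h | h
      · exact h h1
      · exact h h2
    cases t with
    | X m n =>
      refine ⟨mk (m-1:ℤ) (n+1:ℤ), _, _, tl _ _, u2, u3, nemk _ _ _ _ (by norm_num), ?_, ?_⟩
      · rw [mk_neg]; exact nemk _ _ _ _ (by norm_num)
      · have := hull_X (m-1) (n+1)
        rw [show m - 1 + 1 = m by ring, show n + 1 - 1 = n by ring] at this
        exact this.symm
    | U m n =>
      refine ⟨mk m n, _, _, tl _ _, u2, u1, nemk _ _ _ _ (by norm_num), ?_, (hull_U m n).symm⟩
      · rw [mk_neg]; exact nemk _ _ _ _ (by norm_num)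
    | D m n =>
      refine ⟨mk m n, _, _, tl _ _, u1, u3, nemk _ _ _ _ (by norm_num), ?_, (hull_D m n).symm⟩
      · rw [mk_neg]; exact nemk _ _ _ _ (by norm_num)

end PPG

end

noncomputable section
namespace PPG
open PP PPX Set

def Hx (a b : ℕ) : Set Pt := zbox 0 (4*a) (-(2*a)) (2*b) 0 (2*b+2*a)
def LH (b t : ℕ) : Set Pt := zbox (2*t-2) (2*t) (b-t-1) (b-t+1) (b+t-1) (b+t+1)
def RH (a b t : ℕ) : Set Pt := zbox (4*a-2*t) (4*a-2*t+2) (b-2*a+t-1) (b-2*a+t+1) (b+2*a-t-1) (b+2*a-t+1)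

theorem hex_Hx (a b : ℕ) (ha : 0 < a) (hb : 0 < b) : hexagon (2*a) b = Hx a b := by
  rw [hexagon_eq _ _ (by omega) hb]; unfold Hx zbox; push_cast; congr 1 <;> ring
theorem lH_LH (b t : ℕ) : leftHole b t = LH b t := by
  rw [leftHole_eq]; unfold LH zbox; push_cast; rfl
theorem rH_RH (a b t : ℕ) : rightHole (2*a) b t = RH a b t := by
  rw [rightHole_eq]; unfold RH zbox; push_cast; congr 1 <;> ring

theorem mem_Hreg (a b s : ℕ) (ha : 0 < a) (hb : 0 < b) (k : Fin s → ℕ) (p : Pt) :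
    p ∈ Hreg (2*a) b s k ↔ p ∈ Hx a b ∧ ∀ i, p ∉ interior (LH b (k i)) ∧ p ∉ interior (RH a b (k i)) := by
  unfold Hreg
  rw [hex_Hx a b ha hb]
  simp only [lH_LH, rH_RH, mem_sdiff, mem_iUnion, mem_union, not_exists, not_or]

theorem Hreg_closed (a b s : ℕ) (ha : 0 < a) (hb : 0 < b) (k : Fin s → ℕ) : IsClosed (Hreg (2*a) b s k) := by
  unfold Hreg
  rw [hex_Hx a b ha hb]
  exact (zbox_closed _ _ _ _ _ _).sdiff (isOpen_iUnion fun i => isOpen_interior.union isOpen_interior)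

abbrev dn {s : ℕ} (k : Fin s → ℕ) : ℕ → Prop := fun t => ∃ i, k i = t

theorem inCell_iff (a b s : ℕ) (k : Fin s → ℕ) {i j l : ℤ} (h : valid i j l) :
    inCell a b (dn k) i j l ↔ cinb 0 (4*a) (-(2*a)) (2*b) 0 (2*b+2*a) i j l ∧ ∀ r,
      ¬ cinb (2*(k r:ℤ)-2) (2*(k r:ℤ)) (b-(k r:ℤ)-1) (b-(k r:ℤ)+1) (b+(k r:ℤ)-1) (b+(k r:ℤ)+1) i j l ∧
      ¬ cinb (4*a-2*(k r:ℤ)) (4*a-2*(k r:ℤ)+2) (b-2*a+(k r:ℤ)-1) (b-2*a+(k r:ℤ)+1) (b+2*a-(k r:ℤ)-1) (b+2*a-(k r:ℤ)+1) i j l := by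
  unfold inCell cinb dn
  unfold valid at h
  constructor
  · rintro ⟨h1, h2⟩
    refine ⟨by omega, fun r => ?_⟩
    have := h2 (k r) ⟨r, rfl⟩
    constructor
    · intro h3; apply this.1; omega
    · intro h3; apply this.2; omega
  · rintro ⟨h1, h2⟩
    refine ⟨by omega, ?_⟩
    rintro t ⟨r, rfl⟩
    have := h2 r
    constructor
    · intro h3; apply this.1; omega
    · intro h3; apply this.2; omega

theorem cen_Hreg (a b s : ℕ) (ha : 0 < a) (hb : 0 < b) (k : Fin s → ℕ) {i j l : ℤ} (h : valid i j l) :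
    cen i j l ∈ Hreg (2*a) b s k ↔ inCell a b (dn k) i j l := by
  rw [mem_Hreg a b s ha hb, inCell_iff a b s k h]
  unfold Hx LH RH
  simp only [interior_zbox, cen_zbox h, cen_zobox h]

theorem fl_Hreg (a b s : ℕ) (ha : 0 < a) (hb : 0 < b) (k : Fin s → ℕ) {p : Pt}
    (h : inCell a b (dn k) ⌊al p⌋ ⌊be p⌋ ⌊ga p⌋) : p ∈ Hreg (2*a) b s k := by
  rw [mem_Hreg a b s ha hb]
  rw [inCell_iff a b s k (fl_valid p)] at h
  refine ⟨fl_zbox h.1, fun r => ⟨fun h' => (h.2 r).1 ?_, fun h' => (h.2 r).2 ?_⟩⟩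
  · unfold LH at h'; rw [interior_zbox] at h'; exact fl_zobox h'
  · unfold RH at h'; rw [interior_zbox] at h'; exact fl_zobox h'

theorem fl_inCell (a b s : ℕ) (k : Fin s → ℕ) {p : Pt}
    (h : p ∈ interior (Hx a b)) (h' : ∀ r, p ∉ LH b (k r) ∧ p ∉ RH a b (k r)) :
    inCell a b (dn k) ⌊al p⌋ ⌊be p⌋ ⌊ga p⌋ := by
  rw [inCell_iff a b s k (fl_valid p)]
  unfold Hx at h
  rw [interior_zbox] at h
  exact ⟨fl_zobox h, fun r => ⟨fun h1 => (h' r).1 (fl_zbox h1), fun h1 => (h' r).2 (fl_zbox h1)⟩⟩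

theorem al_add (p q : Pt) : al (p + q) = al p + al q := by unfold al; simp; ring
theorem be_add (p q : Pt) : be (p + q) = be p + be q := by unfold be; simp; ring
theorem ga_add (p q : Pt) : ga (p + q) = ga p + ga q := by rw [← al_be, ← al_be, ← al_be, al_add, be_add]; ring

open Filter Topology in
theorem Hreg_sub_closure (a b s : ℕ) (ha : 0 < a) (hb : 0 < b) (k : Fin s → ℕ)
    (hk : ∀ r, 2 ≤ k r ∧ k r + 1 ≤ a) :
    Hreg (2*a) b s k ⊆ closure {p | inCell a b (dn k) ⌊al p⌋ ⌊be p⌋ ⌊ga p⌋} := by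
  intro p hp
  rw [mem_Hreg a b s ha hb] at hp
  obtain ⟨hp1, hp2⟩ := hp
  have hb1 : (1:ℝ) ≤ b := by exact_mod_cast hb
  have hkR : ∀ r, (2:ℝ) ≤ k r ∧ (k r : ℝ) + 1 ≤ a := fun r => ⟨by exact_mod_cast (hk r).1, by exact_mod_cast (hk r).2⟩
  by_cases hcl : ∀ r, p ∉ LH b (k r) ∧ p ∉ RH a b (k r)
  · -- away from holes
    have hO : IsOpen (⋂ r, ((LH b (k r))ᶜ ∩ (RH a b (k r))ᶜ)) :=
      isOpen_iInter_of_finite fun r => (zbox_closed _ _ _ _ _ _).isOpen_compl.inter (zbox_closed _ _ _ _ _ _).isOpen_compl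
    have hc : Convex ℝ (Hx a b) := zbox_convex _ _ _ _ _ _
    have hn : (interior (Hx a b)).Nonempty := by
      refine ⟨cen 0 0 0, ?_⟩
      unfold Hx
      rw [interior_zbox, cen_zobox (show valid 0 0 0 from Or.inl rfl)]
      unfold cinb; omega
    have h1 : p ∈ closure (interior (Hx a b)) := by
      rw [hc.closure_interior_eq_closure_of_nonempty_interior hn]
      exact subset_closure hp1
    have h2 := hO.inter_closure ⟨(mem_iInter.mpr fun r => ⟨(hcl r).1, (hcl r).2⟩), h1⟩
    refine closure_mono ?_ h2
    rintro q ⟨hq1, hq2⟩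
    rw [mem_iInter] at hq1
    exact fl_inCell a b s k hq2 hq1
  · push Not at hcl
    obtain ⟨r0, hr0⟩ := hcl
    have hint : p ∈ interior (Hx a b) := by
      have := hkR r0
      unfold Hx
      rw [interior_zbox, zobox, mem_obox, ← al_be]
      by_cases hh : p ∈ LH b (k r0)
      · rw [LH, zbox, mem_box, ← al_be] at hh
        push_cast at hh ⊢
        refine ⟨⟨?_, ?_⟩, ⟨?_, ?_⟩, ?_, ?_⟩ <;> linarith [hh.1.1, hh.1.2, hh.2.1.1, hh.2.1.2, hh.2.2.1, hh.2.2.2]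
      · replace hh := hr0 hh
        rw [RH, zbox, mem_box, ← al_be] at hh
        push_cast at hh ⊢
        refine ⟨⟨?_, ?_⟩, ⟨?_, ?_⟩, ?_, ?_⟩ <;> linarith [hh.1.1, hh.1.2, hh.2.1.1, hh.2.1.2, hh.2.2.1, hh.2.2.2]
    -- direction argument
    have dir : ∀ x y : ℝ, (∀ r, p ∈ LH b (k r) → ∀ ε > 0, p + mk (ε * x) (ε * y) ∉ LH b (k r)) →
        (∀ r, p ∈ RH a b (k r) → ∀ ε > 0, p + mk (ε * x) (ε * y) ∉ RH a b (k r)) →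
        p ∈ closure {p | inCell a b (dn k) ⌊al p⌋ ⌊be p⌋ ⌊ga p⌋} := by
      intro x y hL hR
      have hcont : Continuous (fun ε : ℝ => p + mk (ε * x) (ε * y)) := by unfold mk; fun_prop
      have ht : Tendsto (fun ε : ℝ => p + mk (ε * x) (ε * y)) (𝓝[>] 0) (𝓝 p) := by
        have h0 : Tendsto (fun ε : ℝ => p + mk (ε * x) (ε * y)) (𝓝 0) (𝓝 p) := by
          have := hcont.tendsto 0
          have e : p + mk (0 * x) (0 * y) = p := by
            apply pt_ext
            · rw [al_add, al_mk]; ring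
            · rw [be_add, be_mk]; ring
          rwa [e] at this
        exact h0.mono_left nhdsWithin_le_nhds
      have ev : ∀ C : Set Pt, IsClosed C → (p ∈ C → ∀ ε > 0, p + mk (ε * x) (ε * y) ∉ C) →
          ∀ᶠ ε in 𝓝[>] (0:ℝ), p + mk (ε * x) (ε * y) ∉ C := by
        intro C hC h
        by_cases hpC : p ∈ C
        · filter_upwards [self_mem_nhdsWithin] with ε hε using h hpC ε hε
        · exact ht.eventually (hC.isOpen_compl.mem_nhds hpC)
      refine mem_closure_of_tendsto ht ?_
      have e1 := ht.eventually (isOpen_interior.mem_nhds hint)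
      have e2 := eventually_all.mpr fun r => ev _ (zbox_closed _ _ _ _ _ _) (hL r)
      have e3 := eventually_all.mpr fun r => ev _ (zbox_closed _ _ _ _ _ _) (hR r)
      filter_upwards [e1, e2, e3] with ε h1 h2 h3
      exact fl_inCell a b s k h1 fun r => ⟨h2 r, h3 r⟩
    have hLint : ∀ r, p ∈ LH b (k r) → (al p = 2 * k r ∨ be p = b - k r + 1 ∨ al p + be p = b + k r - 1) := by
      intro r hr
      by_contra hcon
      push Not at hcon
      apply (hp2 r).1
      rw [LH, zbox, mem_box, ← al_be] at hr
      rw [LH, interior_zbox, zobox, mem_obox, ← al_be]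
      push_cast at hr ⊢
      have c1 := lt_of_le_of_ne hr.1.2 hcon.1
      have c2 := lt_of_le_of_ne hr.2.1.2 hcon.2.1
      have c3 := lt_of_le_of_ne hr.2.2.1 (Ne.symm hcon.2.2)
      refine ⟨⟨?_, ?_⟩, ⟨?_, ?_⟩, ?_, ?_⟩ <;> linarith
    have hRint : ∀ r, p ∈ RH a b (k r) → (al p = 4 * a - 2 * k r ∨ be p = b - 2 * a + k r - 1 ∨ al p + be p = b + 2 * a - k r + 1) := by
      intro r hr
      by_contra hcon
      push Not at hcon
      apply (hp2 r).2
      rw [RH, zbox, mem_box, ← al_be] at hr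
      rw [RH, interior_zbox, zobox, mem_obox, ← al_be]
      push_cast at hr ⊢
      have c1 := lt_of_le_of_ne hr.1.1 (Ne.symm hcon.1)
      have c2 := lt_of_le_of_ne hr.2.1.1 (Ne.symm hcon.2.1)
      have c3 := lt_of_le_of_ne hr.2.2.2 hcon.2.2
      refine ⟨⟨?_, ?_⟩, ⟨?_, ?_⟩, ?_, ?_⟩ <;> linarith
    have unL : ∀ q r, q ∈ LH b (k r) → al q ≤ 2 * k r ∧ be q ≤ b - k r + 1 ∧ b + k r - 1 ≤ al q + be q := by
      intro q r hr
      rw [LH, zbox, mem_box, ← al_be] at hr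
      push_cast at hr
      exact ⟨hr.1.2, hr.2.1.2, hr.2.2.1⟩
    have unR : ∀ q r, q ∈ RH a b (k r) → 4 * a - 2 * k r ≤ al q ∧ b - 2 * a + k r - 1 ≤ be q ∧ al q + be q ≤ b + 2 * a - k r + 1 := by
      intro q r hr
      rw [RH, zbox, mem_box, ← al_be] at hr
      push_cast at hr
      exact ⟨hr.1.1, hr.2.1.1, hr.2.2.2⟩
    rcases le_total (al p) (2 * a) with hx | hx
    · have noR : ∀ r, p ∉ RH a b (k r) := fun r hr => by
        have := unR p r hr; have := hkR r; linarith
      rcases le_total (b:ℝ) (be p + al p / 2) with hy | hy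
      · refine dir 1 (3/2) (fun r hr ε hε h => ?_) (fun r hr => absurd hr (noR r))
        have h' := unL _ r h
        rw [al_add, be_add, al_mk, be_mk] at h'
        have h'' := unL _ r hr
        rcases hLint r hr with h0 | h0 | h0 <;> linarith
      · refine dir 1 (-5/2) (fun r hr ε hε h => ?_) (fun r hr => absurd hr (noR r))
        have h' := unL _ r h
        rw [al_add, be_add, al_mk, be_mk] at h'
        have h'' := unL _ r hr
        rcases hLint r hr with h0 | h0 | h0 <;> linarith
    · have noL : ∀ r, p ∉ LH b (k r) := fun r hr => by
        have := unL p r hr; have := hkR r; linarith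
      rcases le_total (b:ℝ) (be p + al p / 2) with hy | hy
      · refine dir (-1) (5/2) (fun r hr => absurd hr (noL r)) (fun r hr ε hε h => ?_)
        have h' := unR _ r h
        rw [al_add, be_add, al_mk, be_mk] at h'
        have h'' := unR _ r hr
        rcases hRint r hr with h0 | h0 | h0 <;> linarith
      · refine dir (-1) (-3/2) (fun r hr => absurd hr (noL r)) (fun r hr ε hε h => ?_)
        have h' := unR _ r h
        rw [al_add, be_add, al_mk, be_mk] at h'
        have h'' := unR _ r hr
        rcases hRint r hr with h0 | h0 | h0 <;> linarith

end PPG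

end

noncomputable section
namespace PPG
open PP PPX Set
open Classical

def sV (a : ℕ) : LI → LI
  | .X m n => .X (4*a-m) (n+m-2*a)
  | .U m n => .D (4*a-m-1) (n+m+1-2*a)
  | .D m n => .U (4*a-m-1) (n+m-2*a)
def sR (a b : ℕ) : LI → LI
  | .X m n => .X (4*a-m) (2*b-2*a-1-n)
  | .U m n => .U (4*a-1-m) (2*b-2*a-1-n)
  | .D m n => .D (4*a-1-m) (2*b-2*a-n)

theorem sV_sV (a : ℕ) (t : LI) : sV a (sV a t) = t := by
  cases t <;> simp only [sV] <;> congr 1 <;> ring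
theorem sR_sR (a b : ℕ) (t : LI) : sR a b (sR a b t) = t := by
  cases t <;> simp only [sR] <;> congr 1 <;> ring

theorem al_reflV (a : ℕ) (p : Pt) : al (reflV (2*a) p) = 4*a - al p := by
  unfold al reflV; have := s3_ne; push_cast; field_simp; ring
theorem be_reflV (a : ℕ) (p : Pt) : be (reflV (2*a) p) = ga p - 2*a := by
  unfold be ga reflV; have := s3_ne; push_cast; field_simp; ring
theorem ga_reflV (a : ℕ) (p : Pt) : ga (reflV (2*a) p) = be p + 2*a := by
  unfold be ga reflV; have := s3_ne; push_cast; field_simp; ring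
theorem al_rot (a b : ℕ) (p : Pt) : al (rot180 (2*a) b p) = 4*a - al p := by
  unfold al rot180; have := s3_ne; push_cast; field_simp; ring
theorem be_rot (a b : ℕ) (p : Pt) : be (rot180 (2*a) b p) = 2*b - 2*a - be p := by
  unfold be rot180; have := s3_ne; push_cast; field_simp; ring
theorem ga_rot (a b : ℕ) (p : Pt) : ga (rot180 (2*a) b p) = 2*b + 2*a - ga p := by
  unfold ga rot180; have := s3_ne; push_cast; field_simp; ring
theorem reflV_reflV (a : ℕ) (p : Pt) : reflV a (reflV a p) = p := by unfold reflV; simp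
theorem rot_rot (a b : ℕ) (p : Pt) : rot180 a b (rot180 a b p) = p := by unfold rot180; simp

theorem reflV_zbox (a : ℕ) (i i' j j' l l' : ℤ) : reflV (2*a) '' zbox i i' j j' l l' =
    zbox (4*a-i') (4*a-i) (l-2*a) (l'-2*a) (j+2*a) (j'+2*a) := by
  rw [image_eq_preimage_of_inverse (reflV_reflV _) (reflV_reflV _)]
  ext p
  rw [mem_preimage, zbox, mem_box, zbox, mem_box, al_reflV, be_reflV, ga_reflV]
  push_cast
  constructor <;> intro h <;> refine ⟨⟨?_, ?_⟩, ⟨?_, ?_⟩, ?_, ?_⟩ <;>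
    linarith [h.1.1, h.1.2, h.2.1.1, h.2.1.2, h.2.2.1, h.2.2.2]
theorem rot_zbox (a b : ℕ) (i i' j j' l l' : ℤ) : rot180 (2*a) b '' zbox i i' j j' l l' =
    zbox (4*a-i') (4*a-i) (2*b-2*a-j') (2*b-2*a-j) (2*b+2*a-l') (2*b+2*a-l) := by
  rw [image_eq_preimage_of_inverse (rot_rot _ _) (rot_rot _ _)]
  ext p
  rw [mem_preimage, zbox, mem_box, zbox, mem_box, al_rot, be_rot, ga_rot]
  push_cast
  constructor <;> intro h <;> refine ⟨⟨?_, ?_⟩, ⟨?_, ?_⟩, ?_, ?_⟩ <;>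
    linarith [h.1.1, h.1.2, h.2.1.1, h.2.1.2, h.2.2.1, h.2.2.2]

theorem reflV_lz (a : ℕ) (t : LI) : reflV (2*a) '' lz t = lz (sV a t) := by
  cases t <;> simp only [sV, lz, reflV_zbox] <;> congr 1 <;> ring
theorem rot_lz (a b : ℕ) (t : LI) : rot180 (2*a) b '' lz t = lz (sR a b t) := by
  cases t <;> simp only [sR, lz, rot_zbox] <;> congr 1 <;> ring

def val (P : Tri3) : LI → ℕ
  | .X m n => P.1 m n
  | .U m n => P.2.1 m n
  | .D m n => P.2.2 m n

def ind (T : Set (Set Pt)) (t : LI) : ℕ := if lz t ∈ T then 1 else 0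
def toP (T : Set (Set Pt)) : Tri3 :=
  (fun m n => ind T (.X m n), fun m n => ind T (.U m n), fun m n => ind T (.D m n))
theorem val_toP (T : Set (Set Pt)) (t : LI) : val (toP T) t = ind T t := by cases t <;> rfl

def fromP (P : Tri3) : Set (Set Pt) := {L | ∃ t, val P t = 1 ∧ L = lz t}
theorem mem_fromP (P : Tri3) (t : LI) : lz t ∈ fromP P ↔ val P t = 1 := by
  constructor
  · rintro ⟨t', h, h'⟩; rwa [lz_inj h']
  · intro h; exact ⟨t, h, rfl⟩

theorem ind3 (T : Set (Set Pt)) (x y z : LI) (C : Prop) (hxy : x ≠ y) (hyz : y ≠ z) (hxz : x ≠ z)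
    (ex : C → ∃ t, lz t ∈ T ∧ (t = x ∨ t = y ∨ t = z))
    (un : ∀ t t', lz t ∈ T → lz t' ∈ T → (t = x ∨ t = y ∨ t = z) → (t' = x ∨ t' = y ∨ t' = z) → t = t')
    (no : ∀ t, lz t ∈ T → (t = x ∨ t = y ∨ t = z) → C) :
    ind T x + ind T y + ind T z = if C then 1 else 0 := by
  have uxy := un x y
  have uyz := un y z
  have uxz := un x z
  have nx := no x
  have ny := no y
  have nz := no z
  simp only [true_or, or_true, forall_true_left] at uxy uyz uxz nx ny nz
  unfold ind
  by_cases hC : C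
  · have ex' : lz x ∈ T ∨ lz y ∈ T ∨ lz z ∈ T := by
      obtain ⟨t, ht, rfl | rfl | rfl⟩ := ex hC
      · exact Or.inl ht
      · exact Or.inr (Or.inl ht)
      · exact Or.inr (Or.inr ht)
    clear ex un no
    by_cases h1 : lz x ∈ T <;> by_cases h2 : lz y ∈ T <;> by_cases h3 : lz z ∈ T <;>
      simp_all
  · have h1 : lz x ∉ T := fun h => hC (nx h)
    have h2 : lz y ∉ T := fun h => hC (ny h)
    have h3 : lz z ∉ T := fun h => hC (nz h)
    simp [h1, h2, h3, hC]

variable {a b s : ℕ} {k : Fin s → ℕ}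

theorem toP_conf (ha : 0 < a) (hb : 0 < b) {T : Set (Set Pt)} (hT : IsLozengeTiling (Hreg (2*a) b s k) T)
    (hR : RotInvariant (2*a) b T) (hV : ReflInvariant (2*a) T) : IsConf a b (dn k) (toP T) := by
  obtain ⟨h1, h2, h3⟩ := hT
  have ex : ∀ i j l, valid i j l → inCell a b (dn k) i j l → ∃ t, lz t ∈ T ∧ has t i j l := by
    intro i j l hv hc
    rw [← cen_Hreg a b s ha hb k hv, ← h2] at hc
    obtain ⟨L, hL, hc⟩ := hc
    obtain ⟨t, rfl⟩ := (isLoz_iff L).mp (h1 L hL)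
    exact ⟨t, hL, (cen_lz hv t).mp hc⟩
  have un : ∀ i j l, valid i j l → ∀ t t', lz t ∈ T → lz t' ∈ T → has t i j l → has t' i j l → t = t' := by
    intro i j l hv t t' ht ht' h h'
    apply lz_inj
    by_contra hne
    have := h3 _ ht _ ht' hne
    have hm : cen i j l ∈ interior (lz t) ∩ interior (lz t') := ⟨(cen_olz hv t).mpr h, (cen_olz hv t').mpr h'⟩
    rw [this] at hm
    exact hm
  have no : ∀ i j l, valid i j l → ∀ t, lz t ∈ T → has t i j l → inCell a b (dn k) i j l := by
    intro i j l hv t ht h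
    rw [← cen_Hreg a b s ha hb k hv, ← h2]
    exact ⟨_, ht, (cen_lz hv t).mpr h⟩
  have iV : ∀ t, ind T t = ind T (sV a t) := by
    intro t
    have : lz t ∈ T ↔ lz (sV a t) ∈ T := by
      constructor
      · intro h; rw [← reflV_lz]; exact hV _ h
      · intro h; have := hV _ h; rwa [reflV_lz, sV_sV] at this
    unfold ind; simp only [this]
  have iR : ∀ t, ind T t = ind T (sR a b t) := by
    intro t
    have : lz t ∈ T ↔ lz (sR a b t) ∈ T := by
      constructor
      · intro h; rw [← rot_lz]; exact hR _ h
      · intro h; have := hR _ h; rwa [rot_lz, sR_sR] at this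
    unfold ind; simp only [this]
  refine ⟨⟨fun m n => iV (.X m n), fun m n => iV (.U m n), fun m n => iR (.X m n), fun m n => iR (.U m n), fun m n => iR (.D m n)⟩, ?_, ?_⟩
  · intro m n
    have hv : valid m n (m+n) := Or.inl rfl
    have e1 := ex _ _ _ hv
    have e2 := un _ _ _ hv
    have e3 := no _ _ _ hv
    simp only [has_R] at e1 e2 e3
    exact ind3 T _ _ _ _ (by simp) (by simp) (by simp) e1 e2 e3
  · intro m n
    have hv : valid (m-1) n (m+n) := Or.inr (by ring)
    have e1 := ex _ _ _ hv
    have e2 := un _ _ _ hv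
    have e3 := no _ _ _ hv
    simp only [has_L] at e1 e2 e3
    exact ind3 T _ _ _ _ (by simp) (by simp) (by simp) e1 e2 e3

theorem conf_cell {P : Tri3} (hP : IsConf a b (dn k) P) {i j l : ℤ} (hv : valid i j l) :
    (inCell a b (dn k) i j l → ∃ t, val P t = 1 ∧ has t i j l) ∧
    (∀ t t', val P t = 1 → val P t' = 1 → has t i j l → has t' i j l → t = t') ∧
    (∀ t, val P t = 1 → has t i j l → inCell a b (dn k) i j l) := by
  have gen : ∀ x y z : LI, val P x + val P y + val P z = (if inCell a b (dn k) i j l then 1 else 0) →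
      (inCell a b (dn k) i j l → ∃ t, val P t = 1 ∧ (t = x ∨ t = y ∨ t = z)) ∧
    (∀ t t', val P t = 1 → val P t' = 1 → (t = x ∨ t = y ∨ t = z) → (t' = x ∨ t' = y ∨ t' = z) → t = t') ∧
    (∀ t, val P t = 1 → (t = x ∨ t = y ∨ t = z) → inCell a b (dn k) i j l) := by
    intro x y z h
    refine ⟨fun hc => ?_, ?_, ?_⟩
    · rw [if_pos hc] at h
      by_cases h1 : val P x = 1
      · exact ⟨x, h1, by simp⟩
      by_cases h2 : val P y = 1
      · exact ⟨y, h2, by simp⟩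
      · exact ⟨z, by omega, by simp⟩
    · have : val P x + val P y + val P z ≤ 1 := by rw [h]; split <;> omega
      rintro t t' h1 h2 (rfl | rfl | rfl) (rfl | rfl | rfl) <;> first | rfl | (exfalso; omega)
    · rintro t ht hx
      by_contra hc
      rw [if_neg hc] at h
      rcases hx with rfl | rfl | rfl <;> omega
  rcases hv with rfl | rfl
  · simp only [has_R]; exact gen _ _ _ (hP.R i j)
  · have e := fun t => has_L t (i+1) j
    have hL := hP.L (i+1) j
    unfold Leq at hL
    rw [show i + 1 - 1 = i by ring, show i + 1 + j = i + j + 1 by ring] at hL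
    simp only [show i + 1 - 1 = i by ring, show i + 1 + j = i + j + 1 by ring] at e
    simp only [e]
    exact gen _ _ _ hL

theorem val_le {P : Tri3} (hP : IsConf a b (dn k) P) (t : LI) : val P t = 0 ∨ val P t = 1 := by
  have h : ∀ m n, P.1 m n + P.2.1 m n + P.2.2 m n ≤ 1 := fun m n => by
    have := hP.R m n; unfold Req at this; rw [this]; split <;> omega
  cases t with
  | X m n => have := h m n; simp only [val]; omega
  | U m n => have := h m n; simp only [val]; omega
  | D m n => have := h m n; simp only [val]; omega

theorem fromP_fin {P : Tri3} (hP : IsConf a b (dn k) P) : (fromP P).Finite := by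
  have hbd : ∀ m n, P.1 m n = 1 ∨ P.2.1 m n = 1 ∨ P.2.2 m n = 1 → (m, n) ∈ Icc (0:ℤ) (4*a) ×ˢ Icc (-(2*a):ℤ) (2*b) := by
    intro m n h
    have := hP.R m n; unfold Req at this
    split_ifs at this with hc
    · have := hc.1
      simp only [mem_prod, mem_Icc]; omega
    · omega
  have hF : (Icc (0:ℤ) (4*a) ×ˢ Icc (-(2*a):ℤ) (2*b)).Finite := (finite_Icc _ _).prod (finite_Icc _ _)
  refine ((hF.image fun x => lz (.X x.1 x.2)).union ((hF.image fun x => lz (.U x.1 x.2)).union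
    (hF.image fun x => lz (.D x.1 x.2)))).subset ?_
  rintro L ⟨t, ht, rfl⟩
  cases t with
  | X m n => exact Or.inl ⟨(m, n), hbd m n (Or.inl ht), rfl⟩
  | U m n => exact Or.inr (Or.inl ⟨(m, n), hbd m n (Or.inr (Or.inl ht)), rfl⟩)
  | D m n => exact Or.inr (Or.inr ⟨(m, n), hbd m n (Or.inr (Or.inr ht)), rfl⟩)

theorem fromP_tiling (ha : 0 < a) (hb : 0 < b) (hk : ∀ r, 2 ≤ k r ∧ k r + 1 ≤ a) {P : Tri3} (hP : IsConf a b (dn k) P) :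
    IsLozengeTiling (Hreg (2*a) b s k) (fromP P) := by
  refine ⟨?_, ?_, ?_⟩
  · rintro L ⟨t, -, rfl⟩
    exact (isLoz_iff _).mpr ⟨t, rfl⟩
  · apply subset_antisymm
    · apply sUnion_subset
      rintro L ⟨t, ht, rfl⟩
      refine (closure_int_lz t).trans (closure_minimal ?_ (Hreg_closed a b s ha hb k))
      intro p hp
      exact fl_Hreg a b s ha hb k ((conf_cell hP (fl_valid p)).2.2 t ht (fl_olz hp))
    · refine (Hreg_sub_closure a b s ha hb k hk).trans (closure_minimal ?_ ?_)
      · intro p hp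
        obtain ⟨t, ht, h⟩ := (conf_cell hP (fl_valid p)).1 hp
        exact ⟨lz t, ⟨t, ht, rfl⟩, fl_lz h⟩
      · rw [sUnion_eq_biUnion]
        refine Set.Finite.isClosed_biUnion (fromP_fin hP) ?_
        rintro L ⟨t, -, rfl⟩
        cases t <;> exact zbox_closed _ _ _ _ _ _
  · rintro L ⟨t, ht, rfl⟩ L' ⟨t', ht', rfl⟩ hne
    rw [eq_empty_iff_forall_notMem]
    rintro p ⟨h, h'⟩
    exact hne (congrArg lz ((conf_cell hP (fl_valid p)).2.1 t t' ht ht' (fl_olz h) (fl_olz h')))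

theorem val_sV {P : Tri3} (hP : IsConf a b (dn k) P) (t : LI) : val P (sV a t) = val P t := by
  cases t with
  | X m n => exact (hP.sym.Vx m n).symm
  | U m n => exact (hP.sym.Vu m n).symm
  | D m n =>
    simp only [sV, val]
    rw [hP.sym.Vu]; ring_nf
theorem val_sR {P : Tri3} (hP : IsConf a b (dn k) P) (t : LI) : val P (sR a b t) = val P t := by
  cases t with
  | X m n => exact (hP.sym.Rx m n).symm
  | U m n => exact (hP.sym.Ru m n).symm
  | D m n => exact (hP.sym.Rd m n).symm

theorem card_tiling (ha : 0 < a) (hb : 0 < b) (hk : ∀ r, 2 ≤ k r ∧ k r + 1 ≤ a) :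
    MrotRefl (2*a) b (Hreg (2*a) b s k) = Nat.card {P // IsConf a b (dn k) P} := by
  unfold MrotRefl
  refine Nat.card_congr (Equiv.ofBijective (fun T => ⟨toP T.1, toP_conf ha hb T.2.1 T.2.2.1 T.2.2.2⟩) ⟨?_, ?_⟩)
  · rintro ⟨T, hT⟩ ⟨T', hT'⟩ h
    have h' : toP T = toP T' := congrArg Subtype.val h
    have hi : ∀ t, lz t ∈ T ↔ lz t ∈ T' := by
      intro t
      have := congrArg (fun P => val P t) h'
      simp only [val_toP, ind] at this
      by_cases h1 : lz t ∈ T <;> by_cases h2 : lz t ∈ T' <;> simp_all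
    apply Subtype.ext
    ext L
    constructor
    · intro hL
      obtain ⟨t, rfl⟩ := (isLoz_iff L).mp (hT.1.1 L hL)
      exact (hi t).mp hL
    · intro hL
      obtain ⟨t, rfl⟩ := (isLoz_iff L).mp (hT'.1.1 L hL)
      exact (hi t).mpr hL
  · rintro ⟨P, hP⟩
    refine ⟨⟨fromP P, fromP_tiling ha hb hk hP, ?_, ?_⟩, ?_⟩
    · rintro L ⟨t, ht, rfl⟩
      exact ⟨sR a b t, by rw [val_sR hP, ht], rot_lz a b t⟩
    · rintro L ⟨t, ht, rfl⟩
      exact ⟨sV a t, by rw [val_sV hP, ht], reflV_lz a t⟩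
    · apply Subtype.ext
      have hv : ∀ t, ind (fromP P) t = val P t := by
        intro t
        unfold ind
        rw [mem_fromP]
        rcases val_le hP t with h | h <;> simp [h]
      change toP (fromP P) = P
      refine Prod.ext ?_ (Prod.ext ?_ ?_)
      · funext m n; exact hv (.X m n)
      · funext m n; exact hv (.U m n)
      · funext m n; exact hv (.D m n)

end PPG

open PP PPX PPG in
theorem final_thm (a b s : ℕ) (ha : 0 < a) (hb : 0 < b) (hs : 0 < s)
    (hsa : s < a) (k : Fin s → ℕ) (hmono : StrictMono k)
    (hk2 : ∀ i, 2 ≤ k i) (hka : ∀ i, k i ≤ a - 1)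
    (q : Fin (a - s) → ℕ) (hq : StrictMono q)
    (hqrange : Finset.image q Finset.univ
      = Finset.Icc 1 a \ Finset.image (fun i => a - k i + 1) Finset.univ) :
    (MrotRefl (2 * a) b (Hreg (2 * a) b s k) : ℚ)
      = (∏ j : Fin (a - s), ((a + b + q j - 1).choose (2 * q j - 1) : ℚ))
        * ∏ p ∈ Finset.univ.filter (fun p : Fin (a - s) × Fin (a - s) => p.1 < p.2),
            ((q p.2 : ℚ) - (q p.1 : ℚ)) / ((q p.1 : ℚ) + (q p.2 : ℚ) - 1) := by
  have hk : ∀ r, 2 ≤ k r ∧ k r + 1 ≤ a := fun r => ⟨hk2 r, by have := hka r; omega⟩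
  rw [card_tiling ha hb hk, card_conf a b hb _ (by rintro t ⟨r, rfl⟩; exact hk r), card_quart a b hb, card_seq a b ha,
    total a b _ (a - s) q hq, V_eq (fun i => (q i : ℚ))]
  · rfl
  · intro x
    have := Finset.ext_iff.mp hqrange x
    simp only [Finset.mem_image, Finset.mem_univ, true_and, Finset.mem_sdiff, Finset.mem_Icc] at this
    rw [this, and_assoc]
    refine and_congr_right fun h1 => and_congr_right fun h2 => not_congr (exists_congr fun i => ?_)
    have := hk i
    omega

end

open PP in
/-- Equation (3.7): the product formula for
`M_{⊙,|}(H_{2a,2b}(k_1,…,k_s))`, where `q_1 < ⋯ < q_{a−s}` enumerates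
`{1,…,a} \ {a−k_1+1, …, a−k_s+1}`:
`M_{⊙,|} = ∏_j C(a+b+q_j−1, 2q_j−1) · ∏_{j<k} (q_k−q_j)/(q_j+q_k−1)`. -/
theorem MrotRefl_Hreg_even_eq_product (a b s : ℕ) (ha : 0 < a) (hb : 0 < b) (hs : 0 < s)
    (hsa : s < a) (k : Fin s → ℕ) (hmono : StrictMono k)
    (hk2 : ∀ i, 2 ≤ k i) (hka : ∀ i, k i ≤ a - 1)
    (q : Fin (a - s) → ℕ) (hq : StrictMono q)
    (hqrange : Finset.image q Finset.univ
      = Finset.Icc 1 a \ Finset.image (fun i => a - k i + 1) Finset.univ) :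
    (MrotRefl (2 * a) b (Hreg (2 * a) b s k) : ℚ)
      = (∏ j : Fin (a - s), ((a + b + q j - 1).choose (2 * q j - 1) : ℚ))
        * ∏ p ∈ Finset.univ.filter (fun p : Fin (a - s) × Fin (a - s) => p.1 < p.2),
            ((q p.2 : ℚ) - (q p.1 : ℚ)) / ((q p.1 : ℚ) + (q p.2 : ℚ) - 1) := by
  exact final_thm a b s ha hb hs hsa k hmono hk2 hka q hq hqrange
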